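/- arXiv:math/0612049 — 2 statements merged into one kernel-verified Lean document; each statement's English description precedes it below -/
import Mathlib

section
/- Let d and m₁ be positive integers, let a₁, a₂, a₃ be complex constants, and let g = (g₁,g₂) ∈ 𝒪(ℂ²,0,0) be given by g₁(x₁,x₂) = x₁^{m₁+1}(a₁ + o(1)) + x₂^d(a₂ + o(1)) and g₂(x₁,x₂) = x₁^{m₁}x₂(a₃ + o(1)) + x₂^{d+1}·O(1). If the origin is an isolated zero of g, then π_g(0) ≥ dm₁ + m₁ + 1. If a₁ ≠ 0, a₂ ≠ 0 and a₃ ≠ 0, then the origin is an isolated zero of g and π_g(0) = dm₁ + m₁ + 1. -/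
open Metric Set Filter Topology Polynomial Asymptotics
open scoped Classical

noncomputable section

namespace ZhangPaper

/-- `ℂⁿ`. -/
abbrev Cn (n : ℕ) := Fin n → ℂ

variable {n : ℕ}

/-- A germ in `𝒪(ℂⁿ,0,0)`: holomorphic near `0` and fixing the origin. -/
def IsGerm (f : Cn n → Cn n) : Prop := AnalyticAt ℂ f 0 ∧ f 0 = 0

/-- `q` is a regular value of `h` on `s`. -/
def IsRegularValueOn (h : Cn n → Cn n) (s : Set (Cn n)) (q : Cn n) : Prop :=
  ∀ x ∈ s, h x = q → Function.Bijective (fderiv ℂ h x)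

/-- `m` is the zero order (multiplicity) of `h` at the isolated zero `p`:
the number of solutions of `h x = q` near `p`, for any regular value `q`
with `‖q‖` sufficiently small. -/
def HasZeroOrder (h : Cn n → Cn n) (p : Cn n) (m : ℕ) : Prop :=
  ∃ r > 0, AnalyticOnNhd ℂ h (closedBall p r) ∧ h p = 0 ∧
    (∀ x ∈ closedBall p r, h x = 0 → x = p) ∧
    (∀ ε > 0, ∃ q : Cn n, ‖q‖ < ε ∧ IsRegularValueOn h (ball p r) q) ∧
    ∃ δ > 0, ∀ q : Cn n, ‖q‖ < δ → IsRegularValueOn h (ball p r) q →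
      {x ∈ ball p r | h x = q}.ncard = m

/-- The zero order `π_h(p)` of `h` at `p`. -/
def zeroOrder (h : Cn n → Cn n) (p : Cn n) : ℕ := sInf {m | HasZeroOrder h p m}

/-- The fixed point index `μ_g(p)` of `g` at `p`. -/
def fixedPointIndex (g : Cn n → Cn n) (p : Cn n) : ℕ :=
  zeroOrder (fun x => x - g x) p

/-- The local Dold index `P_M(f,0)`. -/
def doldIndex (f : Cn n → Cn n) (M : ℕ) : ℤ :=
  ∑ τ ∈ M.primeFactors.powerset,
    (-1 : ℤ) ^ τ.card * (fixedPointIndex (f^[M / (∏ p ∈ τ, p)]) 0 : ℤ)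

/-- `x` is a periodic point of exact period `M` for `g`. -/
def ExactPeriodicPt (g : Cn n → Cn n) (M : ℕ) (x : Cn n) : Prop :=
  g^[M] x = x ∧ ∀ j, 0 < j → j < M → g^[j] x ≠ x

/-- `g` has at least `m` distinct periodic orbits of period `M` inside `B`. -/
def AtLeastOrbits (g : Cn n → Cn n) (M m : ℕ) (B : Set (Cn n)) : Prop :=
  ∃ p : Fin m → Cn n,
    (∀ i, ExactPeriodicPt g M (p i) ∧ ∀ j < M, g^[j] (p i) ∈ B) ∧
    ∀ i j : Fin m, i ≠ j → ∀ l < M, g^[l] (p i) ≠ p j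

/-- `g` has exactly `m` distinct periodic orbits of period `M` inside `B`. -/
def ExactlyOrbits (g : Cn n → Cn n) (M m : ℕ) (B : Set (Cn n)) : Prop :=
  AtLeastOrbits g M m B ∧ ¬ AtLeastOrbits g M (m + 1) B

/-- The number `𝒪_M(f,0)` of periodic orbits of period `M` of `f` hidden at the
fixed point `0`: the largest `m` such that there is a ball `B` centered at `0` in which
`0` is the only fixed point of `f^M`, and a sequence of holomorphic maps fixing `0`
converging to `f` uniformly on `B`, each having `m` distinct periodic orbits of
period `M` in `B`. -/
def hiddenOrbits (f : Cn n → Cn n) (M : ℕ) : ℕ :=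
  sSup {m | ∃ r > 0,
    (∀ x ∈ closedBall (0 : Cn n) r, f^[M] x = x → x = 0) ∧
    ∃ fk : ℕ → Cn n → Cn n,
      (∀ k, AnalyticOnNhd ℂ (fk k) (ball (0 : Cn n) r) ∧ fk k 0 = 0) ∧
      TendstoUniformlyOn fk f atTop (ball (0 : Cn n) r) ∧
      ∀ k, AtLeastOrbits (fk k) M m (ball (0 : Cn n) r)}

/-- `0` is an isolated fixed point of `g`. -/
def IsolatedFixedPtAt0 (g : Cn n → Cn n) : Prop :=
  g 0 = 0 ∧ ∀ᶠ x in 𝓝[≠] (0 : Cn n), g x ≠ x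

/-- `0` is an isolated zero of `h`. -/
def IsolatedZeroAt0 (h : Cn n → Cn n) : Prop :=
  h 0 = 0 ∧ ∀ᶠ x in 𝓝[≠] (0 : Cn n), h x ≠ 0

/-- `p` is a simple fixed point of `g`: `Dg(p)` has no eigenvalue `1`. -/
def SimpleFixedPt (g : Cn n → Cn n) (p : Cn n) : Prop :=
  g p = p ∧ ¬ Module.End.HasEigenvalue ((fderiv ℂ g p).toLinearMap) 1

/-- The global fixed point index `L(g)` of `g` over `U`: the sum of the fixed point
indices at all fixed points of `g` in `U`. -/
def globalIndex (g : Cn n → Cn n) (U : Set (Cn n)) : ℤ :=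
  ∑ᶠ p ∈ {x ∈ U | g x = x}, (fixedPointIndex g p : ℤ)

/-- The global Dold index `P_M(f)` over `U`. -/
def globalDold (f : Cn n → Cn n) (M : ℕ) (U : Set (Cn n)) : ℤ :=
  ∑ τ ∈ M.primeFactors.powerset,
    (-1 : ℤ) ^ τ.card * globalIndex (f^[M / (∏ p ∈ τ, p)]) U

/-!
On a small disc in `x₂` the product `R(x₂) = ∏ g₂(x₁, x₂)` over the zeros `x₁` of `g₁(·, x₂)` is
holomorphic, and the zero order of `g` at the origin is the order of `R` at `0`: both numbers are
stable under small perturbations of `(g₁, g₂)`, and they agree when the common zeros are simple.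

Suppose `a₂ ≠ 0`. On the curve `g₁ = 0` one has `x₂^d = O(x₁^(m₁+1))`, hence
`g₂ = O(x₂ x₁^{m₁})`, with equality of orders of magnitude if `a₃ ≠ 0`. The product of `x₂` over
the zeros of `g₁(·, x₂)` is `x₂^N`, where `N ≥ m₁ + 1` is the order of `g₁(·, 0)`, and the product
of `x₁^{m₁}` has the size of `g₁(0, x₂)^{m₁}`, that is `x₂^(d m₁)`. So `R` has order at least
`d m₁ + m₁ + 1`, and exactly this order if `a₁` and `a₃` are nonzero too. The case `a₂ = 0`
follows by a small perturbation of `a₂`, since the order cannot increase under perturbation.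
-/

/-! ### Zeros of a holomorphic function in a disc -/

/-- The class of functions whose zeros in a disc are counted by contour integrals: `F` is analytic
on the closed disc of centre `c` and positive radius `r` and has no zero on the boundary circle. -/
structure DiscAdmissible (c : ℂ) (r : ℝ) (F : ℂ → ℂ) : Prop where
  radius_pos : 0 < r
  analyticOnNhd : AnalyticOnNhd ℂ F (closedBall c r)
  ne_zero : ∀ x ∈ sphere c r, F x ≠ 0

/-- The zeros of `F` in the open disc of centre `c` and radius `r`, each repeated as often as its
order of vanishing; this is `0` if there are infinitely many of them. -/
def zerosInDisc (c : ℂ) (r : ℝ) (F : ℂ → ℂ) : Multiset ℂ :=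
  ∑ᶠ z ∈ ball c r, Multiset.replicate (analyticOrderNatAt F z) z

lemma exists_eq_pow_order_mul {F : ℂ → ℂ} {z : ℂ} (hF : AnalyticAt ℂ F z)
    (hF' : analyticOrderAt F z ≠ ⊤) :
    ∃ U : ℂ → ℂ, AnalyticAt ℂ U z ∧ U z ≠ 0 ∧
      ∀ x, F x = (x - z) ^ analyticOrderNatAt F z * U x := by
  obtain ⟨V, hV, hVz, hFV⟩ := hF.analyticOrderAt_ne_top.1 hF'
  set k := analyticOrderNatAt F z
  have hU : Function.update (fun x => F x / (x - z) ^ k) z (V z) =ᶠ[𝓝 z] V := by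
    filter_upwards [hFV] with x hx
    rcases eq_or_ne x z with rfl | hxz
    · simp
    · have := sub_ne_zero.2 hxz
      rw [Function.update_of_ne hxz, hx, smul_eq_mul]
      field_simp
  refine ⟨_, hV.congr hU.symm, by simpa using hVz, fun x => ?_⟩
  rcases eq_or_ne x z with rfl | hxz
  · rw [Function.update_self]
    simpa using hFV.self_of_nhds
  · have := sub_ne_zero.2 hxz
    rw [Function.update_of_ne hxz]
    field_simp

lemma analyticOrderAt_mul_of_ne_zero_left {P U : ℂ → ℂ} {z : ℂ} (hP : AnalyticAt ℂ P z)
    (hPz : P z ≠ 0) (hU : AnalyticAt ℂ U z) :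
    analyticOrderAt (fun x => P x * U x) z = analyticOrderAt U z := by
  have := analyticOrderAt_mul hP hU
  rwa [hP.analyticOrderAt_eq_zero.2 hPz, zero_add] at this

namespace DiscAdmissible

variable {c : ℂ} {r : ℝ} {F : ℂ → ℂ}

lemma analyticOrderAt_ne_top (hF : DiscAdmissible c r F) {z : ℂ} (hz : z ∈ closedBall c r) :
    analyticOrderAt F z ≠ ⊤ := by
  obtain ⟨w, hw⟩ := (NormedSpace.sphere_nonempty (x := c)).2 hF.radius_pos.le
  have hw' := sphere_subset_closedBall hw
  refine hF.analyticOnNhd.analyticOrderAt_ne_top_of_isPreconnected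
    (convex_closedBall c r).isPreconnected hw' hz ?_
  rw [(hF.analyticOnNhd w hw').analyticOrderAt_eq_zero.2 (hF.ne_zero w hw)]
  exact ENat.zero_ne_top

lemma analyticOrderNatAt_eq_zero_iff (hF : DiscAdmissible c r F) {z : ℂ}
    (hz : z ∈ closedBall c r) : analyticOrderNatAt F z = 0 ↔ F z ≠ 0 := by
  rw [← (hF.analyticOnNhd z hz).analyticOrderAt_eq_zero,
    ← Nat.cast_analyticOrderNatAt (hF.analyticOrderAt_ne_top hz), Nat.cast_eq_zero]

lemma finite_zeros (hF : DiscAdmissible c r F) : {x ∈ ball c r | F x = 0}.Finite := by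
  by_contra hinf
  obtain ⟨x, hx, hacc⟩ := Set.Infinite.exists_accPt_of_subset_isCompact hinf
    (isCompact_closedBall c r) fun x hx => ball_subset_closedBall hx.1
  have hzero : ∃ᶠ y in 𝓝[≠] x, F y = 0 :=
    (accPt_iff_frequently_nhdsNE.1 hacc).mono fun y hy => hy.2
  have := (hF.analyticOnNhd x hx).frequently_zero_iff_eventually_zero.1 hzero
  exact hF.analyticOrderAt_ne_top hx (analyticOrderAt_eq_top.2 this)

lemma zerosInDisc_eq_sum (hF : DiscAdmissible c r F) :
    zerosInDisc c r F = ∑ z ∈ hF.finite_zeros.toFinset,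
      Multiset.replicate (analyticOrderNatAt F z) z := by
  refine finsum_mem_eq_sum_of_inter_support_eq _ ?_
  ext z
  simp only [mem_inter_iff, Function.mem_support, Finite.coe_toFinset, mem_sep_iff, and_assoc]
  refine and_congr_right fun hz => ?_
  have := hF.analyticOrderNatAt_eq_zero_iff (ball_subset_closedBall hz)
  rw [Ne, ← Multiset.card_eq_zero, Multiset.card_replicate]
  tauto

lemma count_zerosInDisc (hF : DiscAdmissible c r F) {z : ℂ} (hz : z ∈ ball c r) :
    (zerosInDisc c r F).count z = analyticOrderNatAt F z := by
  have hz' := hF.analyticOrderNatAt_eq_zero_iff (ball_subset_closedBall hz)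
  rw [hF.zerosInDisc_eq_sum, Multiset.count_sum']
  simp only [Multiset.count_replicate]
  rw [Finset.sum_ite_eq' hF.finite_zeros.toFinset z (analyticOrderNatAt F)]
  simp only [Finite.mem_toFinset, mem_ofPred_eq, hz, true_and, ite_eq_left_iff]
  exact fun h => (hz'.2 h).symm

lemma mem_zerosInDisc (hF : DiscAdmissible c r F) {z : ℂ} :
    z ∈ zerosInDisc c r F ↔ z ∈ ball c r ∧ F z = 0 := by
  rw [hF.zerosInDisc_eq_sum, Multiset.mem_sum]
  simp only [Finite.mem_toFinset, mem_ofPred_eq, Multiset.mem_replicate]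
  refine ⟨fun ⟨_, hw, _, h⟩ => h ▸ hw, fun hz => ⟨z, hz, fun h => ?_, rfl⟩⟩
  exact (hF.analyticOrderNatAt_eq_zero_iff (ball_subset_closedBall hz.1)).1 h hz.2

lemma sub_ne_zero_of_mem_zerosInDisc (hF : DiscAdmissible c r F) {x z : ℂ} (hx : x ∈ sphere c r)
    (hz : z ∈ zerosInDisc c r F) : x - z ≠ 0 := by
  intro h
  rw [sub_eq_zero.1 h] at hx
  exact (mem_ball.1 (hF.mem_zerosInDisc.1 hz).1).ne hx

lemma exists_eq_finsetProd_mul (hF : DiscAdmissible c r F) (S : Finset ℂ)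
    (hS : (S : Set ℂ) ⊆ closedBall c r) :
    ∃ U : ℂ → ℂ, AnalyticOnNhd ℂ U (closedBall c r) ∧ (∀ z ∈ S, U z ≠ 0) ∧
      ∀ x, F x = (∏ z ∈ S, (x - z) ^ analyticOrderNatAt F z) * U x := by
  induction S using Finset.induction_on with
  | empty => exact ⟨F, hF.analyticOnNhd, by simp, by simp⟩
  | insert z S hzS ih =>
    rw [Finset.coe_insert, insert_subset_iff] at hS
    obtain ⟨U, hU, hUS, hFU⟩ := ih hS.2
    have horder : analyticOrderAt F z = analyticOrderAt U z := by
      rw [funext hFU]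
      refine analyticOrderAt_mul_of_ne_zero_left (by fun_prop) ?_ (hU z hS.1)
      exact Finset.prod_ne_zero_iff.2 fun w hw =>
        pow_ne_zero _ (sub_ne_zero.2 (ne_of_mem_of_not_mem hw hzS).symm)
    obtain ⟨V, hVz, hVz0, hUV⟩ := exists_eq_pow_order_mul (hU z hS.1)
      (horder ▸ hF.analyticOrderAt_ne_top hS.1)
    rw [← show analyticOrderNatAt F z = analyticOrderNatAt U z from congrArg ENat.toNat horder]
      at hUV
    refine ⟨V, fun x hx => ?_, fun w hw => ?_, fun x => ?_⟩
    · rcases eq_or_ne x z with rfl | hxz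
      · exact hVz
      refine ((hU x hx).fun_div (g := fun y => (y - z) ^ analyticOrderNatAt F z) (by fun_prop)
        (pow_ne_zero _ (sub_ne_zero.2 hxz))).congr ?_
      filter_upwards [isOpen_ne.mem_nhds hxz] with y hy
      rw [hUV y, mul_div_cancel_left₀ _ (pow_ne_zero _ (sub_ne_zero.2 hy))]
    · rcases Finset.mem_insert.1 hw with rfl | hw
      · exact hVz0
      · exact right_ne_zero_of_mul (hUV w ▸ hUS w hw)
    · rw [hFU x, hUV x, Finset.prod_insert hzS]
      ring

theorem exists_eq_prod_zerosInDisc_mul (hF : DiscAdmissible c r F) :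
    ∃ U : ℂ → ℂ, AnalyticOnNhd ℂ U (closedBall c r) ∧ (∀ x ∈ closedBall c r, U x ≠ 0) ∧
      ∀ x, F x = ((zerosInDisc c r F).map (x - ·)).prod * U x := by
  have hS : (hF.finite_zeros.toFinset : Set ℂ) ⊆ closedBall c r := by
    rw [Finite.coe_toFinset]
    exact fun x hx => ball_subset_closedBall hx.1
  obtain ⟨U, hU, hUS, hFU⟩ := hF.exists_eq_finsetProd_mul _ hS
  refine ⟨U, hU, fun x hx hUx => ?_, fun x => ?_⟩
  · have hFx : F x = 0 := by rw [hFU, hUx, mul_zero]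
    have hx' : x ∈ ball c r := mem_ball.2 <| lt_of_le_of_ne hx fun h => hF.ne_zero x h hFx
    exact hUS x (hF.finite_zeros.mem_toFinset.2 ⟨hx', hFx⟩) hUx
  · rw [hFU x, hF.zerosInDisc_eq_sum, ← Multiset.coe_mapAddMonoidHom, map_sum, Multiset.prod_sum]
    simp only [Multiset.coe_mapAddMonoidHom, Multiset.map_replicate, Multiset.prod_replicate]

end DiscAdmissible

/-! ### The argument principle and Rouché's theorem -/

lemma differentiable_prod_sub (Z : Multiset ℂ) :
    Differentiable ℂ fun y => (Z.map (y - ·)).prod := by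
  induction Z using Multiset.induction_on with
  | empty => simp
  | cons z Z ih =>
    simp only [Multiset.map_cons, Multiset.prod_cons]
    fun_prop

lemma prod_sub_ne_zero {x : ℂ} {Z : Multiset ℂ} (hZ : ∀ z ∈ Z, x - z ≠ 0) :
    (Z.map (x - ·)).prod ≠ 0 := by
  simpa [Multiset.prod_eq_zero_iff] using hZ

lemma logDeriv_prod_sub {x : ℂ} {Z : Multiset ℂ} (hZ : ∀ z ∈ Z, x - z ≠ 0) :
    logDeriv (fun y => (Z.map (y - ·)).prod) x = (Z.map fun z => (x - z)⁻¹).sum := by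
  induction Z using Multiset.induction_on with
  | empty => simp
  | cons z Z ih =>
    rw [Multiset.forall_mem_cons] at hZ
    simp only [Multiset.map_cons, Multiset.prod_cons, Multiset.sum_cons]
    rw [logDeriv_mul x hZ.1 (prod_sub_ne_zero hZ.2) (by fun_prop)
      (differentiable_prod_sub Z).differentiableAt, ih hZ.2, logDeriv_apply]
    simp

namespace DiscAdmissible

variable {c : ℂ} {r : ℝ} {F : ℂ → ℂ}

lemma continuousOn_logDeriv (hF : DiscAdmissible c r F) : ContinuousOn (logDeriv F) (sphere c r) :=
  (hF.analyticOnNhd.deriv.continuousOn.mono sphere_subset_closedBall).div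
    (hF.analyticOnNhd.continuousOn.mono sphere_subset_closedBall) hF.ne_zero

lemma exists_logDeriv_eq (hF : DiscAdmissible c r F) :
    ∃ u : ℂ → ℂ, AnalyticOnNhd ℂ u (closedBall c r) ∧ ∀ x ∈ sphere c r,
      logDeriv F x = ((zerosInDisc c r F).map fun z => (x - z)⁻¹).sum + u x := by
  obtain ⟨U, hU, hU0, hFU⟩ := hF.exists_eq_prod_zerosInDisc_mul
  refine ⟨logDeriv U, hU.deriv.div hU hU0, fun x hx => ?_⟩
  have hx' := sphere_subset_closedBall hx
  have hZ := fun z => hF.sub_ne_zero_of_mem_zerosInDisc hx (z := z)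
  rw [funext hFU, logDeriv_mul x (prod_sub_ne_zero hZ) (hU0 x hx')
    (differentiable_prod_sub _).differentiableAt (hU x hx').differentiableAt,
    logDeriv_prod_sub hZ, ← funext hFU]

end DiscAdmissible

lemma circleIntegrable_mul_sum_inv_sub {c : ℂ} {r : ℝ} (hr : 0 ≤ r) {φ : ℂ → ℂ}
    (hφ : ContinuousOn φ (sphere c r)) {Z : Multiset ℂ} (hZ : ∀ z ∈ Z, z ∈ ball c r) :
    CircleIntegrable (fun x => φ x * (Z.map fun z => (x - z)⁻¹).sum) c r := by
  refine (hφ.mul (continuousOn_multiset_sum _ fun z hz => ?_)).circleIntegrable hr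
  refine ContinuousOn.inv₀ (f := fun x => x - z) (by fun_prop) fun x hx h => ?_
  exact (mem_ball.1 (sub_eq_zero.1 h ▸ hZ z hz)).ne hx

lemma circleIntegral_mul_sum_inv_sub {c : ℂ} {r : ℝ} (hr : 0 ≤ r) {φ : ℂ → ℂ}
    (hφ : AnalyticOnNhd ℂ φ (closedBall c r)) {Z : Multiset ℂ} (hZ : ∀ z ∈ Z, z ∈ ball c r) :
    (∮ x in C(c, r), φ x * (Z.map fun z => (x - z)⁻¹).sum) =
      2 * Real.pi * Complex.I * (Z.map φ).sum := by
  have hφc := hφ.continuousOn.mono sphere_subset_closedBall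
  induction Z using Multiset.induction_on with
  | empty => simp [circleIntegral]
  | cons z Z ih =>
    rw [Multiset.forall_mem_cons] at hZ
    have hz : CircleIntegrable (fun x => φ x * (x - z)⁻¹) c r := by
      simpa using circleIntegrable_mul_sum_inv_sub hr hφc (Z := {z}) (by simpa using hZ.1)
    have hcauchy : (∮ x in C(c, r), φ x * (x - z)⁻¹) = 2 * Real.pi * Complex.I * φ z := by
      simpa only [smul_eq_mul, mul_comm] using
        hφ.differentiableOn.circleIntegral_sub_inv_smul hZ.1
    simp only [Multiset.map_cons, Multiset.sum_cons, mul_add]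
    rw [circleIntegral.integral_add hz (circleIntegrable_mul_sum_inv_sub hr hφc hZ.2), hcauchy,
      ih hZ.2]

namespace DiscAdmissible

variable {c : ℂ} {r : ℝ} {F : ℂ → ℂ}

theorem circleIntegral_mul_logDeriv (hF : DiscAdmissible c r F) {φ : ℂ → ℂ}
    (hφ : AnalyticOnNhd ℂ φ (closedBall c r)) :
    (∮ x in C(c, r), φ x * logDeriv F x) =
      2 * Real.pi * Complex.I * ((zerosInDisc c r F).map φ).sum := by
  obtain ⟨u, hu, hFu⟩ := hF.exists_logDeriv_eq
  have hr := hF.radius_pos.le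
  have hφu : DiffContOnCl ℂ (fun x => φ x * u x) (ball c r) :=
    DifferentiableOn.diffContOnCl (by
      rw [closure_ball c hF.radius_pos.ne']; exact (hφ.mul hu).differentiableOn)
  have hZ := fun z hz => (hF.mem_zerosInDisc (z := z).1 hz).1
  have hint := circleIntegrable_mul_sum_inv_sub hr
    (hφ.continuousOn.mono sphere_subset_closedBall) hZ
  have hint' : CircleIntegrable (fun x => φ x * u x) c r :=
    ((hφ.mul hu).continuousOn.mono sphere_subset_closedBall).circleIntegrable hr
  calc (∮ x in C(c, r), φ x * logDeriv F x)
      = ∮ x in C(c, r), (φ x * ((zerosInDisc c r F).map fun z => (x - z)⁻¹).sum + φ x * u x) :=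
        circleIntegral.integral_congr hr fun x hx => by simp only [hFu x hx, mul_add]
    _ = 2 * Real.pi * Complex.I * ((zerosInDisc c r F).map φ).sum := by
        rw [circleIntegral.integral_add hint hint', circleIntegral_mul_sum_inv_sub hr hφ hZ,
          hφu.circleIntegral_eq_zero hr, add_zero]

lemma circleIntegral_logDeriv (hF : DiscAdmissible c r F) :
    (∮ x in C(c, r), logDeriv F x) = 2 * Real.pi * Complex.I * (zerosInDisc c r F).card := by
  simpa using hF.circleIntegral_mul_logDeriv (φ := fun _ => 1) fun _ _ => analyticAt_const

lemma of_norm_sub_lt {G : ℂ → ℂ} (hF : DiscAdmissible c r F)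
    (hG : AnalyticOnNhd ℂ G (closedBall c r)) (hGF : ∀ x ∈ sphere c r, ‖G x - F x‖ < ‖F x‖) :
    DiscAdmissible c r G :=
  ⟨hF.radius_pos, hG, fun x hx h0 => by simpa [h0] using hGF x hx⟩

theorem card_zerosInDisc_eq_of_norm_sub_lt {G : ℂ → ℂ} (hF : DiscAdmissible c r F)
    (hG : AnalyticOnNhd ℂ G (closedBall c r)) (hGF : ∀ x ∈ sphere c r, ‖G x - F x‖ < ‖F x‖) :
    (zerosInDisc c r G).card = (zerosInDisc c r F).card := by
  have hG' := hF.of_norm_sub_lt hG hGF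
  have hr := hF.radius_pos.le
  have hzero : (∮ x in C(c, r), (logDeriv G x - logDeriv F x)) = 0 := by
    refine circleIntegral.integral_eq_zero_of_hasDerivWithinAt
      (f := fun x => Complex.log (G x / F x)) hr fun x hx => ?_
    have hx' := sphere_subset_closedBall hx
    have hFx := hF.ne_zero x hx
    have hslit : G x / F x ∈ Complex.slitPlane := by
      refine Complex.ball_one_subset_slitPlane (mem_ball_iff_norm.2 ?_)
      rw [div_sub_one hFx, norm_div, div_lt_one (norm_pos_iff.2 hFx)]
      exact hGF x hx
    have hdG := (hG x hx').differentiableAt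
    have hdF := (hF.analyticOnNhd x hx').differentiableAt
    have := ((hdG.div hdF hFx).hasDerivAt.clog hslit).hasDerivWithinAt (s := sphere c r)
    rwa [← logDeriv_div x (hG'.ne_zero x hx) hFx hdG hdF]
  rw [circleIntegral.integral_sub (hG'.continuousOn_logDeriv.circleIntegrable hr)
    (hF.continuousOn_logDeriv.circleIntegrable hr), hG'.circleIntegral_logDeriv,
    hF.circleIntegral_logDeriv, ← mul_sub] at hzero
  have := (mul_eq_zero.1 hzero).resolve_left Complex.two_pi_I_ne_zero
  exact_mod_cast sub_eq_zero.1 this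

end DiscAdmissible

/-! ### Elementary symmetric functions and power sums -/

lemma mul_multiset_esymm_eq_sum {R : Type*} [CommRing R] (W : Multiset R) (k : ℕ) :
    (k : R) * W.esymm k = (-1) ^ (k + 1) *
      ∑ a ∈ Finset.HasAntidiagonal.antidiagonal k with a.1 < k,
        (-1) ^ a.1 * W.esymm a.1 * (W.map (· ^ a.2)).sum := by
  obtain ⟨n, w, rfl⟩ : ∃ n : ℕ, ∃ w : Fin n → R, W = Finset.univ.val.map w := by
    induction W using Quot.inductionOn with
    | h l => exact ⟨l.length, l.get, by simp [Fin.univ_val_map]⟩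
  have h := congrArg (MvPolynomial.aeval w) (MvPolynomial.mul_esymm_eq_sum (Fin n) R k)
  simp only [map_mul, map_natCast, map_pow, map_neg, map_one, map_sum,
    MvPolynomial.aeval_esymm_eq_multiset_esymm, MvPolynomial.psum, MvPolynomial.aeval_X] at h
  simpa only [Multiset.map_map] using! h

lemma differentiableAt_esymm_of_powerSums {E : Type*} [NormedAddCommGroup E] [NormedSpace ℂ E]
    {W : E → Multiset ℂ} {e₀ : E}
    (hW : ∀ j, DifferentiableAt ℂ (fun e => ((W e).map (· ^ j)).sum) e₀) (k : ℕ) :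
    DifferentiableAt ℂ (fun e => (W e).esymm k) e₀ := by
  induction k using Nat.strong_induction_on with
  | _ k ih =>
    rcases eq_or_ne k 0 with rfl | hk
    · simp [Multiset.esymm]
    have hnewton : (fun e => (W e).esymm k) = fun e => (k : ℂ)⁻¹ * ((-1) ^ (k + 1) *
        ∑ a ∈ Finset.HasAntidiagonal.antidiagonal k with a.1 < k,
          (-1) ^ a.1 * (W e).esymm a.1 * ((W e).map (· ^ a.2)).sum) := by
      funext e
      rw [← mul_multiset_esymm_eq_sum, inv_mul_cancel_left₀ (Nat.cast_ne_zero.2 hk)]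
    rw [hnewton]
    refine ((DifferentiableAt.fun_sum fun a ha => ?_).const_mul _).const_mul _
    exact ((ih a.1 (Finset.mem_filter.1 ha).2).const_mul _).mul (hW a.2)

lemma multiset_esymm_card {R : Type*} [CommSemiring R] (W : Multiset R) :
    W.esymm W.card = W.prod := by
  simp [Multiset.esymm, Multiset.powersetCard_self]

/-! ### Uniformity over compact sets of the fibre variable -/

section Compact

variable {X E : Type*} [TopologicalSpace X] [TopologicalSpace E] {K : Set X} {e₀ : E}

lemma eventually_forall_mem_of_isCompact (hK : IsCompact K) {P : X × E → Prop}
    (hP : ∀ x ∈ K, ∀ᶠ p in 𝓝 (x, e₀), P p) : ∀ᶠ e in 𝓝 e₀, ∀ x ∈ K, P (x, e) :=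
  hK.eventually_forall_of_forall_eventually (P := fun e x => P (x, e)) fun x hx =>
    (continuous_swap.tendsto (e₀, x)).eventually (hP x hx)

lemma eventually_forall_mem_norm_sub_lt_of_isCompact {A : Type*} [NormedAddCommGroup A]
    {f : X × E → A} (hK : IsCompact K) (hf : ∀ x ∈ K, ContinuousAt f (x, e₀))
    (hf₀ : ∀ x ∈ K, f (x, e₀) ≠ 0) :
    ∀ᶠ e in 𝓝 e₀, ∀ x ∈ K, ‖f (x, e) - f (x, e₀)‖ < ‖f (x, e₀)‖ := by
  refine eventually_forall_mem_of_isCompact hK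
    (P := fun p => ‖f p - f (p.1, e₀)‖ < ‖f (p.1, e₀)‖) fun x hx => ?_
  have hcont₀ : ContinuousAt (fun p : X × E => f (p.1, e₀)) (x, e₀) :=
    ContinuousAt.comp (f := fun p : X × E => (p.1, e₀)) (hf x hx) (by fun_prop)
  refine ((hf x hx).sub hcont₀).norm.tendsto.eventually_lt hcont₀.norm.tendsto ?_
  simpa using hf₀ x hx

lemma exists_eventually_forall_norm_le_of_isBigO {A B : Type*} [SeminormedAddCommGroup A]
    [SeminormedAddCommGroup B]
    {h : X × E → A} {κ : X × E → B} {s : Set (X × E)} (hK : IsCompact K)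
    (hh : ∀ x ∈ K, h =O[𝓝 (x, e₀) ⊓ 𝓟 s] κ) :
    ∃ C, ∀ᶠ e in 𝓝 e₀, ∀ x ∈ K, (x, e) ∈ s → ‖h (x, e)‖ ≤ C * ‖κ (x, e)‖ := by
  refine hK.induction_on
    (p := fun T => ∃ C, ∀ᶠ e in 𝓝 e₀, ∀ x ∈ T, (x, e) ∈ s → ‖h (x, e)‖ ≤ C * ‖κ (x, e)‖)
    ⟨0, by simp⟩ ?_ ?_ ?_
  · rintro T T' hT ⟨C, hC⟩
    exact ⟨C, hC.mono fun e he x hx => he x (hT hx)⟩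
  · rintro T T' ⟨C, hC⟩ ⟨C', hC'⟩
    refine ⟨max C C', ?_⟩
    filter_upwards [hC, hC'] with e he he' x hx hs
    rcases hx with hx | hx
    · exact (he x hx hs).trans (by gcongr; exact le_max_left _ _)
    · exact (he' x hx hs).trans (by gcongr; exact le_max_right _ _)
  · intro x hx
    obtain ⟨C, hC⟩ := (hh x hx).bound
    rw [eventually_inf_principal, nhds_prod_eq] at hC
    obtain ⟨T, hT, V, hV, hTV⟩ := Filter.mem_prod_iff.1 hC
    exact ⟨T, mem_nhdsWithin_of_mem_nhds hT, C, mem_of_superset hV fun e he x hx =>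
      hTV (mk_mem_prod hx he)⟩

end Compact

theorem DiscAdmissible.eventually {E : Type*} [TopologicalSpace E] {f : ℂ × E → ℂ} {c : ℂ}
    {r : ℝ} {e₀ : E}
    (hf₀ : DiscAdmissible c r fun x => f (x, e₀))
    (hcont : ∀ x ∈ sphere c r, ContinuousAt f (x, e₀))
    (hana : ∀ᶠ e in 𝓝 e₀, AnalyticOnNhd ℂ (fun x => f (x, e)) (closedBall c r)) :
    ∀ᶠ e in 𝓝 e₀, DiscAdmissible c r (fun x => f (x, e)) ∧
      (zerosInDisc c r fun x => f (x, e)).card = (zerosInDisc c r fun x => f (x, e₀)).card := by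
  filter_upwards [hana, eventually_forall_mem_norm_sub_lt_of_isCompact (isCompact_sphere c r)
    hcont hf₀.ne_zero] with e hfe hlt
  exact ⟨hf₀.of_norm_sub_lt hfe hlt, hf₀.card_zerosInDisc_eq_of_norm_sub_lt hfe hlt⟩

/-! ### Holomorphic families of functions on a disc -/

section

variable {E : Type*}

/-- The product of the values of `h (·, e)` at the zeros of `f (·, e)` in the disc of centre `c` and
radius `r`, with multiplicity; for polynomials this is a resultant. -/
def discResultant (f h : ℂ × E → ℂ) (c : ℂ) (r : ℝ) (e : E) : ℂ :=
  ((zerosInDisc c r fun x => f (x, e)).map fun x => h (x, e)).prod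

lemma discResultant_mul (f h κ : ℂ × E → ℂ) (c : ℂ) (r : ℝ) :
    discResultant f (fun p => h p * κ p) c r =
      fun e => discResultant f h c r e * discResultant f κ c r e := by
  funext e
  exact Multiset.prod_map_mul

lemma discResultant_prod {ι : Type*} (s : Finset ι) (f : ℂ × E → ℂ) (κ : ι → ℂ × E → ℂ) (c : ℂ)
    (r : ℝ) : discResultant f (fun p => ∏ i ∈ s, κ i p) c r =
      fun e => ∏ i ∈ s, discResultant f (κ i) c r e := by
  funext e
  exact Multiset.prod_map_prod

lemma discResultant_pow (f h : ℂ × E → ℂ) (n : ℕ) (c : ℂ) (r : ℝ) :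
    discResultant f (fun p => h p ^ n) c r = fun e => discResultant f h c r e ^ n := by
  funext e
  exact Multiset.prod_map_pow

end

section Families

variable {E : Type*} [NormedAddCommGroup E] [NormedSpace ℂ E]

/-- The family `f` of functions of `x`, parametrised by `E`, is holomorphic along the closed disc of
centre `c` and positive radius `r` in the fibre over `e`, and has no zero on its boundary circle. -/
structure FiberAdmissible (f : ℂ × E → ℂ) (c : ℂ) (r : ℝ) (e : E) : Prop where
  radius_pos : 0 < r
  analyticAt : ∀ x ∈ closedBall c r, AnalyticAt ℂ f (x, e)
  ne_zero : ∀ x ∈ sphere c r, f (x, e) ≠ 0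

lemma analyticAt_fiber {f : ℂ × E → ℂ} {x : ℂ} {e : E} (hf : AnalyticAt ℂ f (x, e)) :
    AnalyticAt ℂ (fun x => f (x, e)) x :=
  AnalyticAt.fun_comp (f := fun x : ℂ => (x, e)) hf (by fun_prop)

namespace FiberAdmissible

variable {f h κ : ℂ × E → ℂ} {c : ℂ} {r : ℝ} {e e₀ : E}

lemma discAdmissible (hf : FiberAdmissible f c r e) : DiscAdmissible c r fun x => f (x, e) :=
  ⟨hf.radius_pos, fun x hx => analyticAt_fiber (hf.analyticAt x hx), hf.ne_zero⟩

lemma mem_ball_of_eq_zero (hf : FiberAdmissible f c r e) {x : ℂ} (hx : x ∈ closedBall c r)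
    (h0 : f (x, e) = 0) : x ∈ ball c r :=
  mem_ball.2 <| lt_of_le_of_ne hx fun hx' => hf.ne_zero x hx' h0

lemma mem_zerosInDisc (hf : FiberAdmissible f c r e) {x : ℂ} :
    x ∈ zerosInDisc c r (fun x => f (x, e)) ↔ x ∈ ball c r ∧ f (x, e) = 0 :=
  hf.discAdmissible.mem_zerosInDisc

lemma eventually (hf : FiberAdmissible f c r e₀) : ∀ᶠ e in 𝓝 e₀, FiberAdmissible f c r e := by
  filter_upwards [eventually_forall_mem_of_isCompact (isCompact_closedBall c r)
      fun x hx => (hf.analyticAt x hx).eventually_analyticAt,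
    eventually_forall_mem_of_isCompact (isCompact_sphere c r) fun x hx =>
      (hf.analyticAt x (sphere_subset_closedBall hx)).continuousAt.eventually_ne (hf.ne_zero x hx)]
    with e hana hne using ⟨hf.radius_pos, hana, hne⟩

theorem eventually_card_zerosInDisc_eq (hf : FiberAdmissible f c r e₀) :
    ∀ᶠ e in 𝓝 e₀, (zerosInDisc c r fun x => f (x, e)).card =
      (zerosInDisc c r fun x => f (x, e₀)).card :=
  (hf.discAdmissible.eventually
    (fun x hx => (hf.analyticAt x (sphere_subset_closedBall hx)).continuousAt)
    (hf.eventually.mono fun _ h => h.discAdmissible.analyticOnNhd)).mono fun _ h => h.2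

end FiberAdmissible

end Families

section CircleIntegral

variable {E : Type*} [NormedAddCommGroup E] [NormedSpace ℂ E] {c : ℂ} {r : ℝ}

lemma continuous_deriv_circleMap_smul {V : Type*} [NormedAddCommGroup V] [NormedSpace ℂ V]
    (hr : 0 ≤ r) {G : ℂ → V} (hG : ∀ x ∈ sphere c r, ContinuousAt G x) :
    Continuous fun θ : ℝ => deriv (circleMap c r) θ • G (circleMap c r θ) := by
  refine Continuous.smul (f := fun θ => deriv (circleMap c r) θ)
    (by simp only [deriv_circleMap]; fun_prop) ?_
  exact continuous_iff_continuousAt.2 fun θ =>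
    (hG _ (circleMap_mem_sphere c hr θ)).comp (f := circleMap c r)
      (continuous_circleMap c r).continuousAt

lemma differentiableAt_circleIntegral {G : ℂ × E → ℂ} (hr : 0 ≤ r) {e₀ : E}
    (hG : ∀ x ∈ sphere c r, AnalyticAt ℂ G (x, e₀)) :
    DifferentiableAt ℂ (fun e => ∮ x in C(c, r), G (x, e)) e₀ := by
  have hana : ∀ᶠ e in 𝓝 e₀, ∀ x ∈ sphere c r, AnalyticAt ℂ G (x, e) :=
    eventually_forall_mem_of_isCompact (isCompact_sphere c r)
      fun x hx => (hG x hx).eventually_analyticAt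
  let D : E → ℂ → E →L[ℂ] ℂ := fun e x => (fderiv ℂ G (x, e)).comp (.inr ℂ ℂ E)
  have hDcont : ∀ x ∈ sphere c r, ContinuousAt (fun p : ℂ × E => D p.2 p.1) (x, e₀) := fun x hx =>
    (hG x hx).fderiv.continuousAt.clm_comp continuousAt_const
  obtain ⟨C, hC⟩ := exists_eventually_forall_norm_le_of_isBigO (s := univ) (isCompact_sphere c r)
    (h := fun p : ℂ × E => D p.2 p.1) (κ := fun _ => (1 : ℝ)) fun x hx => by
      simpa using (hDcont x hx).tendsto.isBigO_one ℝ
  have hcont : ∀ e, (∀ x ∈ sphere c r, AnalyticAt ℂ G (x, e)) →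
      Continuous fun θ : ℝ => deriv (circleMap c r) θ • G (circleMap c r θ, e) := fun e he =>
    continuous_deriv_circleMap_smul hr (G := fun x => G (x, e)) fun x hx =>
      (analyticAt_fiber (he x hx)).continuousAt
  have hDcont₀ : Continuous fun θ : ℝ => deriv (circleMap c r) θ • D e₀ (circleMap c r θ) :=
    continuous_deriv_circleMap_smul hr fun x hx =>
      ContinuousAt.comp (f := fun x => (x, e₀)) (hDcont x hx) (by fun_prop)
  refine (intervalIntegral.hasFDerivAt_integral_of_dominated_of_fderiv_le
    (F' := fun e θ => deriv (circleMap c r) θ • D e (circleMap c r θ)) (bound := fun _ => r * C)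
    (hana.and hC) (hana.mono fun e he => (hcont e he).aestronglyMeasurable)
    ((hcont e₀ hG).intervalIntegrable _ _) hDcont₀.aestronglyMeasurable ?_ (by simp)
    ?_).differentiableAt
  · refine Eventually.of_forall fun θ _ e he => ?_
    have := he.2 _ (circleMap_mem_sphere c hr θ) (mem_univ _)
    rw [norm_one, mul_one] at this
    rw [norm_smul, deriv_circleMap, norm_mul, norm_circleMap_zero, Complex.norm_I, mul_one,
      abs_of_nonneg hr]
    gcongr
  · refine Eventually.of_forall fun θ _ e he => ?_
    have := (he.1 _ (circleMap_mem_sphere c hr θ)).differentiableAt.hasFDerivAt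
    exact (this.comp e (hasFDerivAt_prodMk_right _ _)).const_smul (deriv (circleMap c r) θ)

end CircleIntegral

section Resultant

variable {E : Type*} [NormedAddCommGroup E] [NormedSpace ℂ E]
  {f h κ : ℂ × E → ℂ} {c : ℂ} {r : ℝ} {e e₀ : E}

namespace FiberAdmissible

lemma discResultant_eq_zero_iff (hf : FiberAdmissible f c r e) :
    discResultant f h c r e = 0 ↔ ∃ x ∈ ball c r, f (x, e) = 0 ∧ h (x, e) = 0 := by
  simp only [discResultant, Multiset.prod_eq_zero_iff, Multiset.mem_map, hf.mem_zerosInDisc,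
    and_assoc]

lemma differentiableAt_powerSum (hf : FiberAdmissible f c r e₀)
    (hh : ∀ x ∈ closedBall c r, AnalyticAt ℂ h (x, e₀)) :
    DifferentiableAt ℂ
      (fun e => ((zerosInDisc c r fun x => f (x, e)).map fun x => h (x, e)).sum) e₀ := by
  have hint : DifferentiableAt ℂ
      (fun e => ∮ x in C(c, r), h (x, e) * (fderiv ℂ f (x, e) (1, 0) / f (x, e))) e₀ := by
    refine differentiableAt_circleIntegral (G := fun p => h p * (fderiv ℂ f p (1, 0) / f p))
      hf.radius_pos.le fun x hx => ?_
    have hx' := sphere_subset_closedBall hx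
    have hderiv := ((ContinuousLinearMap.apply ℂ ℂ ((1, 0) : ℂ × E)).analyticAt _).comp
      (hf.analyticAt x hx').fderiv
    exact (hh x hx').fun_mul (hderiv.fun_div (hf.analyticAt x hx') (hf.ne_zero x hx))
  refine (hint.const_mul (2 * Real.pi * Complex.I : ℂ)⁻¹).congr_of_eventuallyEq ?_
  filter_upwards [hf.eventually, eventually_forall_mem_of_isCompact (isCompact_closedBall c r)
    fun x hx => (hh x hx).eventually_analyticAt] with e hfe hhe
  rw [eq_inv_mul_iff_mul_eq₀ Complex.two_pi_I_ne_zero,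
    ← hfe.discAdmissible.circleIntegral_mul_logDeriv fun x hx => analyticAt_fiber (hhe x hx)]
  refine circleIntegral.integral_congr hf.radius_pos.le fun x hx => ?_
  have hfx := (hfe.analyticAt x (sphere_subset_closedBall hx)).differentiableAt.hasFDerivAt
  have hslice := (hfx.comp_hasDerivAt x ((hasDerivAt_id x).prodMk (hasDerivAt_const x e))).deriv
  simp only [logDeriv_apply]
  rw [← hslice]
  rfl

theorem differentiableAt_discResultant (hf : FiberAdmissible f c r e₀)
    (hh : ∀ x ∈ closedBall c r, AnalyticAt ℂ h (x, e₀)) :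
    DifferentiableAt ℂ (discResultant f h c r) e₀ := by
  have hsums : ∀ j, DifferentiableAt ℂ (fun e =>
      (((zerosInDisc c r fun x => f (x, e)).map fun x => h (x, e)).map (· ^ j)).sum) e₀ :=
      fun j => by
    simpa only [Multiset.map_map, Function.comp_def] using
      hf.differentiableAt_powerSum (h := fun p => h p ^ j) fun x hx => (hh x hx).fun_pow j
  refine (differentiableAt_esymm_of_powerSums hsums
    (zerosInDisc c r fun x => f (x, e₀)).card).congr_of_eventuallyEq ?_
  filter_upwards [hf.eventually_card_zerosInDisc_eq] with e he
  rw [← he, ← Multiset.card_map (fun x => h (x, e)), multiset_esymm_card, discResultant]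

end FiberAdmissible

end Resultant

/-! ### Growth of resultants -/

lemma norm_prod_map_le_pow_card_mul {α A : Type*} [NormedField A] {h κ : α → A} {C : ℝ} (hC : 0 ≤ C)
    {W : Multiset α} (hW : ∀ x ∈ W, ‖h x‖ ≤ C * ‖κ x‖) :
    ‖(W.map h).prod‖ ≤ C ^ W.card * ‖(W.map κ).prod‖ := by
  induction W using Multiset.induction with
  | empty => simp
  | cons a W ih =>
    rw [Multiset.forall_mem_cons] at hW
    simp only [Multiset.map_cons, Multiset.prod_cons, Multiset.card_cons, norm_mul]
    calc ‖h a‖ * ‖(W.map h).prod‖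
        ≤ (C * ‖κ a‖) * (C ^ W.card * ‖(W.map κ).prod‖) := by gcongr; exacts [hW.1, ih hW.2]
      _ = C ^ (W.card + 1) * (‖κ a‖ * ‖(W.map κ).prod‖) := by ring

lemma norm_mul_le_of_forall_mem_sphere {U G : ℂ → ℂ} {c : ℂ} {r C : ℝ} (hr : r ≠ 0)
    (hU : AnalyticOnNhd ℂ U (closedBall c r)) (hG : ∀ x ∈ sphere c r, G x ≠ 0)
    (hC : ∀ x ∈ sphere c r, ‖U x * G x‖ ≤ C * ‖G x‖) {x : ℂ} (hx : x ∈ closedBall c r) :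
    ‖U x * G x‖ ≤ C * ‖G x‖ := by
  rw [norm_mul]
  gcongr
  refine Complex.norm_le_of_forall_mem_frontier_norm_le (U := ball c r) isBounded_ball
    (DifferentiableOn.diffContOnCl ?_) (fun z hz => ?_) (by rwa [closure_ball c hr])
  · rw [closure_ball c hr]
    exact hU.differentiableOn
  · rw [frontier_ball c hr] at hz
    have := hC z hz
    rw [norm_mul] at this
    exact le_of_mul_le_mul_right this (norm_pos_iff.2 (hG z hz))

namespace DiscAdmissible

variable {F : ℂ → ℂ} {c x : ℂ} {r C : ℝ}

lemma norm_le_mul_norm_prod_sub (hF : DiscAdmissible c r F)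
    (hC : ∀ x ∈ sphere c r, ‖F x‖ ≤ C * ‖((zerosInDisc c r F).map (x - ·)).prod‖)
    (hx : x ∈ closedBall c r) : ‖F x‖ ≤ C * ‖((zerosInDisc c r F).map (x - ·)).prod‖ := by
  obtain ⟨U, hU, -, hFU⟩ := hF.exists_eq_prod_zerosInDisc_mul
  simp only [hFU, mul_comm _ (U _)] at hC ⊢
  exact norm_mul_le_of_forall_mem_sphere hF.radius_pos.ne' hU (fun x hx =>
    prod_sub_ne_zero fun z hz => hF.sub_ne_zero_of_mem_zerosInDisc hx hz) hC hx

lemma norm_prod_sub_le_mul_norm (hF : DiscAdmissible c r F)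
    (hC : ∀ x ∈ sphere c r, ‖((zerosInDisc c r F).map (x - ·)).prod‖ ≤ C * ‖F x‖)
    (hx : x ∈ closedBall c r) : ‖((zerosInDisc c r F).map (x - ·)).prod‖ ≤ C * ‖F x‖ := by
  obtain ⟨U, hU, hU0, hFU⟩ := hF.exists_eq_prod_zerosInDisc_mul
  have hP : ∀ x ∈ closedBall c r, ((zerosInDisc c r F).map (x - ·)).prod = (U x)⁻¹ * F x :=
    fun x hx => by rw [hFU x, mul_comm _ (U x), inv_mul_cancel_left₀ (hU0 x hx)]
  rw [hP x hx]
  refine norm_mul_le_of_forall_mem_sphere (U := fun x => (U x)⁻¹) hF.radius_pos.ne'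
    (hU.inv hU0) hF.ne_zero (fun x hx => ?_) hx
  simpa only [← hP x (sphere_subset_closedBall hx)] using hC x hx

end DiscAdmissible

section Growth

variable {E : Type*} [NormedAddCommGroup E] [NormedSpace ℂ E]
  {f h κ : ℂ × E → ℂ} {c : ℂ} {r : ℝ} {e₀ : E}

lemma isTheta_one_of_continuousAt {X : Type*} [TopologicalSpace X] {f : X → ℂ} {x : X}
    (hf : ContinuousAt f x) (hx : f x ≠ 0) : f =Θ[𝓝 x] fun _ => (1 : ℂ) :=
  ((isEquivalent_const_iff_tendsto hx).2 hf.tendsto).isTheta.trans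
    (isTheta_const_const hx one_ne_zero)

namespace FiberAdmissible

theorem discResultant_isBigO (hf : FiberAdmissible f c r e₀)
    (hh : ∀ x ∈ ball c r, f (x, e₀) = 0 → h =O[𝓝 (x, e₀) ⊓ 𝓟 {p | f p = 0}] κ) :
    discResultant f h c r =O[𝓝 e₀] discResultant f κ c r := by
  have hh' : ∀ x ∈ closedBall c r, h =O[𝓝 (x, e₀) ⊓ 𝓟 {p | f p = 0}] κ := fun x hx => by
    by_cases h0 : f (x, e₀) = 0
    · exact hh x (hf.mem_ball_of_eq_zero hx h0) h0
    · have hbot : 𝓝 (x, e₀) ⊓ 𝓟 {p | f p = 0} = ⊥ :=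
        inf_principal_eq_bot.2 ((hf.analyticAt x hx).continuousAt.eventually_ne h0)
      simp only [hbot, isBigO_bot]
  obtain ⟨C, hC⟩ := exists_eventually_forall_norm_le_of_isBigO (isCompact_closedBall c r) hh'
  refine IsBigO.of_bound (|C| ^ (zerosInDisc c r fun x => f (x, e₀)).card) ?_
  filter_upwards [hC, hf.eventually, hf.eventually_card_zerosInDisc_eq] with e hCe hfe hcard
  rw [← hcard]
  refine norm_prod_map_le_pow_card_mul (abs_nonneg C) fun x hx => ?_
  obtain ⟨hx, h0⟩ := hfe.mem_zerosInDisc.1 hx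
  exact (hCe x (ball_subset_closedBall hx) h0).trans (by gcongr; exact le_abs_self C)

theorem discResultant_isTheta (hf : FiberAdmissible f c r e₀)
    (hh : ∀ x ∈ ball c r, f (x, e₀) = 0 → h =Θ[𝓝 (x, e₀) ⊓ 𝓟 {p | f p = 0}] κ) :
    discResultant f h c r =Θ[𝓝 e₀] discResultant f κ c r :=
  ⟨hf.discResultant_isBigO fun x hx h0 => (hh x hx h0).1,
    hf.discResultant_isBigO fun x hx h0 => (hh x hx h0).2⟩

-- The product is a resultant with `x` as an additional parameter.
lemma continuousAt_prod_sub_zerosInDisc (hf : FiberAdmissible f c r e₀) (x₀ : ℂ) :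
    ContinuousAt (fun p : ℂ × E => ((zerosInDisc c r fun x => f (x, p.2)).map (p.1 - ·)).prod)
      (x₀, e₀) := by
  have hf' : FiberAdmissible (fun q : ℂ × ℂ × E => f (q.1, q.2.2)) c r (x₀, e₀) :=
    ⟨hf.radius_pos, fun x hx => AnalyticAt.fun_comp (f := fun q : ℂ × ℂ × E => (q.1, q.2.2))
      (hf.analyticAt x hx) (analyticAt_fst.prod (analyticAt_snd.comp analyticAt_snd)),
      hf.ne_zero⟩
  exact (hf'.differentiableAt_discResultant (h := fun q => q.2.1 - q.1)
    fun x _ => (analyticAt_fst.comp analyticAt_snd).sub analyticAt_fst).continuousAt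

theorem isTheta_prod_sub_zerosInDisc (hf : FiberAdmissible f c r e₀) {x₀ : ℂ}
    (hx₀ : x₀ ∈ ball c r) :
    f =Θ[𝓝 (x₀, e₀)] fun p => ((zerosInDisc c r fun x => f (x, p.2)).map (p.1 - ·)).prod := by
  set P : ℂ × E → ℂ := fun p => ((zerosInDisc c r fun x => f (x, p.2)).map (p.1 - ·)).prod
  have hcirc : ∀ x ∈ sphere c r, f =Θ[𝓝 (x, e₀) ⊓ 𝓟 univ] P := fun x hx => by
    rw [principal_univ, inf_top_eq]
    have hf₀ := (hf.analyticAt x (sphere_subset_closedBall hx)).continuousAt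
    exact (isTheta_one_of_continuousAt hf₀ (hf.ne_zero x hx)).trans (isTheta_one_of_continuousAt
      (hf.continuousAt_prod_sub_zerosInDisc x) (prod_sub_ne_zero fun z hz =>
        hf.discAdmissible.sub_ne_zero_of_mem_zerosInDisc hx hz)).symm
  obtain ⟨C, hC⟩ := exists_eventually_forall_norm_le_of_isBigO (isCompact_sphere c r)
    fun x hx => (hcirc x hx).1
  obtain ⟨C', hC'⟩ := exists_eventually_forall_norm_le_of_isBigO (isCompact_sphere c r)
    fun x hx => (hcirc x hx).2
  have hbounds : ∀ᶠ e in 𝓝 e₀, ∀ x ∈ closedBall c r,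
      ‖f (x, e)‖ ≤ C * ‖P (x, e)‖ ∧ ‖P (x, e)‖ ≤ C' * ‖f (x, e)‖ := by
    filter_upwards [hC, hC', hf.eventually] with e hCe hCe' hfe x hx
    exact ⟨hfe.discAdmissible.norm_le_mul_norm_prod_sub (fun x hx => hCe x hx (mem_univ _)) hx,
      hfe.discAdmissible.norm_prod_sub_le_mul_norm (fun x hx => hCe' x hx (mem_univ _)) hx⟩
  have hnear : ∀ᶠ p : ℂ × E in 𝓝 (x₀, e₀),
      ‖f p‖ ≤ C * ‖P p‖ ∧ ‖P p‖ ≤ C' * ‖f p‖ := by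
    rw [nhds_prod_eq]
    filter_upwards [prod_mem_prod (closedBall_mem_nhds_of_mem hx₀) hbounds] with p hp
      using hp.2 p.1 hp.1
  exact ⟨IsBigO.of_bound C (hnear.mono fun _ hp => hp.1),
    IsBigO.of_bound C' (hnear.mono fun _ hp => hp.2)⟩

theorem discResultant_fst_sub_isTheta (hf : FiberAdmissible f c r e₀) {ξ : E → ℂ}
    (hξ : ContinuousAt ξ e₀) (hξ₀ : ξ e₀ ∈ ball c r) :
    discResultant f (fun p => p.1 - ξ p.2) c r =Θ[𝓝 e₀] fun e => f (ξ e, e) := by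
  have hgraph : Tendsto (fun e => (ξ e, e)) (𝓝 e₀) (𝓝 (ξ e₀, e₀)) :=
    hξ.tendsto.prodMk_nhds tendsto_id
  have hW := hf.isTheta_prod_sub_zerosInDisc hξ₀
  calc discResultant f (fun p => p.1 - ξ p.2) c r
      =Θ[𝓝 e₀] discResultant f (fun p => ξ p.2 - p.1) c r := hf.discResultant_isTheta
        fun _ _ _ => .of_norm_eventuallyEq_norm (.of_forall fun _ => norm_sub_rev _ _)
    _ =Θ[𝓝 e₀] fun e => f (ξ e, e) :=
      ⟨hW.2.comp_tendsto hgraph, hW.1.comp_tendsto hgraph⟩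

end FiberAdmissible

end Growth

/-! ### Orders of vanishing -/

section Order

variable {F : ℂ → ℂ} {z : ℂ} {n : ℕ}

lemma isBigO_pow_pow_of_le {𝕜 : Type*} [NormedField 𝕜] {m n : ℕ} (hmn : m ≤ n) :
    (fun x : 𝕜 => x ^ n) =O[𝓝 0] fun x => x ^ m := by
  rcases hmn.eq_or_lt with rfl | hlt
  exacts [isBigO_refl _ _, (isLittleO_pow_pow hlt).isBigO]

lemma le_of_pow_sub_isBigO_pow_sub {𝕜 : Type*} [NontriviallyNormedField 𝕜] {z : 𝕜} {m n : ℕ}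
    (h : (fun x => (x - z) ^ n) =O[𝓝 z] fun x => (x - z) ^ m) : m ≤ n := by
  by_contra! hlt
  have hlittle : (fun x => (x - z) ^ m) =o[𝓝 z] fun x => (x - z) ^ n := by
    simpa only [← norm_pow, isLittleO_norm_norm] using isLittleO_pow_sub_pow_sub z hlt
  refine isLittleO_irrefl (Eventually.frequently ?_)
    ((h.trans_isLittleO hlittle).mono (nhdsWithin_le_nhds (s := {z}ᶜ)))
  filter_upwards [self_mem_nhdsWithin] with x hx using pow_ne_zero _ (sub_ne_zero.2 hx)

lemma isTheta_pow_analyticOrderNatAt (hF : AnalyticAt ℂ F z) (hF' : analyticOrderAt F z ≠ ⊤) :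
    F =Θ[𝓝 z] fun x => (x - z) ^ analyticOrderNatAt F z := by
  obtain ⟨U, hU, hU0, hFU⟩ := exists_eq_pow_order_mul hF hF'
  simpa [← hFU] using (isTheta_refl (fun x => (x - z) ^ analyticOrderNatAt F z) (𝓝 z)).mul
    (isTheta_one_of_continuousAt hU.continuousAt hU0)

lemma le_analyticOrderNatAt_of_isBigO (hF : AnalyticAt ℂ F z) (hF' : analyticOrderAt F z ≠ ⊤)
    (h : F =O[𝓝 z] fun x => (x - z) ^ n) : n ≤ analyticOrderNatAt F z :=
  le_of_pow_sub_isBigO_pow_sub ((isTheta_pow_analyticOrderNatAt hF hF').2.trans h)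

lemma analyticOrderNatAt_eq_of_isTheta (hF : AnalyticAt ℂ F z) (hF' : analyticOrderAt F z ≠ ⊤)
    (h : F =Θ[𝓝 z] fun x => (x - z) ^ n) : analyticOrderNatAt F z = n :=
  le_antisymm
    (le_of_pow_sub_isBigO_pow_sub (h.2.trans (isTheta_pow_analyticOrderNatAt hF hF').1))
    (le_analyticOrderNatAt_of_isBigO hF hF' h.1)

end Order

/-! ### Counting common zeros -/

section Count

theorem isTheta_sub_of_injective_fderiv {E A B : Type*} [NormedAddCommGroup E] [NormedSpace ℂ E]
    [FiniteDimensional ℂ E] [NormedAddCommGroup A] [NormedSpace ℂ A] [NormedAddCommGroup B]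
    [NormedSpace ℂ B] {F : E → A} {H : E → B} {F' : E →L[ℂ] A} {H' : E →L[ℂ] B} {p₀ : E}
    (hF : HasFDerivAt F F' p₀) (hH : HasFDerivAt H H' p₀) (hF0 : F p₀ = 0) (hH0 : H p₀ = 0)
    (hinj : Function.Injective (F'.prod H')) :
    H =Θ[𝓝 p₀ ⊓ 𝓟 {p | F p = 0}] fun p => p - p₀ := by
  have hFH : (fun p => (F p, H p)) =Θ[𝓝 p₀] fun p => p - p₀ := by
    simpa [hF0, hH0] using (hF.prodMk hH).isTheta_sub
      (LinearMap.isClosedEmbedding_of_injective (LinearMap.ker_eq_bot.2 hinj)).isInducing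
  refine IsTheta.trans (IsTheta.of_norm_eventuallyEq_norm ?_) (hFH.mono inf_le_left)
  rw [EventuallyEq, eventually_inf_principal]
  refine Eventually.of_forall fun p (hp : F p = 0) => ?_
  simp [hp, Prod.norm_def]

lemma exists_apply_ne_zero_of_injective {L N : ℂ × ℂ →L[ℂ] ℂ}
    (hLN : Function.Injective (L.prod N)) : ∃ M : ℂ, L (M, 1) ≠ 0 := by
  by_contra! hL
  have hL0 : L = 0 := by
    ext
    · simpa [hL] using map_sub L (1, 1) (0, 1)
    · simpa using hL 0
  have hN : Function.Injective (N : ℂ × ℂ →ₗ[ℂ] ℂ) := fun v w hvw =>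
    hLN (Prod.ext (by simp [hL0]) hvw)
  simpa using LinearMap.finrank_le_finrank_of_injective hN

lemma injective_prod_fst_sub {L : ℂ × ℂ →L[ℂ] ℂ} {M : ℂ} (hM : L (M, 1) ≠ 0) :
    Function.Injective
      (L.prod (ContinuousLinearMap.fst ℂ ℂ ℂ - M • ContinuousLinearMap.snd ℂ ℂ ℂ)) := by
  refine (injective_iff_map_eq_zero _).2 fun v hv => ?_
  obtain ⟨hLv, hv⟩ : L v = 0 ∧ v.1 = M * v.2 := by simpa [sub_eq_zero] using hv
  have hvM : v = v.2 • (M, 1) := by ext <;> simp [hv, mul_comm]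
  rw [hvM, map_smul, smul_eq_mul] at hLv
  rw [hvM, (mul_eq_zero.1 hLv).resolve_right hM, zero_smul]

variable {F H : ℂ × ℂ → ℂ}

lemma exists_isTheta_fst_sub {ξ y₀ : ℂ} (hF : DifferentiableAt ℂ F (ξ, y₀))
    (hH : DifferentiableAt ℂ H (ξ, y₀)) (hF0 : F (ξ, y₀) = 0) (hH0 : H (ξ, y₀) = 0)
    (hinj : Function.Injective (fderiv ℂ (fun p => (F p, H p)) (ξ, y₀))) :
    ∃ M : ℂ, (H =Θ[𝓝 (ξ, y₀) ⊓ 𝓟 {p | F p = 0}] fun p => p.1 - (ξ + M * (p.2 - y₀))) ∧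
      (fun y => F (ξ + M * (y - y₀), y)) =Θ[𝓝 y₀] fun y => y - y₀ := by
  rw [hF.fderiv_prodMk hH] at hinj
  obtain ⟨M, hM⟩ := exists_apply_ne_zero_of_injective hinj
  refine ⟨M, ?_, ?_⟩
  · have hline : HasFDerivAt (fun p : ℂ × ℂ => p.1 - (ξ + M * (p.2 - y₀)))
        (ContinuousLinearMap.fst ℂ ℂ ℂ - M • ContinuousLinearMap.snd ℂ ℂ ℂ) (ξ, y₀) :=
      hasFDerivAt_fst.sub (((hasFDerivAt_snd.sub_const y₀).const_mul M).const_add ξ)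
    exact (isTheta_sub_of_injective_fderiv hF.hasFDerivAt hH.hasFDerivAt hF0 hH0 hinj).trans
      (isTheta_sub_of_injective_fderiv hF.hasFDerivAt hline hF0 (by simp)
        (injective_prod_fst_sub hM)).symm
  · have hline : HasDerivAt (fun y : ℂ => (ξ + M * (y - y₀), y)) ((M, 1) : ℂ × ℂ) y₀ := by
      refine HasDerivAt.prodMk ?_ (hasDerivAt_id y₀)
      simpa using (((hasDerivAt_id y₀).sub_const y₀).const_mul M).const_add ξ
    have hFline := HasFDerivAt.comp_hasDerivAt (l := F) (f := fun y : ℂ => (ξ + M * (y - y₀), y)) y₀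
      (by simpa using hF.hasFDerivAt) hline
    have hpair : Tendsto (fun y => (y, y₀)) (𝓝 y₀) (𝓝 y₀ ×ˢ pure y₀) :=
      tendsto_id.prodMk tendsto_const_pure
    have hsub := hFline.isTheta_sub hM
    constructor
    · simpa [hF0, Function.comp_def] using hsub.1.comp_tendsto hpair
    · simpa [hF0, Function.comp_def] using hsub.2.comp_tendsto hpair

-- Near the fibre over `y₀`, `H` may be replaced on `F = 0` by a product of linear functions, one
-- for each common zero; their resultants are explicit.
lemma FiberAdmissible.discResultant_isTheta_pow_card {c y₀ : ℂ} {r : ℝ}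
    (hF : FiberAdmissible F c r y₀) (hH : ∀ x ∈ closedBall c r, AnalyticAt ℂ H (x, y₀))
    {S : Finset ℂ} (hS : ∀ x, x ∈ S ↔ x ∈ ball c r ∧ F (x, y₀) = 0 ∧ H (x, y₀) = 0)
    (hinj : ∀ x ∈ S, Function.Injective (fderiv ℂ (fun p => (F p, H p)) (x, y₀))) :
    discResultant F H c r =Θ[𝓝 y₀] fun y => (y - y₀) ^ S.card := by
  have hlines : ∀ x ∈ S, ∃ M : ℂ,
      (H =Θ[𝓝 (x, y₀) ⊓ 𝓟 {p | F p = 0}] fun p => p.1 - (x + M * (p.2 - y₀))) ∧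
      (fun y => F (x + M * (y - y₀), y)) =Θ[𝓝 y₀] fun y => y - y₀ := fun x hx => by
    obtain ⟨hxr, hFx, hHx⟩ := (hS x).1 hx
    have hxr := ball_subset_closedBall hxr
    exact exists_isTheta_fst_sub (hF.analyticAt x hxr).differentiableAt
      (hH x hxr).differentiableAt hFx hHx (hinj x hx)
  choose! M hHM hFM using hlines
  let ℓ : ℂ → ℂ × ℂ → ℂ := fun ξ p => p.1 - (ξ + M ξ * (p.2 - y₀))
  have hℓ : ∀ {x : ℂ} {T : Finset ℂ}, x ∉ T →
      (fun p => ∏ ξ ∈ T, ℓ ξ p) =Θ[𝓝 (x, y₀) ⊓ 𝓟 {p | F p = 0}] fun _ => (1 : ℂ) := fun hx =>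
    (isTheta_one_of_continuousAt (by fun_prop) (by
      simpa [ℓ, Finset.prod_ne_zero_iff, sub_eq_zero] using hx)).mono
      inf_le_left
  have hHℓ : discResultant F H c r =Θ[𝓝 y₀] discResultant F (fun p => ∏ ξ ∈ S, ℓ ξ p) c r := by
    refine hF.discResultant_isTheta fun x hx hFx => ?_
    by_cases hxS : x ∈ S
    · simp only [← Finset.mul_prod_erase S _ hxS]
      simpa using (hHM x hxS).mul (hℓ (Finset.notMem_erase x S)).symm
    · have hHx : H (x, y₀) ≠ 0 := fun hHx => hxS ((hS x).2 ⟨hx, hFx, hHx⟩)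
      exact ((isTheta_one_of_continuousAt (hH x (ball_subset_closedBall hx)).continuousAt hHx).mono
        inf_le_left).trans (hℓ hxS).symm
  refine hHℓ.trans ?_
  simp only [discResultant_prod, ← Finset.prod_const]
  refine IsTheta.finsetProd fun ξ hξ => ?_
  exact (hF.discResultant_fst_sub_isTheta (ξ := fun y => ξ + M ξ * (y - y₀)) (by fun_prop)
    (by simpa using ((hS ξ).1 hξ).1)).trans (hFM ξ hξ)

variable {c c' : ℂ} {r r' : ℝ}

lemma ncard_setOf_mem_zerosInDisc_and {R : ℂ → ℂ} {S : ℂ → Finset ℂ}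
    (hS : ∀ y ∈ zerosInDisc c' r' R, (zerosInDisc c' r' R).count y = (S y).card) :
    {p : ℂ × ℂ | p.2 ∈ zerosInDisc c' r' R ∧ p.1 ∈ S p.2}.ncard = (zerosInDisc c' r' R).card := by
  have himage : {p : ℂ × ℂ | p.2 ∈ zerosInDisc c' r' R ∧ p.1 ∈ S p.2} =
      (fun q : Σ _ : ℂ, ℂ => (q.2, q.1)) '' ((zerosInDisc c' r' R).toFinset.sigma S) := by
    ext ⟨x, y⟩
    simp
  have hinj : Function.Injective fun q : Σ _ : ℂ, ℂ => (q.2, q.1) := by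
    rintro ⟨y, x⟩ ⟨y', x'⟩ h
    simpa [and_comm] using h
  rw [himage, Set.ncard_image_of_injective _ hinj, Set.ncard_coe_finset, Finset.card_sigma,
    ← Multiset.toFinset_sum_count_eq]
  exact Finset.sum_congr rfl fun y hy => (hS y (Multiset.mem_toFinset.1 hy)).symm

theorem ncard_commonZeros_eq_card_zerosInDisc
    (hF : ∀ y ∈ ball c' r', FiberAdmissible F c r y)
    (hH : ∀ y ∈ ball c' r', ∀ x ∈ closedBall c r, AnalyticAt ℂ H (x, y))
    (hR : DiscAdmissible c' r' (discResultant F H c r))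
    (hinj : ∀ p ∈ ball c r ×ˢ ball c' r', F p = 0 → H p = 0 →
      Function.Injective (fderiv ℂ (fun p => (F p, H p)) p)) :
    {p ∈ ball c r ×ˢ ball c' r' | F p = 0 ∧ H p = 0}.ncard =
      (zerosInDisc c' r' (discResultant F H c r)).card := by
  let S : ℂ → Finset ℂ := fun y => {x ∈ (zerosInDisc c r fun x => F (x, y)).toFinset | H (x, y) = 0}
  have hS : ∀ y ∈ ball c' r', ∀ x, x ∈ S y ↔ x ∈ ball c r ∧ F (x, y) = 0 ∧ H (x, y) = 0 := by
    intro y hy x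
    simp only [S, Finset.mem_filter, Multiset.mem_toFinset, (hF y hy).mem_zerosInDisc, and_assoc]
  have hcommon : {p ∈ ball c r ×ˢ ball c' r' | F p = 0 ∧ H p = 0} =
      {p | p.2 ∈ zerosInDisc c' r' (discResultant F H c r) ∧ p.1 ∈ S p.2} := by
    ext ⟨x, y⟩
    simp only [mem_ofPred_eq, mem_prod, hR.mem_zerosInDisc]
    constructor
    · rintro ⟨⟨hx, hy⟩, hxy⟩
      exact ⟨⟨hy, (hF y hy).discResultant_eq_zero_iff.2 ⟨x, hx, hxy⟩⟩, (hS y hy x).2 ⟨hx, hxy⟩⟩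
    · rintro ⟨⟨hy, -⟩, hx⟩
      obtain ⟨hx, hxy⟩ := (hS y hy x).1 hx
      exact ⟨⟨hx, hy⟩, hxy⟩
  rw [hcommon, ncard_setOf_mem_zerosInDisc_and]
  intro y hy
  have hyr := (hR.mem_zerosInDisc.1 hy).1
  rw [hR.count_zerosInDisc hyr]
  refine analyticOrderNatAt_eq_of_isTheta (hR.analyticOnNhd y (ball_subset_closedBall hyr))
    (hR.analyticOrderAt_ne_top (ball_subset_closedBall hyr)) ?_
  refine (hF y hyr).discResultant_isTheta_pow_card (hH y hyr) (hS y hyr) fun x hx => ?_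
  obtain ⟨hxr, hFx, hHx⟩ := (hS y hyr x).1 hx
  exact hinj (x, y) ⟨hxr, hyr⟩ hFx hHx

end Count

/-! ### Stability of the number of common zeros -/

section Stability

/-- The polydisc with factors `closedBall c r` and `closedBall c' r'` is adapted to the system
`F = H = 0`: the common zeros of `F` and `H` in it are counted, with multiplicity, by the zeros of
the resultant `discResultant F H c r` in the second factor. -/
structure BidiscAdmissible (c : ℂ) (r : ℝ) (c' : ℂ) (r' : ℝ) (F H : ℂ × ℂ → ℂ) : Prop where
  fiberAdmissible : ∀ y ∈ closedBall c' r', FiberAdmissible F c r y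
  analyticAt : ∀ y ∈ closedBall c' r', ∀ x ∈ closedBall c r, AnalyticAt ℂ H (x, y)
  discAdmissible : DiscAdmissible c' r' (discResultant F H c r)

variable {S : Type*} [NormedAddCommGroup S] [NormedSpace ℂ S] {c c' : ℂ} {r r' : ℝ}

lemma analyticAt_slice {f : ℂ × ℂ × S → ℂ} {x y : ℂ} {s : S} (hf : AnalyticAt ℂ f (x, y, s)) :
    AnalyticAt ℂ (fun p : ℂ × ℂ => f (p.1, p.2, s)) (x, y) :=
  AnalyticAt.fun_comp (f := fun p : ℂ × ℂ => (p.1, p.2, s)) hf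
    (analyticAt_fst.prod (analyticAt_snd.prod analyticAt_const))

lemma FiberAdmissible.slice {f : ℂ × ℂ × S → ℂ} {y : ℂ} {s : S}
    (hf : FiberAdmissible f c r (y, s)) :
    FiberAdmissible (fun p : ℂ × ℂ => f (p.1, p.2, s)) c r y :=
  ⟨hf.radius_pos, fun x hx => analyticAt_slice (hf.analyticAt x hx), hf.ne_zero⟩

lemma FiberAdmissible.analyticAt_discResultant {F H : ℂ × ℂ → ℂ} {y : ℂ}
    (hF : FiberAdmissible F c r y) (hH : ∀ x ∈ closedBall c r, AnalyticAt ℂ H (x, y)) :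
    AnalyticAt ℂ (discResultant F H c r) y := by
  rw [Complex.analyticAt_iff_eventually_differentiableAt]
  filter_upwards [hF.eventually, eventually_forall_mem_of_isCompact (isCompact_closedBall c r)
    fun x hx => (hH x hx).eventually_analyticAt] with z hFz hHz
  exact hFz.differentiableAt_discResultant hHz

theorem BidiscAdmissible.eventually {f h : ℂ × ℂ × S → ℂ} {s₀ : S}
    (h₀ : BidiscAdmissible c r c' r' (fun p => f (p.1, p.2, s₀)) (fun p => h (p.1, p.2, s₀)))
    (hf : ∀ y ∈ closedBall c' r', ∀ x ∈ closedBall c r, AnalyticAt ℂ f (x, y, s₀))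
    (hh : ∀ y ∈ closedBall c' r', ∀ x ∈ closedBall c r, AnalyticAt ℂ h (x, y, s₀)) :
    ∀ᶠ s in 𝓝 s₀,
      BidiscAdmissible c r c' r' (fun p => f (p.1, p.2, s)) (fun p => h (p.1, p.2, s)) ∧
      (zerosInDisc c' r' (discResultant (fun p => f (p.1, p.2, s)) (fun p => h (p.1, p.2, s))
        c r)).card = (zerosInDisc c' r' (discResultant (fun p => f (p.1, p.2, s₀))
        (fun p => h (p.1, p.2, s₀)) c r)).card := by
  have hfiber₀ : ∀ y ∈ closedBall c' r', FiberAdmissible f c r (y, s₀) := fun y hy =>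
    ⟨(h₀.fiberAdmissible y hy).radius_pos, hf y hy, (h₀.fiberAdmissible y hy).ne_zero⟩
  have hfiber : ∀ᶠ s in 𝓝 s₀, ∀ y ∈ closedBall c' r', FiberAdmissible f c r (y, s) :=
    eventually_forall_mem_of_isCompact (isCompact_closedBall c' r')
      fun y hy => (hfiber₀ y hy).eventually
  have hana : ∀ᶠ s in 𝓝 s₀, ∀ y ∈ closedBall c' r', ∀ x ∈ closedBall c r,
      AnalyticAt ℂ h (x, y, s) :=
    eventually_forall_mem_of_isCompact (isCompact_closedBall c' r')
      (P := fun e => ∀ x ∈ closedBall c r, AnalyticAt ℂ h (x, e)) fun y hy =>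
      eventually_forall_mem_of_isCompact (isCompact_closedBall c r)
        fun x hx => (hh y hy x hx).eventually_analyticAt
  have hresultant := h₀.discAdmissible.eventually (f := discResultant f h c r)
    (fun y hy => ((hfiber₀ y (sphere_subset_closedBall hy)).differentiableAt_discResultant
      (hh y (sphere_subset_closedBall hy))).continuousAt)
    (by
      filter_upwards [hfiber, hana] with s hfs hhs y hy
      exact (hfs y hy).slice.analyticAt_discResultant fun x hx => analyticAt_slice (hhs y hy x hx))
  filter_upwards [hfiber, hana, hresultant] with s hfs hhs hRs
  exact ⟨⟨fun y hy => (hfs y hy).slice, fun y hy x hx => analyticAt_slice (hhs y hy x hx), hRs.1⟩,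
    hRs.2⟩

end Stability

/-! ### The order of the resultant -/

section Order

lemma DiscAdmissible.card_zerosInDisc_eq_analyticOrderNatAt {F : ℂ → ℂ} {c z : ℂ} {r : ℝ}
    (hF : DiscAdmissible c r F) (hz : z ∈ ball c r) (hFz : ∀ x ∈ ball c r, F x = 0 → x = z) :
    (zerosInDisc c r F).card = analyticOrderNatAt F z := by
  rw [← hF.count_zerosInDisc hz, eq_comm, Multiset.count_eq_card]
  intro x hx
  obtain ⟨hxr, hFx⟩ := hF.mem_zerosInDisc.1 hx
  exact (hFz x hxr hFx).symm

lemma FiberAdmissible.discResultant_snd_isTheta {F : ℂ × ℂ → ℂ} {c : ℂ} {r : ℝ}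
    (hF : FiberAdmissible F c r 0) : discResultant F (fun p => p.2) c r =Θ[𝓝 0]
      fun y => y ^ (zerosInDisc c r fun x => F (x, 0)).card := by
  refine EventuallyEq.isTheta ?_
  filter_upwards [hF.eventually_card_zerosInDisc_eq] with y hy
  simp [discResultant, hy]

/-- The first component `x₁^(m+1) A + x₂^d B` of the maps of the theorem; the coefficients `A`, `B`
are functions on `ℂ × ℂ`. -/
def firstComponent (m d : ℕ) (A B : ℂ × ℂ → ℂ) (p : ℂ × ℂ) : ℂ :=
  p.1 ^ (m + 1) * A p + p.2 ^ d * B p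

/-- The second component `x₁^m x₂ C + x₂^(d+1) D` of the maps of the theorem. -/
def secondComponent (m d : ℕ) (C D : ℂ × ℂ → ℂ) (p : ℂ × ℂ) : ℂ :=
  p.1 ^ m * p.2 * C p + p.2 ^ (d + 1) * D p

variable {m d : ℕ} {A B C D : ℂ × ℂ → ℂ} {a : ℝ}

lemma firstComponent_fst_zero (hd : 0 < d) (x : ℂ) :
    firstComponent m d A B (x, 0) = x ^ (m + 1) * A (x, 0) := by
  simp [firstComponent, hd.ne']

lemma firstComponent_zero_snd (y : ℂ) : firstComponent m d A B (0, y) = y ^ d * B (0, y) := by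
  simp [firstComponent]

section OnCurve

variable {l : Filter (ℂ × ℂ)}

lemma snd_pow_isBigO_fst_pow (hl : l ≤ 𝓝 0)
    (hl0 : ∀ᶠ p in l, firstComponent m d A B p = 0) (hA : ContinuousAt A 0)
    (hB : ContinuousAt B 0) (hB0 : B 0 ≠ 0) :
    (fun p => p.2 ^ d) =O[l] fun p => p.1 ^ (m + 1) := by
  have hB1 := (isTheta_one_of_continuousAt hB hB0).mono hl
  have hA1 := (hA.tendsto.isBigO_one ℂ).mono hl
  have hcurve : (fun p => p.2 ^ d * B p) =ᶠ[l] fun p => -(p.1 ^ (m + 1) * A p) :=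
    hl0.mono fun p hp => eq_neg_of_add_eq_zero_right hp
  calc (fun p : ℂ × ℂ => p.2 ^ d)
      =O[l] fun p => p.2 ^ d * B p := by simpa using (isBigO_refl _ _).mul hB1.2
    _ =O[l] fun p => p.1 ^ (m + 1) * A p := hcurve.trans_isBigO (isBigO_refl _ _).neg_left
    _ =O[l] fun p => p.1 ^ (m + 1) := by simpa using (isBigO_refl _ _).mul hA1

lemma snd_pow_isLittleO_fst_pow (hl : l ≤ 𝓝 0)
    (hl0 : ∀ᶠ p in l, firstComponent m d A B p = 0) (hA : ContinuousAt A 0)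
    (hB : ContinuousAt B 0) (hB0 : B 0 ≠ 0) :
    (fun p => p.2 ^ d) =o[l] fun p => p.1 ^ m := by
  have hfst : (fun p : ℂ × ℂ => p.1) =o[l] fun _ => (1 : ℂ) :=
    (isLittleO_one_iff ℂ).2 ((continuous_fst.tendsto' 0 0 rfl).mono_left hl)
  refine (snd_pow_isBigO_fst_pow hl hl0 hA hB hB0).trans_isLittleO ?_
  simpa [pow_succ] using (isBigO_refl (fun p : ℂ × ℂ => p.1 ^ m) _).mul_isLittleO hfst

lemma secondComponent_eq : secondComponent m d C D =
    fun p => p.2 * (p.1 ^ m * C p + p.2 ^ d * D p) := by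
  funext p
  simp only [secondComponent]
  ring

lemma secondComponent_isBigO (hl : l ≤ 𝓝 0)
    (hl0 : ∀ᶠ p in l, firstComponent m d A B p = 0) (hA : ContinuousAt A 0) (hB : ContinuousAt B 0)
    (hC : ContinuousAt C 0) (hD : ContinuousAt D 0) (hB0 : B 0 ≠ 0) :
    secondComponent m d C D =O[l] fun p => p.2 * p.1 ^ m := by
  have hC1 := (hC.tendsto.isBigO_one ℂ).mono hl
  have hD1 := (hD.tendsto.isBigO_one ℂ).mono hl
  rw [secondComponent_eq]
  refine (isBigO_refl _ _).mul (IsBigO.add ?_ ?_)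
  · simpa using (isBigO_refl _ _).mul hC1
  · simpa using (snd_pow_isLittleO_fst_pow hl hl0 hA hB hB0).isBigO.mul hD1

lemma secondComponent_isTheta (hl : l ≤ 𝓝 0)
    (hl0 : ∀ᶠ p in l, firstComponent m d A B p = 0) (hA : ContinuousAt A 0) (hB : ContinuousAt B 0)
    (hC : ContinuousAt C 0) (hD : ContinuousAt D 0) (hB0 : B 0 ≠ 0) (hC0 : C 0 ≠ 0) :
    secondComponent m d C D =Θ[l] fun p => p.2 * p.1 ^ m := by
  have hC1 := (isTheta_one_of_continuousAt hC hC0).mono hl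
  have hD1 := (hD.tendsto.isBigO_one ℂ).mono hl
  have hlead : (fun p => p.1 ^ m * C p) =Θ[l] fun p => p.1 ^ m := by
    simpa using (isTheta_refl _ _).mul hC1
  have hrest : (fun p => p.2 ^ d * D p) =o[l] fun p => p.1 ^ m := by
    simpa using (snd_pow_isLittleO_fst_pow hl hl0 hA hB hB0).mul_isBigO hD1
  rw [secondComponent_eq]
  refine (isTheta_refl _ _).mul (IsTheta.trans ?_ hlead)
  exact ⟨(isBigO_refl _ _).add (hrest.trans_isTheta hlead.symm).isBigO,
    (hrest.trans_isTheta hlead.symm).right_isBigO_add'⟩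

end OnCurve

lemma le_analyticOrderNatAt_firstComponent (hd : 0 < d)
    (hF : DiscAdmissible 0 a fun x => firstComponent m d A B (x, 0)) (hA : ContinuousAt A 0) :
    m + 1 ≤ analyticOrderNatAt (fun x => firstComponent m d A B (x, 0)) 0 := by
  have h0 : (0 : ℂ) ∈ closedBall 0 a := mem_closedBall_self hF.radius_pos.le
  have hA0 : ContinuousAt (fun x : ℂ => A (x, 0)) 0 :=
    ContinuousAt.comp (f := fun x : ℂ => (x, (0 : ℂ))) hA (by fun_prop)
  refine le_analyticOrderNatAt_of_isBigO (hF.analyticOnNhd 0 h0) (hF.analyticOrderAt_ne_top h0) ?_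
  simpa [firstComponent_fst_zero hd] using (isBigO_refl _ _).mul (hA0.tendsto.isBigO_one ℂ)

lemma analyticOrderNatAt_firstComponent (hd : 0 < d)
    (hF : DiscAdmissible 0 a fun x => firstComponent m d A B (x, 0)) (hA : ContinuousAt A 0)
    (hA0 : A 0 ≠ 0) : analyticOrderNatAt (fun x => firstComponent m d A B (x, 0)) 0 = m + 1 := by
  have h0 : (0 : ℂ) ∈ closedBall 0 a := mem_closedBall_self hF.radius_pos.le
  have hA1 : ContinuousAt (fun x : ℂ => A (x, 0)) 0 :=
    ContinuousAt.comp (f := fun x : ℂ => (x, (0 : ℂ))) hA (by fun_prop)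
  refine analyticOrderNatAt_eq_of_isTheta (hF.analyticOnNhd 0 h0) (hF.analyticOrderAt_ne_top h0) ?_
  simpa [firstComponent_fst_zero hd] using
    (isTheta_refl _ _).mul (isTheta_one_of_continuousAt hA1 hA0)

lemma discResultant_firstComponent_fst_isTheta
    (hF : FiberAdmissible (firstComponent m d A B) 0 a 0) (hB : ContinuousAt B 0) (hB0 : B 0 ≠ 0) :
    discResultant (firstComponent m d A B) (fun p => p.1) 0 a =Θ[𝓝 0] fun y => y ^ d := by
  have hB1 : ContinuousAt (fun y : ℂ => B (0, y)) 0 :=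
    ContinuousAt.comp (f := fun y : ℂ => ((0 : ℂ), y)) hB (by fun_prop)
  have hres := hF.discResultant_fst_sub_isTheta (ξ := fun _ => 0) continuousAt_const
    (mem_ball_self hF.radius_pos)
  simp only [sub_zero, firstComponent_zero_snd] at hres
  refine hres.trans ?_
  simpa using (isTheta_refl _ _).mul (isTheta_one_of_continuousAt hB1 hB0)

lemma discResultant_snd_mul_fst_pow_isTheta
    (hF : FiberAdmissible (firstComponent m d A B) 0 a 0)
    (hF0 : ∀ x ∈ ball 0 a, firstComponent m d A B (x, 0) = 0 → x = 0) (hB : ContinuousAt B 0)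
    (hB0 : B 0 ≠ 0) : discResultant (firstComponent m d A B) (fun p => p.2 * p.1 ^ m) 0 a =Θ[𝓝 0]
      fun y => y ^ (d * m + analyticOrderNatAt (fun x => firstComponent m d A B (x, 0)) 0) := by
  have hsnd := hF.discResultant_snd_isTheta
  rw [hF.discAdmissible.card_zerosInDisc_eq_analyticOrderNatAt (mem_ball_self hF.radius_pos) hF0]
    at hsnd
  simp only [discResultant_mul, discResultant_pow, add_comm (d * m), pow_add, pow_mul]
  exact hsnd.mul ((discResultant_firstComponent_fst_isTheta hF hB hB0).pow m)

theorem discResultant_firstComponent_secondComponent_isBigO (hd : 0 < d)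
    (hF : FiberAdmissible (firstComponent m d A B) 0 a 0)
    (hF0 : ∀ x ∈ ball 0 a, firstComponent m d A B (x, 0) = 0 → x = 0) (hA : ContinuousAt A 0)
    (hB : ContinuousAt B 0) (hC : ContinuousAt C 0) (hD : ContinuousAt D 0) (hB0 : B 0 ≠ 0) :
    discResultant (firstComponent m d A B) (secondComponent m d C D) 0 a =O[𝓝 0]
      fun y => y ^ (d * m + m + 1) := by
  have horder := le_analyticOrderNatAt_firstComponent hd hF.discAdmissible hA
  calc discResultant (firstComponent m d A B) (secondComponent m d C D) 0 a
      =O[𝓝 0] discResultant (firstComponent m d A B) (fun p => p.2 * p.1 ^ m) 0 a :=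
        hF.discResultant_isBigO fun x hx hx0 => by
          obtain rfl := hF0 x hx hx0
          exact secondComponent_isBigO inf_le_left
            (eventually_inf_principal.2 (.of_forall fun _ => id)) hA hB hC hD hB0
    _ =O[𝓝 0] _ := (discResultant_snd_mul_fst_pow_isTheta hF hF0 hB hB0).1
    _ =O[𝓝 0] fun y => y ^ (d * m + m + 1) := isBigO_pow_pow_of_le (by omega)

theorem discResultant_firstComponent_secondComponent_isTheta (hd : 0 < d)
    (hF : FiberAdmissible (firstComponent m d A B) 0 a 0)
    (hF0 : ∀ x ∈ ball 0 a, firstComponent m d A B (x, 0) = 0 → x = 0) (hA : ContinuousAt A 0)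
    (hB : ContinuousAt B 0) (hC : ContinuousAt C 0) (hD : ContinuousAt D 0) (hA0 : A 0 ≠ 0)
    (hB0 : B 0 ≠ 0) (hC0 : C 0 ≠ 0) :
    discResultant (firstComponent m d A B) (secondComponent m d C D) 0 a =Θ[𝓝 0]
      fun y => y ^ (d * m + m + 1) := by
  have hmodel := discResultant_snd_mul_fst_pow_isTheta hF hF0 hB hB0
  rw [analyticOrderNatAt_firstComponent hd hF.discAdmissible hA hA0] at hmodel
  refine IsTheta.trans (hF.discResultant_isTheta fun x hx hx0 => ?_) hmodel
  obtain rfl := hF0 x hx hx0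
  exact secondComponent_isTheta inf_le_left
    (eventually_inf_principal.2 (.of_forall fun _ => id)) hA hB hC hD hB0 hC0

end Order

/-! ### Multiplicity of an isolated common zero -/

/-- The closed polydisc of radius `a` about the origin isolates the common zero `0` of the
holomorphic functions `F` and `H`, and also the zero `0` of `F` on the axis `x₂ = 0`. -/
structure IsolatesOrigin (a : ℝ) (F H : ℂ × ℂ → ℂ) : Prop where
  radius_pos : 0 < a
  analyticOnNhd_left : AnalyticOnNhd ℂ F (closedBall 0 a)
  analyticOnNhd_right : AnalyticOnNhd ℂ H (closedBall 0 a)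
  eq_zero_of_axis : ∀ x ∈ closedBall 0 a, F (x, 0) = 0 → x = 0
  eq_zero : ∀ p ∈ closedBall 0 a, F p = 0 → H p = 0 → p = 0

lemma eventually_isolatesOrigin {F H : ℂ × ℂ → ℂ} (hF : AnalyticAt ℂ F 0) (hH : AnalyticAt ℂ H 0)
    (haxis : ∀ᶠ x : ℂ in 𝓝 0, F (x, 0) = 0 → x = 0)
    (hzero : ∀ᶠ p in 𝓝 0, F p = 0 → H p = 0 → p = 0) :
    ∀ᶠ a in 𝓝[>] 0, IsolatesOrigin a F H := by
  filter_upwards [self_mem_nhdsWithin,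
    nhdsWithin_le_nhds (eventually_closedBall_subset hF.eventually_analyticAt),
    nhdsWithin_le_nhds (eventually_closedBall_subset hH.eventually_analyticAt),
    nhdsWithin_le_nhds (eventually_closedBall_subset haxis),
    nhdsWithin_le_nhds (eventually_closedBall_subset hzero)] with a ha haF haH haa ha0
  exact ⟨ha, haF, haH, haa, ha0⟩

lemma eventually_forall_mem_imp_of_isCompact {X Y : Type*} [TopologicalSpace X]
    [TopologicalSpace Y] [T2Space Y] {h : X → Y} {K U : Set X} {q₀ : Y} (hK : IsCompact K)
    (hh : ∀ x ∈ K, ContinuousAt h x) (hU : ∀ x ∈ K, h x = q₀ → U ∈ 𝓝 x) :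
    ∀ᶠ q in 𝓝 q₀, ∀ x ∈ K, h x = q → x ∈ U := by
  refine eventually_forall_mem_of_isCompact hK (P := fun p => h p.1 = p.2 → p.1 ∈ U) fun x hx => ?_
  by_cases hxq : h x = q₀
  · exact mem_of_superset (continuousAt_fst (hU x hx hxq)) fun p hp _ => hp
  · have hcont : ContinuousAt (fun p : X × Y => h p.1) (x, q₀) :=
      ContinuousAt.comp (f := Prod.fst) (hh x hx) continuousAt_fst
    exact ((hcont.ne_iff_eventually_ne continuousAt_snd).1 hxq).mono fun p hp hpq => absurd hpq hp

lemma BidiscAdmissible.analyticOrderNatAt_le_card {F H : ℂ × ℂ → ℂ} {c c' y : ℂ} {r r' : ℝ}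
    (h : BidiscAdmissible c r c' r' F H) (hy : y ∈ ball c' r') :
    analyticOrderNatAt (discResultant F H c r) y ≤
      (zerosInDisc c' r' (discResultant F H c r)).card := by
  rw [← h.discAdmissible.count_zerosInDisc hy]
  exact Multiset.count_le_card _ _

lemma mk_mem_closedBall_zero {x y : ℂ} {a b : ℝ} (hba : b ≤ a) (hx : x ∈ closedBall 0 a)
    (hy : y ∈ closedBall 0 b) : (x, y) ∈ closedBall 0 a := by
  rw [← Prod.mk_zero_zero, ← closedBall_prod_same]
  exact ⟨hx, closedBall_subset_closedBall hba hy⟩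

lemma analyticAt_comp_fst_prodMk_snd {S : Type*} [NormedAddCommGroup S] [NormedSpace ℂ S]
    {F : ℂ × ℂ → ℂ} {x y : ℂ} {a b : ℝ} (hF : AnalyticOnNhd ℂ F (closedBall 0 a)) (hba : b ≤ a)
    (hx : x ∈ closedBall 0 a) (hy : y ∈ closedBall 0 b) (s : S) :
    AnalyticAt ℂ (fun e : ℂ × ℂ × S => F (e.1, e.2.1)) (x, y, s) :=
  AnalyticAt.fun_comp (f := fun e : ℂ × ℂ × S => (e.1, e.2.1))
    (hF _ (mk_mem_closedBall_zero hba hx hy))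
    (analyticAt_fst.prod (analyticAt_fst.comp analyticAt_snd))

namespace IsolatesOrigin

variable {a : ℝ} {F H K : ℂ × ℂ → ℂ}

lemma fiberAdmissible (h : IsolatesOrigin a F H) : FiberAdmissible F 0 a 0 := by
  refine ⟨h.radius_pos, fun x hx => h.analyticOnNhd_left _ ?_, fun x hx hFx => ?_⟩
  · simpa [Prod.norm_def] using hx
  · obtain rfl := h.eq_zero_of_axis x (sphere_subset_closedBall hx) hFx
    exact ne_of_mem_sphere hx h.radius_pos.ne' rfl

theorem exists_bidiscAdmissible (h : IsolatesOrigin a F H) :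
    ∃ b, 0 < b ∧ b ≤ a ∧ BidiscAdmissible 0 a 0 b F H ∧
      (zerosInDisc 0 b (discResultant F H 0 a)).card =
        analyticOrderNatAt (discResultant F H 0 a) 0 := by
  obtain ⟨b₀, hb₀, hfiber⟩ := nhds_basis_closedBall.eventually_iff.1 h.fiberAdmissible.eventually
  let b := min b₀ a
  have hba : b ≤ a := min_le_right _ _
  have hb : 0 < b := lt_min hb₀ h.radius_pos
  have hfiber : ∀ y ∈ closedBall 0 b, FiberAdmissible F 0 a y := fun y hy =>
    hfiber (closedBall_subset_closedBall (min_le_left _ _) hy)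
  have hH : ∀ y ∈ closedBall 0 b, ∀ x ∈ closedBall 0 a, AnalyticAt ℂ H (x, y) :=
    fun y hy x hx => h.analyticOnNhd_right _ (mk_mem_closedBall_zero hba hx hy)
  have hR : ∀ y ∈ closedBall 0 b, discResultant F H 0 a y = 0 → y = 0 := fun y hy hy0 => by
    obtain ⟨x, hx, hFx, hHx⟩ := (hfiber y hy).discResultant_eq_zero_iff.1 hy0
    exact congrArg Prod.snd (h.eq_zero (x, y)
      (mk_mem_closedBall_zero hba (ball_subset_closedBall hx) hy) hFx hHx)
  have hbidisc : BidiscAdmissible 0 a 0 b F H :=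
    ⟨hfiber, hH, hb, fun y hy => (hfiber y hy).analyticAt_discResultant (hH y hy),
      fun y hy hy0 => ne_of_mem_sphere hy hb.ne' (hR y (sphere_subset_closedBall hy) hy0)⟩
  exact ⟨b, hb, hba, hbidisc,
    hbidisc.discAdmissible.card_zerosInDisc_eq_analyticOrderNatAt (mem_ball_self hb)
      fun y hy => hR y (ball_subset_closedBall hy)⟩

theorem eventually_analyticOrderNatAt_le (h : IsolatesOrigin a F H)
    (hK : AnalyticOnNhd ℂ K (closedBall 0 a)) :
    ∀ᶠ t in 𝓝 (0 : ℂ), FiberAdmissible (fun p => F p + t * K p) 0 a 0 ∧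
      analyticOrderAt (discResultant (fun p => F p + t * K p) H 0 a) 0 ≠ ⊤ ∧
      analyticOrderNatAt (discResultant (fun p => F p + t * K p) H 0 a) 0 ≤
        analyticOrderNatAt (discResultant F H 0 a) 0 := by
  obtain ⟨b, hb, hba, hbidisc, hcard⟩ := h.exists_bidiscAdmissible
  have hstable := BidiscAdmissible.eventually (s₀ := (0 : ℂ))
    (f := fun e => F (e.1, e.2.1) + e.2.2 * K (e.1, e.2.1)) (h := fun e => H (e.1, e.2.1))
    (by simpa using hbidisc)
    (fun y hy x hx => (analyticAt_comp_fst_prodMk_snd h.analyticOnNhd_left hba hx hy 0).add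
      ((analyticAt_snd.comp analyticAt_snd).mul (analyticAt_comp_fst_prodMk_snd hK hba hx hy 0)))
    (fun y hy x hx => analyticAt_comp_fst_prodMk_snd h.analyticOnNhd_right hba hx hy 0)
  filter_upwards [hstable] with t ⟨ht, htcard⟩
  have htop := ht.discAdmissible.analyticOrderAt_ne_top (mem_closedBall_self hb.le)
  have hle := ht.analyticOrderNatAt_le_card (mem_ball_self hb)
  refine ⟨ht.fiberAdmissible 0 (mem_closedBall_self hb.le), htop, hle.trans_eq ?_⟩
  simpa [hcard] using htcard

lemma eventually_forall_mem_ball_prod (h : IsolatesOrigin a F H) {b : ℝ} (hb : 0 < b) :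
    ∀ᶠ q in 𝓝 (0 : ℂ × ℂ), ∀ p ∈ closedBall 0 a, (F p, H p) = q →
      p ∈ ball (0 : ℂ) a ×ˢ ball (0 : ℂ) b := by
  refine eventually_forall_mem_imp_of_isCompact (isCompact_closedBall 0 a) (fun p hp =>
    ((h.analyticOnNhd_left p hp).prod (h.analyticOnNhd_right p hp)).continuousAt) ?_
  intro p hp hFH
  obtain ⟨hFp, hHp⟩ := Prod.mk.inj hFH
  obtain rfl := h.eq_zero p hp hFp hHp
  exact prod_mem_nhds (ball_mem_nhds _ h.radius_pos) (ball_mem_nhds _ hb)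

theorem eventually_ncard_eq (h : IsolatesOrigin a F H) :
    ∀ᶠ q in 𝓝 (0 : ℂ × ℂ), (∀ p ∈ ball 0 a, (F p, H p) = q →
        Function.Injective (fderiv ℂ (fun p => (F p, H p)) p)) →
      {p ∈ ball 0 a | (F p, H p) = q}.ncard = analyticOrderNatAt (discResultant F H 0 a) 0 := by
  obtain ⟨b, hb, hba, hbidisc, hcard⟩ := h.exists_bidiscAdmissible
  have hF : ∀ y ∈ closedBall (0 : ℂ) b, ∀ x ∈ closedBall (0 : ℂ) a,
      AnalyticAt ℂ (fun e : ℂ × ℂ × ℂ × ℂ => F (e.1, e.2.1) - e.2.2.1) (x, y, 0) := fun y hy x hx =>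
    (analyticAt_comp_fst_prodMk_snd h.analyticOnNhd_left hba hx hy 0).sub
      (analyticAt_fst.comp (analyticAt_snd.comp analyticAt_snd))
  have hH : ∀ y ∈ closedBall (0 : ℂ) b, ∀ x ∈ closedBall (0 : ℂ) a,
      AnalyticAt ℂ (fun e : ℂ × ℂ × ℂ × ℂ => H (e.1, e.2.1) - e.2.2.2) (x, y, 0) := fun y hy x hx =>
    (analyticAt_comp_fst_prodMk_snd h.analyticOnNhd_right hba hx hy 0).sub
      (analyticAt_snd.comp (analyticAt_snd.comp analyticAt_snd))
  have hstable := BidiscAdmissible.eventually (by simpa using hbidisc) hF hH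
  have hsub : ball (0 : ℂ) a ×ˢ ball (0 : ℂ) b ⊆ ball 0 a := by
    rw [← Prod.mk_zero_zero, ← ball_prod_same]
    exact prod_mono_right (ball_subset_ball hba)
  filter_upwards [hstable, h.eventually_forall_mem_ball_prod hb] with q ⟨hq, hqcard⟩ hqlocal hinj
  have hset : {p ∈ ball 0 a | (F p, H p) = q} =
      {p ∈ ball (0 : ℂ) a ×ˢ ball (0 : ℂ) b | F p - q.1 = 0 ∧ H p - q.2 = 0} := by
    ext p
    simp only [mem_ofPred_eq, sub_eq_zero, Prod.ext_iff]
    exact ⟨fun ⟨hp, hpq⟩ => ⟨hqlocal p (ball_subset_closedBall hp) (Prod.ext hpq.1 hpq.2), hpq⟩,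
      fun ⟨hp, hpq⟩ => ⟨hsub hp, hpq⟩⟩
  rw [hset, ← hcard]
  refine (ncard_commonZeros_eq_card_zerosInDisc
    (fun y hy => hq.fiberAdmissible y (ball_subset_closedBall hy))
    (fun y hy => hq.analyticAt y (ball_subset_closedBall hy)) hq.discAdmissible ?_).trans
    (by simpa using hqcard)
  intro p hp hFp hHp
  have := hinj p (hsub hp) (Prod.ext (sub_eq_zero.1 hFp) (sub_eq_zero.1 hHp))
  rwa [← fderiv_sub_const q] at this

section Components

variable {m d : ℕ} {A B C D : ℂ × ℂ → ℂ}

-- If `B 0 = 0`, replace `B` by `B + t`, which can only decrease the multiplicity.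
theorem le_analyticOrderNatAt_discResultant (hd : 0 < d)
    (h : IsolatesOrigin a (firstComponent m d A B) (secondComponent m d C D))
    (hA : ContinuousAt A 0) (hB : ContinuousAt B 0) (hC : ContinuousAt C 0)
    (hD : ContinuousAt D 0) : d * m + m + 1 ≤ analyticOrderNatAt
      (discResultant (firstComponent m d A B) (secondComponent m d C D) 0 a) 0 := by
  have hperturb := h.eventually_analyticOrderNatAt_le (K := fun p => p.2 ^ d)
    fun p _ => analyticAt_snd.pow d
  obtain ⟨t, hBt, ⟨hF, htop, hle⟩⟩ :=
    (dense_compl_singleton (-B 0)).inter_nhds_nonempty hperturb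
  have hFt : (fun p => firstComponent m d A B p + t * p.2 ^ d) =
      firstComponent m d A (fun p => B p + t) := by
    funext p
    simp only [firstComponent]
    ring
  rw [hFt] at hF htop hle
  have haxis : ∀ x ∈ ball 0 a, firstComponent m d A (fun p => B p + t) (x, 0) = 0 → x = 0 :=
    fun x hx hx0 => h.eq_zero_of_axis x (ball_subset_closedBall hx) (by
      rwa [firstComponent_fst_zero hd] at hx0 ⊢)
  have hR : AnalyticAt ℂ (discResultant (firstComponent m d A fun p => B p + t)
      (secondComponent m d C D) 0 a) 0 :=
    hF.analyticAt_discResultant fun x hx => h.analyticOnNhd_right _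
      (mk_mem_closedBall_zero h.radius_pos.le hx (mem_closedBall_self le_rfl))
  refine le_trans (le_analyticOrderNatAt_of_isBigO hR htop ?_) hle
  simpa only [sub_zero] using discResultant_firstComponent_secondComponent_isBigO hd hF haxis hA
    (hB.add continuousAt_const) hC hD (fun hB0 => hBt (eq_neg_of_add_eq_zero_right hB0))

theorem analyticOrderNatAt_discResultant_eq (hd : 0 < d)
    (h : IsolatesOrigin a (firstComponent m d A B) (secondComponent m d C D))
    (hA : ContinuousAt A 0) (hB : ContinuousAt B 0) (hC : ContinuousAt C 0)
    (hD : ContinuousAt D 0) (hA0 : A 0 ≠ 0) (hB0 : B 0 ≠ 0) (hC0 : C 0 ≠ 0) :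
    analyticOrderNatAt
      (discResultant (firstComponent m d A B) (secondComponent m d C D) 0 a) 0 =
        d * m + m + 1 := by
  obtain ⟨b, hb, -, hbidisc, -⟩ := h.exists_bidiscAdmissible
  have h0 := mem_closedBall_self (x := (0 : ℂ)) hb.le
  refine analyticOrderNatAt_eq_of_isTheta (hbidisc.discAdmissible.analyticOnNhd 0 h0)
    (hbidisc.discAdmissible.analyticOrderAt_ne_top h0) ?_
  simpa only [sub_zero] using discResultant_firstComponent_secondComponent_isTheta hd
    h.fiberAdmissible (fun x hx => h.eq_zero_of_axis x (ball_subset_closedBall hx))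
    hA hB hC hD hA0 hB0 hC0

end Components

end IsolatesOrigin

/-! ### The zero order in two variables -/

section ZeroOrder

lemma dense_isRegularValueOn {g : Cn n → Cn n} {s : Set (Cn n)}
    (hg : ∀ x ∈ s, DifferentiableAt ℂ g x) : Dense {q | IsRegularValueOn g s q} := by
  have hnull : MeasureTheory.volume
      (g '' {x ∈ s | ¬Function.Bijective (fderiv ℂ g x)}) = 0 := by
    refine MeasureTheory.addHaar_image_eq_zero_of_det_fderivWithin_eq_zero MeasureTheory.volume
      (fun x hx => ((hg x hx.1).hasFDerivAt.restrictScalars ℝ).hasFDerivWithinAt) fun x hx => ?_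
    by_contra hdet
    exact hx.2 (LinearMap.equivOfDetNeZero
      (((fderiv ℂ g x).restrictScalars ℝ : Cn n →L[ℝ] Cn n) : Cn n →ₗ[ℝ] Cn n) hdet).bijective
  refine (MeasureTheory.Measure.dense_of_ae
    (MeasureTheory.measure_eq_zero_iff_ae_notMem.1 hnull)).mono fun q hq x hx hxq => ?_
  by_contra hbij
  exact hq ⟨x, ⟨hx, hbij⟩, hxq⟩

lemma HasZeroOrder.unique {g : Cn n → Cn n} {p : Cn n} {k l : ℕ} (hk : HasZeroOrder g p k)
    (hl : HasZeroOrder g p l) : k = l := by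
  obtain ⟨r, hr, hgr, -, hzr, hregr, δ, hδ, hkδ⟩ := hk
  obtain ⟨r', hr', hgr', -, hzr', hregr', δ', hδ', hlδ'⟩ := hl
  wlog hrr : r ≤ r' generalizing r r' k l δ δ'
  · exact (this r' hr' hgr' hzr' hregr' δ' hδ' hlδ' r hr hgr hzr hregr δ hδ hkδ (by order)).symm
  have hlocal : ∀ᶠ q in 𝓝 0, ∀ x ∈ closedBall p r', g x = q → x ∈ ball p r :=
    eventually_forall_mem_imp_of_isCompact (isCompact_closedBall p r')
      (fun x hx => (hgr' x hx).continuousAt) fun x hx hx0 => hzr' x hx hx0 ▸ ball_mem_nhds p hr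
  obtain ⟨ε, hε, hball⟩ := Metric.eventually_nhds_iff_ball.1 hlocal
  obtain ⟨q, hq, hreg⟩ := hregr' (min ε (min δ δ')) (lt_min hε (lt_min hδ hδ'))
  obtain ⟨hqε, hqδ, hqδ'⟩ : ‖q‖ < ε ∧ ‖q‖ < δ ∧ ‖q‖ < δ' := by simpa only [lt_min_iff] using hq
  have hsub : ball p r ⊆ ball p r' := ball_subset_ball hrr
  have hset : {x ∈ ball p r | g x = q} = {x ∈ ball p r' | g x = q} := by
    ext x
    exact ⟨fun hx => ⟨hsub hx.1, hx.2⟩, fun hx =>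
      ⟨hball q (mem_ball_zero_iff.2 hqε) x (ball_subset_closedBall hx.1) hx.2, hx.2⟩⟩
  rw [← hkδ q hqδ fun x hx => hreg x (hsub hx), hset, hlδ' q hqδ' hreg]

lemma HasZeroOrder.zeroOrder_eq {g : Cn n → Cn n} {p : Cn n} {k : ℕ} (h : HasZeroOrder g p k) :
    zeroOrder g p = k := by
  have hset : {l | HasZeroOrder g p l} = {k} :=
    eq_singleton_iff_unique_mem.2 ⟨h, fun l hl => hl.unique h⟩
  rw [zeroOrder, hset, csInf_singleton]

open ContinuousLinearEquiv (finTwoArrow)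

/-- The self-map of `ℂ²` with components `F` and `H`, given as functions on `ℂ × ℂ`. -/
def planarMap (F H : ℂ × ℂ → ℂ) : Cn 2 → Cn 2 :=
  (finTwoArrow ℂ ℂ).symm ∘ (fun p => (F p, H p)) ∘ finTwoArrow ℂ ℂ

variable {F H : ℂ × ℂ → ℂ} {a : ℝ}

lemma norm_finTwoArrow (x : Cn 2) : ‖finTwoArrow ℂ ℂ x‖ = ‖x‖ := by
  simpa [dist_eq_norm] using (IsometryEquiv.piFinTwo fun _ => ℂ).isometry.dist_eq x 0

lemma planarMap_eq_iff {x q : Cn 2} :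
    planarMap F H x = q ↔ (F (finTwoArrow ℂ ℂ x), H (finTwoArrow ℂ ℂ x)) = finTwoArrow ℂ ℂ q :=
  (finTwoArrow ℂ ℂ).symm_apply_eq

lemma analyticAt_planarMap {x : Cn 2} (hF : AnalyticAt ℂ F (finTwoArrow ℂ ℂ x))
    (hH : AnalyticAt ℂ H (finTwoArrow ℂ ℂ x)) : AnalyticAt ℂ (planarMap F H) x :=
  ((finTwoArrow ℂ ℂ).symm.analyticAt _).comp ((hF.prod hH).comp ((finTwoArrow ℂ ℂ).analyticAt x))

lemma injective_fderiv_prodMk_of_planarMap {p : ℂ × ℂ}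
    (h : Function.Injective (fderiv ℂ (planarMap F H) ((finTwoArrow ℂ ℂ).symm p))) :
    Function.Injective (fderiv ℂ (fun p => (F p, H p)) p) := by
  rw [planarMap, ContinuousLinearEquiv.comp_fderiv, ContinuousLinearEquiv.comp_right_fderiv,
    ContinuousLinearEquiv.apply_symm_apply] at h
  exact fun v w hvw => (finTwoArrow ℂ ℂ).symm.injective (h (by simp [hvw]))

theorem IsolatesOrigin.hasZeroOrder (h : IsolatesOrigin a F H) {g : Cn 2 → Cn 2} (hg0 : g 0 = 0)
    (hg : ∀ x ∈ closedBall 0 a, g =ᶠ[𝓝 x] planarMap F H) :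
    HasZeroOrder g 0 (analyticOrderNatAt (discResultant F H 0 a) 0) := by
  let e := finTwoArrow ℂ ℂ
  have he : ∀ x, e x ∈ closedBall 0 a ↔ x ∈ closedBall 0 a := fun x => by
    simp only [mem_closedBall_zero_iff, e, norm_finTwoArrow]
  have heb : ∀ x, e x ∈ ball 0 a ↔ x ∈ ball 0 a := fun x => by
    simp only [mem_ball_zero_iff, e, norm_finTwoArrow]
  have hgq : ∀ x ∈ closedBall 0 a, ∀ q, g x = q ↔ (F (e x), H (e x)) = e q := fun x hx q => by
    rw [(hg x hx).self_of_nhds, planarMap_eq_iff]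
  have hgan : AnalyticOnNhd ℂ g (closedBall 0 a) := fun x hx =>
    (analyticAt_planarMap (h.analyticOnNhd_left _ ((he x).2 hx))
      (h.analyticOnNhd_right _ ((he x).2 hx))).congr (hg x hx).symm
  have hzero : ∀ x ∈ closedBall 0 a, g x = 0 → x = 0 := fun x hx hx0 => by
    obtain ⟨hFx, hHx⟩ := Prod.mk.inj ((hgq x hx 0).1 hx0)
    exact e.map_eq_zero_iff.1 (h.eq_zero _ ((he x).2 hx) hFx hHx)
  have hregular : ∀ ε > 0, ∃ q, ‖q‖ < ε ∧ IsRegularValueOn g (ball 0 a) q := fun ε hε => by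
    obtain ⟨q, hq, hqε⟩ := (dense_isRegularValueOn fun x hx =>
      (hgan x (ball_subset_closedBall hx)).differentiableAt).inter_nhds_nonempty
        (ball_mem_nhds (0 : Cn 2) hε)
    exact ⟨q, mem_ball_zero_iff.1 hqε, hq⟩
  obtain ⟨δ, hδ, hcount⟩ := Metric.eventually_nhds_iff_ball.1
    ((e.continuous.tendsto' 0 0 (map_zero e)).eventually h.eventually_ncard_eq)
  refine ⟨a, h.radius_pos, hgan, hg0, hzero, hregular, δ, hδ, fun q hq hreg => ?_⟩
  have himage : e '' {x ∈ ball 0 a | g x = q} = {p ∈ ball 0 a | (F p, H p) = e q} := by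
    ext p
    obtain ⟨x, rfl⟩ := e.surjective p
    rw [e.injective.mem_set_image, mem_ofPred_eq, mem_ofPred_eq, heb]
    exact and_congr_right fun hx => hgq x (ball_subset_closedBall hx) q
  rw [← Set.ncard_image_of_injective _ e.injective, himage]
  refine hcount q (mem_ball_zero_iff.2 hq) fun p hp hpq => injective_fderiv_prodMk_of_planarMap ?_
  obtain ⟨x, rfl⟩ := e.surjective p
  have hx := (heb x).1 hp
  have hxc := ball_subset_closedBall hx
  rw [e.symm_apply_apply, ← (hg x hxc).fderiv_eq]
  exact (hreg x hx ((hgq x hxc q).2 hpq)).1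

lemma isolatedZeroAt0_iff {g : Cn 2 → Cn 2} (hg : g =ᶠ[𝓝 0] planarMap F H) :
    IsolatedZeroAt0 g ↔ g 0 = 0 ∧ ∀ᶠ p in 𝓝 0, F p = 0 → H p = 0 → p = 0 := by
  let e := finTwoArrow ℂ ℂ
  have he : map e (𝓝 0) = 𝓝 0 :=
    (e.toHomeomorph.map_nhds_eq 0).trans (congrArg 𝓝 (map_zero e))
  rw [IsolatedZeroAt0, eventually_nhdsWithin_iff, ← he, eventually_map]
  refine and_congr_right fun _ => eventually_congr (hg.mono fun x hx => ?_)
  rw [hx, Ne, planarMap_eq_iff, map_zero, Prod.mk_eq_zero, mem_compl_singleton_iff, not_imp_not,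
    and_imp, e.map_eq_zero_iff]

theorem exists_isolatesOrigin_hasZeroOrder {g : Cn 2 → Cn 2} (hF : AnalyticAt ℂ F 0)
    (hH : AnalyticAt ℂ H 0) (hH0 : ∀ x, H (x, 0) = 0) (hg : g =ᶠ[𝓝 0] planarMap F H)
    (hiso : IsolatedZeroAt0 g) : ∃ a, IsolatesOrigin a F H ∧
      HasZeroOrder g 0 (analyticOrderNatAt (discResultant F H 0 a) 0) := by
  obtain ⟨hg0, hzero⟩ := (isolatedZeroAt0_iff hg).1 hiso
  have haxis : ∀ᶠ x : ℂ in 𝓝 0, F (x, 0) = 0 → x = 0 := by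
    have htendsto : Tendsto (fun x : ℂ => (x, (0 : ℂ))) (𝓝 0) (𝓝 0) :=
      Continuous.tendsto' (by fun_prop) 0 0 rfl
    exact (htendsto.eventually hzero).mono fun x hx hFx => congrArg Prod.fst (hx hFx (hH0 x))
  obtain ⟨a, ha, hga⟩ := ((eventually_isolatesOrigin hF hH haxis hzero).and
    (nhdsWithin_le_nhds (eventually_closedBall_subset hg.eventually_nhds))).exists
  exact ⟨a, ha, ha.hasZeroOrder hg0 hga⟩

section Components

variable {m d : ℕ} {A B C D : ℂ × ℂ → ℂ} {g : Cn 2 → Cn 2}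

lemma eventually_eq_zero_of_firstComponent_secondComponent (hd : 0 < d)
    (hA : ContinuousAt A 0) (hB : ContinuousAt B 0) (hC : ContinuousAt C 0)
    (hD : ContinuousAt D 0) (hA0 : A 0 ≠ 0) (hB0 : B 0 ≠ 0) (hC0 : C 0 ≠ 0) :
    ∀ᶠ p in 𝓝 0, firstComponent m d A B p = 0 → secondComponent m d C D p = 0 → p = 0 := by
  have hcurve := (secondComponent_isTheta (m := m) (d := d) (A := A)
    (l := 𝓝 0 ⊓ 𝓟 {p | firstComponent m d A B p = 0}) inf_le_left
    (eventually_inf_principal.2 (.of_forall fun _ => id)) hA hB hC hD hB0 hC0).eq_zero_iff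
  filter_upwards [eventually_inf_principal.1 hcurve, hA.eventually_ne hA0, hB.eventually_ne hB0]
    with ⟨x, y⟩ hxy hAxy hBxy hF hH
  obtain hy | hx := mul_eq_zero.1 ((hxy hF).1 hH)
  · obtain rfl : y = 0 := hy
    rw [firstComponent_fst_zero hd] at hF
    exact Prod.ext (eq_zero_of_pow_eq_zero ((mul_eq_zero.1 hF).resolve_right hAxy)) rfl
  · obtain rfl : x = 0 := eq_zero_of_pow_eq_zero hx
    rw [firstComponent_zero_snd] at hF
    exact Prod.ext rfl (eq_zero_of_pow_eq_zero ((mul_eq_zero.1 hF).resolve_right hBxy))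

lemma analyticAt_firstComponent {p : ℂ × ℂ} (hA : AnalyticAt ℂ A p) (hB : AnalyticAt ℂ B p) :
    AnalyticAt ℂ (firstComponent m d A B) p :=
  ((analyticAt_fst.pow _).mul hA).add ((analyticAt_snd.pow _).mul hB)

lemma analyticAt_secondComponent {p : ℂ × ℂ} (hC : AnalyticAt ℂ C p) (hD : AnalyticAt ℂ D p) :
    AnalyticAt ℂ (secondComponent m d C D) p :=
  (((analyticAt_fst.pow _).mul analyticAt_snd).mul hC).add ((analyticAt_snd.pow _).mul hD)

lemma exists_isolatesOrigin_hasZeroOrder_components (hA : AnalyticAt ℂ A 0)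
    (hB : AnalyticAt ℂ B 0) (hC : AnalyticAt ℂ C 0) (hD : AnalyticAt ℂ D 0)
    (hg : g =ᶠ[𝓝 0] planarMap (firstComponent m d A B) (secondComponent m d C D))
    (hiso : IsolatedZeroAt0 g) :
    ∃ a, IsolatesOrigin a (firstComponent m d A B) (secondComponent m d C D) ∧
      HasZeroOrder g 0 (analyticOrderNatAt
        (discResultant (firstComponent m d A B) (secondComponent m d C D) 0 a) 0) :=
  exists_isolatesOrigin_hasZeroOrder (analyticAt_firstComponent hA hB)
    (analyticAt_secondComponent hC hD) (fun x => by simp [secondComponent]) hg hiso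

theorem le_zeroOrder_of_isolatedZeroAt0 (hd : 0 < d) (hA : AnalyticAt ℂ A 0)
    (hB : AnalyticAt ℂ B 0) (hC : AnalyticAt ℂ C 0) (hD : AnalyticAt ℂ D 0)
    (hg : g =ᶠ[𝓝 0] planarMap (firstComponent m d A B) (secondComponent m d C D))
    (hiso : IsolatedZeroAt0 g) : d * m + m + 1 ≤ zeroOrder g 0 := by
  obtain ⟨a, ha, horder⟩ := exists_isolatesOrigin_hasZeroOrder_components hA hB hC hD hg hiso
  rw [horder.zeroOrder_eq]
  exact ha.le_analyticOrderNatAt_discResultant hd hA.continuousAt hB.continuousAt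
    hC.continuousAt hD.continuousAt

theorem isolatedZeroAt0_of_components (hd : 0 < d) (hA : ContinuousAt A 0) (hB : ContinuousAt B 0)
    (hC : ContinuousAt C 0) (hD : ContinuousAt D 0) (hA0 : A 0 ≠ 0) (hB0 : B 0 ≠ 0)
    (hC0 : C 0 ≠ 0) (hg : g =ᶠ[𝓝 0] planarMap (firstComponent m d A B) (secondComponent m d C D)) :
    IsolatedZeroAt0 g := by
  refine (isolatedZeroAt0_iff hg).2 ⟨?_,
    eventually_eq_zero_of_firstComponent_secondComponent hd hA hB hC hD hA0 hB0 hC0⟩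
  rw [hg.self_of_nhds, planarMap_eq_iff]
  simp [firstComponent, secondComponent, hd.ne']

theorem zeroOrder_eq_of_isolatedZeroAt0 (hd : 0 < d) (hA : AnalyticAt ℂ A 0)
    (hB : AnalyticAt ℂ B 0) (hC : AnalyticAt ℂ C 0) (hD : AnalyticAt ℂ D 0)
    (hA0 : A 0 ≠ 0) (hB0 : B 0 ≠ 0) (hC0 : C 0 ≠ 0)
    (hg : g =ᶠ[𝓝 0] planarMap (firstComponent m d A B) (secondComponent m d C D))
    (hiso : IsolatedZeroAt0 g) : zeroOrder g 0 = d * m + m + 1 := by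
  obtain ⟨a, ha, horder⟩ := exists_isolatesOrigin_hasZeroOrder_components hA hB hC hD hg hiso
  rw [horder.zeroOrder_eq]
  exact ha.analyticOrderNatAt_discResultant_eq hd hA.continuousAt hB.continuousAt
    hC.continuousAt hD.continuousAt hA0 hB0 hC0

end Components

end ZeroOrder

/-- Cronin-type computation: for
`g₁ = x₁^{m₁+1}(a₁ + o(1)) + x₂^d(a₂ + o(1))`,
`g₂ = x₁^{m₁} x₂ (a₃ + o(1)) + x₂^{d+1} O(1)`:
if `0` is an isolated zero of `g` then `π_g(0) ≥ d m₁ + m₁ + 1`, and if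
`a₁, a₂, a₃ ≠ 0` then `0` is an isolated zero of `g` and `π_g(0) = d m₁ + m₁ + 1`. -/
theorem zeroOrder_corollary_one (d m₁ : ℕ) (hd : 0 < d) (hm : 0 < m₁)
    (a₁ a₂ a₃ : ℂ) (g : Cn 2 → Cn 2)
    (u₁ u₂ u₃ v : Cn 2 → ℂ)
    (hu₁ : AnalyticAt ℂ u₁ 0) (hu₁0 : u₁ 0 = 0)
    (hu₂ : AnalyticAt ℂ u₂ 0) (hu₂0 : u₂ 0 = 0)
    (hu₃ : AnalyticAt ℂ u₃ 0) (hu₃0 : u₃ 0 = 0)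
    (hv : AnalyticAt ℂ v 0)
    (hform : ∀ᶠ x in 𝓝 (0 : Cn 2),
      g x = ![x 0 ^ (m₁ + 1) * (a₁ + u₁ x) + x 1 ^ d * (a₂ + u₂ x),
              x 0 ^ m₁ * x 1 * (a₃ + u₃ x) + x 1 ^ (d + 1) * v x]) :
    (IsolatedZeroAt0 g → d * m₁ + m₁ + 1 ≤ zeroOrder g 0) ∧
    (a₁ ≠ 0 → a₂ ≠ 0 → a₃ ≠ 0 →
      IsolatedZeroAt0 g ∧ zeroOrder g 0 = d * m₁ + m₁ + 1) := by
  let e := ContinuousLinearEquiv.finTwoArrow ℂ ℂ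
  have hcomp {u : Cn 2 → ℂ} (hu : AnalyticAt ℂ u 0) : AnalyticAt ℂ (fun p => u (e.symm p)) 0 :=
    AnalyticAt.fun_comp (f := e.symm) (by rwa [map_zero]) (e.symm.analyticAt 0)
  have hA : AnalyticAt ℂ (fun p => a₁ + u₁ (e.symm p)) 0 := analyticAt_const.add (hcomp hu₁)
  have hB : AnalyticAt ℂ (fun p => a₂ + u₂ (e.symm p)) 0 := analyticAt_const.add (hcomp hu₂)
  have hC : AnalyticAt ℂ (fun p => a₃ + u₃ (e.symm p)) 0 := analyticAt_const.add (hcomp hu₃)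
  have hD := hcomp hv
  have hg : g =ᶠ[𝓝 0] planarMap
      (firstComponent m₁ d (fun p => a₁ + u₁ (e.symm p)) fun p => a₂ + u₂ (e.symm p))
      (secondComponent m₁ d (fun p => a₃ + u₃ (e.symm p)) fun p => v (e.symm p)) :=
    hform.mono fun x hx => by
      rw [hx, eq_comm, planarMap_eq_iff]
      simp only [firstComponent, secondComponent, e, ContinuousLinearEquiv.symm_apply_apply]
      rfl
  refine ⟨le_zeroOrder_of_isolatedZeroAt0 hd hA hB hC hD hg, fun ha₁ ha₂ ha₃ => ?_⟩
  have hA0 : a₁ + u₁ (e.symm 0) ≠ 0 := by rwa [map_zero, hu₁0, add_zero]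
  have hB0 : a₂ + u₂ (e.symm 0) ≠ 0 := by rwa [map_zero, hu₂0, add_zero]
  have hC0 : a₃ + u₃ (e.symm 0) ≠ 0 := by rwa [map_zero, hu₃0, add_zero]
  have hiso := isolatedZeroAt0_of_components hd hA.continuousAt hB.continuousAt hC.continuousAt
    hD.continuousAt hA0 hB0 hC0 hg
  exact ⟨hiso, zeroOrder_eq_of_isolatedZeroAt0 hd hA hB hC hD hA0 hB0 hC0 hg hiso⟩

end ZhangPaper
end
end

section
/- Let m be a positive integer, let a and b be complex constants, and let g = (g₁,g₂) ∈ 𝒪(ℂ²,0,0) be given by g₁(x₁,x₂) = x₁^m(a + o(1)) + x₂·O(1) and g₂(x₁,x₂) = x₂(b + o(1)) + x₁^m·o(1). If the origin is an isolated zero of g, then π_g(0) ≥ m. If a ≠ 0 and b ≠ 0, then the origin is an isolated zero of g and π_g(0) = m. -/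
open Metric Set Filter Topology Polynomial Asymptotics
open scoped Classical

noncomputable section

namespace ZhangPaper

variable {n : ℕ}

/-!
For holomorphic `f` and a bump function `φ`, the integral `∫ φ (f x - q) ‖det Df(x)‖² dx` counts the
preimages of a regular value `q`, weighted by `∫ φ`. Its derivative in the direction `v` of `q` is
the integral of a divergence: by Piola's identity the field `adj (Df) v` is divergence-free, the
antiholomorphic factor `conj (det Df)` does not disturb this, and `Df (adj (Df) v) = det Df • v`.
Hence the number of preimages is locally constant on regular values. Applied to the map
`(s, x) ↦ (s, h (s, x))` of one more variable, this shows that the number is also stable along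
holomorphic families, so that the zero order exists and can only drop under a perturbation.

When `a` and `b` are nonzero, there are a chart `ψ` and a germ `k` with
`g = (ψ₁ ^ m + k ψ₂, ψ₂)`, so that `(t ^ m, 0)` has exactly `m` preimages near the origin. In
general, adding `s (x₁ ^ m, x₂)` to `g` replaces `a` and `b` by `a + s` and `b + s`, which are both
nonzero for small `s ≠ 0`.
-/

section CofactorField

theorem sum_sum_map_update_update_eq_zero {R ι M N : Type*} [CommRing R] [Fintype ι]
    [DecidableEq ι] [AddCommGroup M] [Module R M] [AddCommGroup N] [Module R N]
    (D : M [⋀^ι]→ₗ[R] N) (r : ι → M) (v : M) {B : ι → ι → M} (hB : ∀ j l, B j l = B l j)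
    (hB₀ : ∀ j, B j j = 0) :
    ∑ j, ∑ l, D (Function.update (Function.update r j v) l (B j l)) = 0 := by
  have hdiag : ∀ j, D (Function.update (Function.update r j v) j (B j j)) = 0 := fun j =>
    D.map_coord_zero j (by simp [hB₀])
  rw [← Fintype.sum_prod_type
    (f := fun p : ι × ι => D (Function.update (Function.update r p.1 v) p.2 (B p.1 p.2)))]
  refine Finset.sum_involution (fun p _ => p.swap) ?_ ?_ (by simp) (by simp)
  · rintro ⟨j, l⟩ -
    rcases eq_or_ne j l with rfl | hjl
    · simp only [Prod.swap_prod_mk, hdiag, add_zero]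
    rw [← D.map_add_swap _ hjl]
    congr 2
    ext i
    rcases eq_or_ne i j with rfl | hij
    · simp [hB]
    · rcases eq_or_ne i l with rfl | hil
      · simp [hjl, hjl.symm]
      · simp [Equiv.swap_apply_of_ne_of_ne hij hil, hij, hil]
  · rintro ⟨j, l⟩ - h heq
    obtain rfl : l = j := congrArg Prod.fst heq
    exact h (hdiag l)

/-- The vector field `x ↦ adj (Df x) v`, where `adj` is the adjugate matrix. -/
def cofactorField (f : Cn n → Cn n) (v x : Cn n) : Cn n :=
  (LinearMap.toMatrix' (fderiv ℂ f x : Cn n →ₗ[ℂ] Cn n)).cramer v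

theorem fderiv_cofactorField_apply (f : Cn n → Cn n) (v x : Cn n) :
    fderiv ℂ f x (cofactorField f v x) = (fderiv ℂ f x).det • v := by
  have h := Matrix.mulVec_cramer (LinearMap.toMatrix' (fderiv ℂ f x : Cn n →ₗ[ℂ] Cn n)) v
  rwa [LinearMap.toMatrix'_mulVec, LinearMap.det_toMatrix'] at h

theorem transpose_toMatrix'_fderiv (f : Cn n → Cn n) (x : Cn n) :
    (LinearMap.toMatrix' (fderiv ℂ f x : Cn n →ₗ[ℂ] Cn n)).transpose =
      fun l => fderiv ℂ f x (Pi.single l 1) := by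
  ext l i
  simp [LinearMap.toMatrix'_apply]

/-- The determinant as a continuous multilinear function of the rows. -/
def detRow (n : ℕ) : ContinuousMultilinearMap ℂ (fun _ : Fin n => Cn n) ℂ where
  toMultilinearMap := (Matrix.detRowAlternating (R := ℂ) (n := Fin n)).toMultilinearMap
  cont := (continuous_id (X := Matrix (Fin n) (Fin n) ℂ)).matrix_det

theorem det_fderiv_eq_detRow (f : Cn n → Cn n) (x : Cn n) :
    (fderiv ℂ f x).det = detRow n fun l => fderiv ℂ f x (Pi.single l 1) := by
  rw [← transpose_toMatrix'_fderiv]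
  exact (LinearMap.det_toMatrix' _).symm.trans (Matrix.det_transpose _).symm

theorem cofactorField_apply (f : Cn n → Cn n) (v x : Cn n) (j : Fin n) :
    cofactorField f v x j =
      detRow n (Function.update (fun l => fderiv ℂ f x (Pi.single l 1)) j v) := by
  rw [cofactorField, ← Matrix.transpose_transpose (LinearMap.toMatrix' _),
    Matrix.cramer_transpose_apply, transpose_toMatrix'_fderiv]
  rfl

theorem analyticAt_fderiv_apply {f : Cn n → Cn n} {x : Cn n} (hf : AnalyticAt ℂ f x)
    (w : Cn n) : AnalyticAt ℂ (fun y => fderiv ℂ f y w) x :=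
  ((ContinuousLinearMap.apply ℂ (Cn n) w).analyticAt _).comp hf.fderiv

theorem analyticAt_det_fderiv {f : Cn n → Cn n} {x : Cn n} (hf : AnalyticAt ℂ f x) :
    AnalyticAt ℂ (fun y => (fderiv ℂ f y).det) x := by
  simp only [det_fderiv_eq_detRow]
  exact ((detRow n).cpolynomialAt.analyticAt).comp
    (analyticAt_pi_iff.mpr fun l => analyticAt_fderiv_apply hf _)

theorem analyticAt_cofactorField_apply {f : Cn n → Cn n} {x : Cn n} (hf : AnalyticAt ℂ f x)
    (v : Cn n) (j : Fin n) : AnalyticAt ℂ (fun y => cofactorField f v y j) x := by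
  simp only [cofactorField_apply]
  refine ((detRow n).cpolynomialAt.analyticAt).comp (analyticAt_pi_iff.mpr fun l => ?_)
  rcases eq_or_ne l j with rfl | hlj
  · simpa using analyticAt_const
  · simpa [hlj] using analyticAt_fderiv_apply hf _

theorem hasFDerivAt_cofactorField_apply {f : Cn n → Cn n} {x : Cn n} (hf : AnalyticAt ℂ f x)
    (v : Cn n) (j : Fin n) : HasFDerivAt (fun y => cofactorField f v y j)
      (∑ l, (detRow n).toContinuousLinearMap
        (Function.update (fun l => fderiv ℂ f x (Pi.single l 1)) j v) l ∘L
          if l = j then 0 else (fderiv ℂ (fderiv ℂ f) x).flip (Pi.single l 1)) x := by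
  have hcol : ∀ l, HasFDerivAt
      (fun y => Function.update (fun l => fderiv ℂ f y (Pi.single l 1)) j v l)
      (if l = j then 0 else (fderiv ℂ (fderiv ℂ f) x).flip (Pi.single l 1)) x := by
    intro l
    rcases eq_or_ne l j with rfl | hlj
    · simpa using hasFDerivAt_const (𝕜 := ℂ) v x
    · have h := hf.fderiv.differentiableAt.hasFDerivAt.clm_apply
        (hasFDerivAt_const (Pi.single l (1 : ℂ) : Cn n) x)
      simpa [hlj] using h
  have h := HasFDerivAt.multilinear_comp (f := detRow n) hcol
  simpa only [← cofactorField_apply] using h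

theorem sum_fderiv_cofactorField_eq_zero {f : Cn n → Cn n} {x : Cn n} (hf : AnalyticAt ℂ f x)
    (v : Cn n) :
    ∑ j, fderiv ℂ (fun y => cofactorField f v y j) x (Pi.single j 1) = 0 := by
  have hsymm : ∀ j l : Fin n, fderiv ℂ (fderiv ℂ f) x (Pi.single j 1) (Pi.single l 1) =
      fderiv ℂ (fderiv ℂ f) x (Pi.single l 1) (Pi.single j 1) := fun j l =>
    (hf.contDiffAt (n := ⊤)).isSymmSndFDerivAt_of_omega _ _
  rw [← sum_sum_map_update_update_eq_zero Matrix.detRowAlternating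
    (fun l => fderiv ℂ f x (Pi.single l 1)) v (B := fun j l => if l = j then 0 else
      fderiv ℂ (fderiv ℂ f) x (Pi.single j 1) (Pi.single l 1))
    (fun j l => by simp only [hsymm j l, eq_comm]) (fun j => if_pos rfl)]
  refine Finset.sum_congr rfl fun j _ => ?_
  rw [(hasFDerivAt_cofactorField_apply hf v j).fderiv, sum_apply]
  refine Finset.sum_congr rfl fun l _ => ?_
  rcases eq_or_ne l j with rfl | hlj
  · simp
  · simp only [hlj, if_false]
    rfl

end CofactorField

section Wirtinger

variable {E : Type*} [NormedAddCommGroup E] [NormedSpace ℂ E]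

/-- The complex-linear part of the real derivative `Dh(x)`, doubled: its value at the `j`-th basis
vector is `2 ∂h/∂z_j`. -/
def wirtinger (h : E → ℂ) (x : E) : E →ₗ[ℂ] ℂ where
  toFun w := fderiv ℝ h x w - Complex.I * fderiv ℝ h x (Complex.I • w)
  map_add' w w' := by
    simp only [smul_add, map_add]
    ring
  map_smul' c w := by
    have hw : c • w = c.re • w + c.im • Complex.I • w := by
      conv_lhs => rw [← Complex.re_add_im c]
      rw [add_smul, mul_smul, Complex.coe_smul, Complex.coe_smul]
    have hIw : Complex.I • c • w = c.re • Complex.I • w - c.im • w := by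
      rw [hw, smul_add, smul_comm _ c.re, smul_comm _ c.im, smul_smul Complex.I Complex.I,
        Complex.I_mul_I, neg_one_smul, smul_neg, sub_eq_add_neg]
    rw [hIw, hw]
    simp only [map_add, map_sub, map_smul, Complex.real_smul, RingHom.id_apply, smul_eq_mul]
    linear_combination (fderiv ℝ h x w - Complex.I * fderiv ℝ h x (Complex.I • w)) *
      Complex.re_add_im c + c.im * fderiv ℝ h x (Complex.I • w) * Complex.I_mul_I

theorem wirtinger_apply (h : E → ℂ) (x w : E) :
    wirtinger h x w = fderiv ℝ h x w - Complex.I * fderiv ℝ h x (Complex.I • w) := rfl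

theorem wirtinger_congr {h k : E → ℂ} {x : E} (hk : h =ᶠ[𝓝 x] k) :
    wirtinger h x = wirtinger k x := by
  ext w
  simp only [wirtinger_apply, hk.fderiv_eq]

theorem wirtinger_mul {h k : E → ℂ} {x : E} (hh : DifferentiableAt ℝ h x)
    (hk : DifferentiableAt ℝ k x) :
    wirtinger (fun y => h y * k y) x = h x • wirtinger k x + k x • wirtinger h x := by
  ext w
  simp only [wirtinger_apply, fderiv_fun_mul hh hk, add_apply,
    smul_apply, LinearMap.add_apply,
    LinearMap.smul_apply, smul_eq_mul]
  ring

theorem wirtinger_of_differentiableAt {h : E → ℂ} {x : E} (hh : DifferentiableAt ℂ h x) (w : E) :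
    wirtinger h x w = 2 * fderiv ℂ h x w := by
  rw [wirtinger_apply, hh.fderiv_restrictScalars ℝ]
  simp only [ContinuousLinearMap.coe_restrictScalars', map_smul, smul_eq_mul]
  linear_combination (-fderiv ℂ h x w) * Complex.I_mul_I

theorem wirtinger_conj {h : E → ℂ} {x : E} (hh : DifferentiableAt ℂ h x) :
    wirtinger (fun y => (starRingEnd ℂ) (h y)) x = 0 := by
  ext w
  have hd : HasFDerivAt (fun y => (starRingEnd ℂ) (h y))
      (Complex.conjCLE.toContinuousLinearMap ∘L (fderiv ℂ h x).restrictScalars ℝ) x :=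
    Complex.conjCLE.toContinuousLinearMap.hasFDerivAt.comp x
      (hh.hasFDerivAt.restrictScalars ℝ)
  rw [wirtinger_apply, hd.fderiv]
  simp only [ContinuousLinearMap.comp_apply, ContinuousLinearMap.coe_restrictScalars', map_smul,
    smul_eq_mul, ContinuousLinearEquiv.coe_coe, Complex.conjCLE_apply, map_mul, Complex.conj_I,
    LinearMap.zero_apply]
  linear_combination (starRingEnd ℂ) (fderiv ℂ h x w) * Complex.I_mul_I

theorem wirtinger_comp {F : Type*} [NormedAddCommGroup F] [NormedSpace ℂ F] {Φ : F → ℂ} {f : E → F}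
    {x : E} (hΦ : DifferentiableAt ℝ Φ (f x)) (hf : DifferentiableAt ℂ f x) (w : E) :
    wirtinger (fun y => Φ (f y)) x w = wirtinger Φ (f x) (fderiv ℂ f x w) := by
  have hd : HasFDerivAt (fun y => Φ (f y))
      (fderiv ℝ Φ (f x) ∘L (fderiv ℂ f x).restrictScalars ℝ) x :=
    hΦ.hasFDerivAt.comp x (hf.hasFDerivAt.restrictScalars ℝ)
  rw [wirtinger_apply, wirtinger_apply, hd.fderiv]
  simp

end Wirtinger

section CompactSupport

variable {E G : Type*} [NormedAddCommGroup E] [MeasurableSpace E] [BorelSpace E]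
  [NormedAddCommGroup G] [NormedSpace ℝ G] {μ : MeasureTheory.Measure E}

theorem integrable_fderiv_apply [NormedSpace ℝ E] [MeasureTheory.IsFiniteMeasureOnCompacts μ]
    {h : E → G} (hh : ContDiff ℝ 1 h) (hc : HasCompactSupport h) (v : E) :
    MeasureTheory.Integrable (fun x => fderiv ℝ h x v) μ :=
  ((hh.continuous_fderiv one_ne_zero).clm_apply continuous_const).integrable_of_hasCompactSupport
    (hc.fderiv_apply ℝ v)

theorem integral_fderiv_apply_eq_zero [NormedSpace ℝ E] [FiniteDimensional ℝ E]
    [μ.IsAddHaarMeasure] {h : E → G} (hh : ContDiff ℝ 1 h) (hc : HasCompactSupport h) (v : E) :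
    ∫ x, fderiv ℝ h x v ∂μ = 0 := by
  simpa using integral_smul_fderiv_eq_neg_fderiv_smul_of_integrable (μ := μ)
    (f := fun _ : E => (1 : ℝ)) (g := h) (v := v) (by simp)
    (by simpa using integrable_fderiv_apply hh hc v)
    (by simpa using hh.continuous.integrable_of_hasCompactSupport hc) (by fun_prop)
    fun x _ => hh.differentiable one_ne_zero x

variable [NormedSpace ℂ E] {h : E → ℂ}

theorem integrable_wirtinger [MeasureTheory.IsFiniteMeasureOnCompacts μ] (hh : ContDiff ℝ 1 h)
    (hc : HasCompactSupport h) (w : E) :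
    MeasureTheory.Integrable (fun x => wirtinger h x w) μ :=
  (integrable_fderiv_apply hh hc w).sub ((integrable_fderiv_apply hh hc _).const_mul _)

theorem integral_wirtinger_eq_zero [FiniteDimensional ℝ E] [μ.IsAddHaarMeasure]
    (hh : ContDiff ℝ 1 h) (hc : HasCompactSupport h) (w : E) :
    ∫ x, wirtinger h x w ∂μ = 0 := by
  simp only [wirtinger_apply]
  rw [MeasureTheory.integral_sub (integrable_fderiv_apply hh hc w)
      ((integrable_fderiv_apply hh hc _).const_mul _), MeasureTheory.integral_const_mul,
    integral_fderiv_apply_eq_zero hh hc, integral_fderiv_apply_eq_zero hh hc, mul_zero, sub_zero]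

end CompactSupport

section Degree

theorem sum_wirtinger_mul_cofactorField {f : Cn n → Cn n} {x : Cn n} (hf : AnalyticAt ℂ f x)
    {u : Cn n → ℂ} (hu : DifferentiableAt ℝ u x) (v : Cn n) :
    ∑ j, wirtinger (fun y => u y * cofactorField f v y j) x (Pi.single j 1) =
      wirtinger u x (cofactorField f v x) := by
  have hY : ∀ j, DifferentiableAt ℂ (fun y => cofactorField f v y j) x := fun j =>
    (analyticAt_cofactorField_apply hf v j).differentiableAt
  have hterm : ∀ j, wirtinger (fun y => u y * cofactorField f v y j) x (Pi.single j 1) =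
      2 * u x * fderiv ℂ (fun y => cofactorField f v y j) x (Pi.single j 1) +
        wirtinger u x (cofactorField f v x j • Pi.single j 1) := fun j => by
    rw [wirtinger_mul hu ((hY j).restrictScalars ℝ), LinearMap.add_apply, LinearMap.smul_apply,
      wirtinger_of_differentiableAt (hY j), map_smul, LinearMap.smul_apply, smul_eq_mul]
    ring
  simp only [hterm, Finset.sum_add_distrib, ← Finset.mul_sum, sum_fderiv_cofactorField_eq_zero hf,
    mul_zero, zero_add, ← map_sum]
  rw [← pi_eq_sum_univ' (cofactorField f v x)]

theorem sum_wirtinger_comp_mul_conj_det {f : Cn n → Cn n} {x : Cn n}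
    (hf : AnalyticAt ℂ f x) {Φ : Cn n → ℂ} (hΦ : DifferentiableAt ℝ Φ (f x)) (v : Cn n) :
    ∑ j, wirtinger
      (fun y => Φ (f y) * (starRingEnd ℂ) (fderiv ℂ f y).det * cofactorField f v y j) x
      (Pi.single j 1) = ‖(fderiv ℂ f x).det‖ ^ 2 * wirtinger Φ (f x) v := by
  have hdet := (analyticAt_det_fderiv hf).differentiableAt
  have hΦf : DifferentiableAt ℝ (fun y => Φ (f y)) x :=
    hΦ.comp x (hf.differentiableAt.restrictScalars ℝ)
  have hconj : DifferentiableAt ℝ (fun y => (starRingEnd ℂ) (fderiv ℂ f y).det) x :=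
    Complex.conjCLE.differentiableAt.comp x (hdet.restrictScalars ℝ)
  rw [sum_wirtinger_mul_cofactorField hf (hΦf.fun_mul hconj), wirtinger_mul hΦf hconj,
    wirtinger_conj hdet, smul_zero, zero_add, LinearMap.smul_apply,
    wirtinger_comp hΦ hf.differentiableAt, fderiv_cofactorField_apply, map_smul, smul_smul,
    Complex.conj_mul', smul_eq_mul]

theorem contDiffAt_comp_mul_conj_det_mul_cofactorField {f : Cn n → Cn n} {x : Cn n}
    (hf : AnalyticAt ℂ f x) {Φ : Cn n → ℂ} (hΦ : ContDiffAt ℝ 1 Φ (f x)) (v : Cn n) (j : Fin n) :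
    ContDiffAt ℝ 1
      (fun y => Φ (f y) * (starRingEnd ℂ) (fderiv ℂ f y).det * cofactorField f v y j) x :=
  ((hΦ.comp x hf.restrictScalars.contDiffAt).mul (Complex.conjCLE.contDiff.contDiffAt.comp x
    (analyticAt_det_fderiv hf).restrictScalars.contDiffAt)).mul
    (analyticAt_cofactorField_apply hf v j).restrictScalars.contDiffAt

/- The integrand is the divergence of the compactly supported field
`Φ (f x) * conj (det Df(x)) * adj (Df(x)) v`. -/
theorem setIntegral_wirtinger_eq_zero {f : Cn n → Cn n} {U : Set (Cn n)}
    (hU : IsOpen U) (hf : AnalyticOnNhd ℂ f U) {Φ : Cn n → ℂ} (hΦ : ContDiff ℝ 1 Φ)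
    (hK : IsCompact (U ∩ f ⁻¹' tsupport Φ)) (v : Cn n) :
    ∫ x in U, (‖(fderiv ℂ f x).det‖ ^ 2 : ℂ) * wirtinger Φ (f x) v = 0 := by
  let X : Fin n → Cn n → ℂ := fun j => U.indicator fun y =>
    Φ (f y) * (starRingEnd ℂ) (fderiv ℂ f y).det * cofactorField f v y j
  have hX_zero : ∀ j, ∀ x ∉ U ∩ f ⁻¹' tsupport Φ, X j x = 0 := fun j x hx => by
    by_cases hxU : x ∈ U
    · simp [X, hxU, image_eq_zero_of_notMem_tsupport fun h => hx ⟨hxU, h⟩]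
    · simp [X, hxU]
  have hX_supp : ∀ j, HasCompactSupport (X j) := fun j => .intro hK (hX_zero j)
  have hX_eq : ∀ j, ∀ x ∈ U, X j =ᶠ[𝓝 x] fun y =>
      Φ (f y) * (starRingEnd ℂ) (fderiv ℂ f y).det * cofactorField f v y j := fun j x hx => by
    filter_upwards [hU.mem_nhds hx] with y hy using indicator_of_mem hy _
  have hX_eq_zero : ∀ j, ∀ x ∉ U, X j =ᶠ[𝓝 x] fun _ => 0 := fun j x hx => by
    filter_upwards [hK.isClosed.isOpen_compl.mem_nhds fun h => hx h.1] with y hy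
      using hX_zero j y hy
  have hX : ∀ j, ContDiff ℝ 1 (X j) := fun j => contDiff_iff_contDiffAt.mpr fun x => by
    by_cases hx : x ∈ U
    · exact (contDiffAt_comp_mul_conj_det_mul_cofactorField (hf x hx) hΦ.contDiffAt v j)
        |>.congr_of_eventuallyEq (hX_eq j x hx)
    · exact contDiffAt_const.congr_of_eventuallyEq (hX_eq_zero j x hx)
  have hsum : ∀ x, ∑ j, wirtinger (X j) x (Pi.single j 1) =
      U.indicator (fun x => (‖(fderiv ℂ f x).det‖ ^ 2 : ℂ) * wirtinger Φ (f x) v) x := fun x => by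
    by_cases hx : x ∈ U
    · rw [indicator_of_mem hx, ← sum_wirtinger_comp_mul_conj_det (hf x hx)
        (hΦ.differentiable one_ne_zero _)]
      exact Finset.sum_congr rfl fun j _ => by rw [wirtinger_congr (hX_eq j x hx)]
    · rw [indicator_of_notMem hx]
      refine Finset.sum_eq_zero fun j _ => ?_
      rw [wirtinger_congr (hX_eq_zero j x hx), wirtinger_apply]
      simp
  rw [← MeasureTheory.integral_indicator hU.measurableSet, ← funext hsum,
    MeasureTheory.integral_finsetSum _ fun j _ => integrable_wirtinger (hX j) (hX_supp j) _]
  exact Finset.sum_eq_zero fun j _ => integral_wirtinger_eq_zero (hX j) (hX_supp j) _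

theorem isCompact_inter_preimage_of_subset {X Y : Type*} [TopologicalSpace X] [T2Space X]
    [TopologicalSpace Y] {f : X → Y} {U : Set X} {C T : Set Y} (hf : ContinuousOn f U)
    (hC : IsCompact (U ∩ f ⁻¹' C)) (hT : IsClosed T) (hTC : T ⊆ C) :
    IsCompact (U ∩ f ⁻¹' T) := by
  have hclosed := (hf.mono inter_subset_left).preimage_isClosed_of_isClosed hC.isClosed hT
  refine hC.of_isClosed_subset ?_ (inter_subset_inter_right _ (preimage_mono hTC))
  convert hclosed using 1
  exact Set.ext fun x => ⟨fun hx => ⟨⟨hx.1, hTC hx.2⟩, hx.2⟩, fun hx => ⟨hx.1.1, hx.2⟩⟩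

theorem continuousOn_norm_det_fderiv_sq {f : Cn n → Cn n} {U : Set (Cn n)}
    (hf : AnalyticOnNhd ℂ f U) : ContinuousOn (fun x => ‖(fderiv ℂ f x).det‖ ^ 2) U :=
  fun x hx => ((analyticAt_det_fderiv (hf x hx)).continuousAt.norm.pow 2).continuousWithinAt

theorem setIntegral_fderiv_eq_zero {f : Cn n → Cn n} {U : Set (Cn n)}
    (hU : IsOpen U) (hf : AnalyticOnNhd ℂ f U) {φ : Cn n → ℝ} (hφ : ContDiff ℝ 1 φ)
    (hK : IsCompact (U ∩ f ⁻¹' tsupport φ)) (v : Cn n) :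
    ∫ x in U, ‖(fderiv ℂ f x).det‖ ^ 2 * fderiv ℝ φ (f x) v = 0 := by
  let Φ : Cn n → ℂ := fun y => φ y
  have hΦ : ContDiff ℝ 1 Φ := Complex.ofRealCLM.contDiff.comp hφ
  have hsupp : tsupport Φ = tsupport φ := by
    simp only [tsupport, Φ, Function.support, ne_eq, Complex.ofReal_eq_zero]
  have hre : ∀ x, ‖(fderiv ℂ f x).det‖ ^ 2 * fderiv ℝ φ (f x) v =
      RCLike.re ((‖(fderiv ℂ f x).det‖ ^ 2 : ℂ) * wirtinger Φ (f x) v) := fun x => by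
    have hd : fderiv ℝ Φ (f x) = Complex.ofRealCLM ∘L fderiv ℝ φ (f x) :=
      (Complex.ofRealCLM.hasFDerivAt.comp _
        (hφ.differentiable one_ne_zero _).hasFDerivAt).fderiv
    rw [wirtinger_apply, hd, ← Complex.ofReal_pow, RCLike.re_to_complex, Complex.re_ofReal_mul]
    simp
  have hcont : Continuous fun y => wirtinger Φ y v := by
    have hΦ' := hΦ.continuous_fderiv one_ne_zero
    exact (hΦ'.clm_apply continuous_const).sub
      (continuous_const.mul (hΦ'.clm_apply continuous_const))
  have hint : MeasureTheory.IntegrableOn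
      (fun x => (‖(fderiv ℂ f x).det‖ ^ 2 : ℂ) * wirtinger Φ (f x) v) U := by
    refine .of_forall_sdiff_eq_zero (s := U ∩ f ⁻¹' tsupport φ) ?_ hU.measurableSet ?_
    · refine ContinuousOn.integrableOn_compact hK
        (ContinuousOn.mul ?_ (hcont.comp_continuousOn (hf.continuousOn.mono inter_subset_left)))
      exact_mod_cast Complex.continuous_ofReal.comp_continuousOn
        ((continuousOn_norm_det_fderiv_sq hf).mono inter_subset_left)
    · intro x hx
      have hx : f x ∉ tsupport Φ := fun h => hx.2 ⟨hx.1, hsupp ▸ h⟩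
      rw [wirtinger_apply,
        image_eq_zero_of_notMem_tsupport fun h => hx (tsupport_fderiv_subset ℝ h)]
      simp
  simp only [hre]
  rw [integral_re hint, setIntegral_wirtinger_eq_zero hU hf hΦ (by rwa [hsupp]), map_zero]

theorem hasDerivAt_setIntegral_mul_comp_sub_smul {X F : Type*} [TopologicalSpace X]
    [MeasurableSpace X] [OpensMeasurableSpace X] [T2Space X] [NormedAddCommGroup F]
    [NormedSpace ℝ F] {μ : MeasureTheory.Measure X} [MeasureTheory.IsFiniteMeasureOnCompacts μ]
    {f : X → F} {J : X → ℝ} {K : Set X} (hK : IsCompact K) (hf : ContinuousOn f K)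
    (hJ : ContinuousOn J K) {φ : F → ℝ} (hφ : ContDiff ℝ 1 φ) (hc : HasCompactSupport φ)
    (q v : F) (t : ℝ) :
    HasDerivAt (fun s : ℝ => ∫ x in K, J x * φ (f x - (q + s • v)) ∂μ)
      (-∫ x in K, J x * fderiv ℝ φ (f x - (q + t • v)) v ∂μ) t := by
  have hsub : ∀ s : ℝ, ContinuousOn (fun x => f x - (q + s • v)) K := fun s =>
    hf.sub continuousOn_const
  have hφ' : Continuous fun y => fderiv ℝ φ y v :=
    (hφ.continuous_fderiv one_ne_zero).clm_apply continuous_const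
  obtain ⟨M, hM⟩ := hK.exists_bound_of_continuousOn hJ
  obtain ⟨C, hC⟩ := hφ'.bounded_above_of_compact_support (hc.fderiv_apply ℝ v)
  have hderiv : ∀ x, ∀ s : ℝ, HasDerivAt (fun s : ℝ => J x * φ (f x - (q + s • v)))
      (-(J x * fderiv ℝ φ (f x - (q + s • v)) v)) s := fun x s => by
    have hline : HasDerivAt (fun s : ℝ => f x - (q + s • v)) (-v) s := by
      simpa using (((hasDerivAt_id s).smul_const v).const_add q).const_sub (f x)
    simpa using ((hφ.differentiable one_ne_zero _).hasFDerivAt.comp_hasDerivAt s hline).const_mul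
      (J x)
  rw [← MeasureTheory.integral_neg]
  refine (hasDerivAt_integral_of_dominated_loc_of_deriv_le (bound := fun _ => M * C) univ_mem
    (.of_forall fun s => ?_) ?_ ?_ ?_ ?_ (.of_forall fun x s _ => hderiv x s)).2
  · exact (hJ.mul (hφ.continuous.comp_continuousOn (hsub s))).aestronglyMeasurable_of_isCompact
      hK hK.measurableSet
  · exact (hJ.mul (hφ.continuous.comp_continuousOn (hsub t))).integrableOn_compact hK
  · exact (hJ.mul (hφ'.comp_continuousOn (hsub t))).neg.aestronglyMeasurable_of_isCompact
      hK hK.measurableSet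
  · filter_upwards [MeasureTheory.ae_restrict_mem hK.measurableSet] with x hx s _
    rw [norm_neg, norm_mul]
    exact mul_le_mul (hM x hx) (hC _) (norm_nonneg _) ((norm_nonneg _).trans (hM x hx))
  · exact continuousOn_const.integrableOn_compact hK

theorem setIntegral_fderiv_sub_eq_zero {f : Cn n → Cn n} {U C : Set (Cn n)} (hU : IsOpen U)
    (hf : AnalyticOnNhd ℂ f U) (hK : IsCompact (U ∩ f ⁻¹' C)) {φ : Cn n → ℝ}
    (hφ : ContDiff ℝ 1 φ) {q : Cn n} (hq : ∀ y ∈ tsupport φ, y + q ∈ C) (v : Cn n) :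
    ∫ x in U, ‖(fderiv ℂ f x).det‖ ^ 2 * fderiv ℝ φ (f x - q) v = 0 := by
  have hsupp : tsupport (fun y => φ (y - q)) ⊆ C := fun y hy => by
    simpa using hq _ (tsupport_comp_subset_preimage φ (continuous_sub_right q) hy)
  simpa only [fderiv_comp_sub] using setIntegral_fderiv_eq_zero hU hf
    (φ := fun y => φ (y - q)) (hφ.comp (contDiff_id.sub contDiff_const))
    (isCompact_inter_preimage_of_subset hf.continuousOn hK (isClosed_tsupport _) hsupp) v

theorem setIntegral_mul_comp_sub_eq_inter_preimage {X F : Type*} [MeasurableSpace X]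
    [TopologicalSpace F] [AddGroup F] {μ : MeasureTheory.Measure X} {f : X → F} {J : X → ℝ}
    {U : Set X} {C : Set F} (hU : MeasurableSet U) {φ : F → ℝ} {q : F}
    (hq : ∀ y ∈ tsupport φ, y + q ∈ C) :
    ∫ x in U, J x * φ (f x - q) ∂μ = ∫ x in U ∩ f ⁻¹' C, J x * φ (f x - q) ∂μ :=
  MeasureTheory.setIntegral_eq_of_subset_of_forall_sdiff_eq_zero hU inter_subset_left
    fun x hx => by
      have hφ : φ (f x - q) = 0 :=
        image_eq_zero_of_notMem_tsupport fun h => hx.2 ⟨hx.1, by simpa using hq _ h⟩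
      rw [hφ, mul_zero]

theorem setIntegral_comp_sub_eq_of_segment {f : Cn n → Cn n} {U C : Set (Cn n)}
    (hU : IsOpen U) (hf : AnalyticOnNhd ℂ f U) (hK : IsCompact (U ∩ f ⁻¹' C)) {φ : Cn n → ℝ}
    (hφ : ContDiff ℝ 1 φ) (hc : HasCompactSupport φ) {q₀ q₁ : Cn n}
    (hC : ∀ q ∈ segment ℝ q₀ q₁, ∀ y ∈ tsupport φ, y + q ∈ C) :
    ∫ x in U, ‖(fderiv ℂ f x).det‖ ^ 2 * φ (f x - q₀) =
      ∫ x in U, ‖(fderiv ℂ f x).det‖ ^ 2 * φ (f x - q₁) := by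
  have hKU : U ∩ f ⁻¹' C ⊆ U := inter_subset_left
  have hderiv := hasDerivAt_setIntegral_mul_comp_sub_smul (μ := MeasureTheory.volume) hK
    (hf.continuousOn.mono hKU) ((continuousOn_norm_det_fderiv_sq hf).mono hKU) hφ hc q₀ (q₁ - q₀)
  have hzero : ∀ s ∈ Icc (0 : ℝ) 1, ∫ x in U ∩ f ⁻¹' C, ‖(fderiv ℂ f x).det‖ ^ 2 *
      fderiv ℝ φ (f x - (q₀ + s • (q₁ - q₀))) (q₁ - q₀) = 0 := fun s hs => by
    have hq := hC _ (segment_eq_image' ℝ q₀ q₁ ▸ mem_image_of_mem _ hs)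
    have hsupp := tsupport_fderiv_apply_subset ℝ (f := φ) (q₁ - q₀)
    rw [← setIntegral_mul_comp_sub_eq_inter_preimage hU.measurableSet
      (φ := fun y => fderiv ℝ φ y (q₁ - q₀)) fun y hy => hq y (hsupp hy)]
    exact setIntegral_fderiv_sub_eq_zero hU hf hK hφ hq _
  have hconst := constant_of_has_deriv_right_zero (a := (0 : ℝ)) (b := 1)
    (fun s _ => (hderiv s).continuousAt.continuousWithinAt)
    (fun s hs => by simpa only [hzero s (Ico_subset_Icc_self hs), neg_zero] using
      (hderiv s).hasDerivWithinAt) 1 (right_mem_Icc.mpr zero_le_one)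
  rw [setIntegral_mul_comp_sub_eq_inter_preimage hU.measurableSet
      (hC q₀ (left_mem_segment ℝ _ _)),
    setIntegral_mul_comp_sub_eq_inter_preimage hU.measurableSet (hC q₁ (right_mem_segment ℝ _ _))]
  simpa using hconst.symm

theorem bijective_iff_det_ne_zero {K E : Type*} [Field K] [TopologicalSpace E] [AddCommGroup E]
    [Module K E] [FiniteDimensional K E] (A : E →L[K] E) : Function.Bijective A ↔ A.det ≠ 0 := by
  rw [ContinuousLinearMap.det, ← isUnit_iff_ne_zero, ← LinearMap.isUnit_iff_isUnit_det,
    Module.End.isUnit_iff, ContinuousLinearMap.coe_coe]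

theorem bijective_of_forall_eq_zero {K E : Type*} [DivisionRing K] [TopologicalSpace E]
    [AddCommGroup E] [Module K E] [FiniteDimensional K E] {A : E →L[K] E}
    (hA : ∀ w, A w = 0 → w = 0) : Function.Bijective A :=
  have hinj : Function.Injective A := (injective_iff_map_eq_zero A).mpr hA
  ⟨hinj, LinearMap.surjective_of_injective (f := A.toLinearMap) hinj⟩

theorem abs_det_restrictScalars (A : Cn n →L[ℂ] Cn n) :
    |(A.restrictScalars ℝ).det| = ‖A.det‖ ^ 2 := by
  simp [ContinuousLinearMap.det, LinearMap.det_restrictScalars, Algebra.norm_complex_eq,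
    Complex.normSq_eq_norm_sq]

theorem exists_isOpen_injOn_image_mem_nhds {f : Cn n → Cn n} {x : Cn n} (hf : AnalyticAt ℂ f x)
    (hbij : Function.Bijective (fderiv ℂ f x)) {W : Set (Cn n)} (hW : W ∈ 𝓝 x) :
    ∃ V ⊆ W, IsOpen V ∧ x ∈ V ∧ InjOn f V ∧ f '' V ∈ 𝓝 (f x) := by
  let A := ContinuousLinearEquiv.ofBijective (fderiv ℂ f x)
    (LinearMap.ker_eq_bot.mpr hbij.1) (LinearMap.range_eq_top.mpr hbij.2)
  have hA : HasStrictFDerivAt f (A : Cn n →L[ℂ] Cn n) x := hf.hasStrictFDerivAt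
  let e := hA.toOpenPartialHomeomorph f
  have hx : x ∈ e.source ∩ interior W :=
    ⟨hA.mem_toOpenPartialHomeomorph_source, mem_interior_iff_mem_nhds.mpr hW⟩
  have hopen : IsOpen (e.source ∩ interior W) := e.open_source.inter isOpen_interior
  refine ⟨_, inter_subset_right.trans interior_subset, hopen, hx,
    e.injOn.mono inter_subset_left, ?_⟩
  rw [← hA.map_nhds_eq_of_equiv]
  exact image_mem_map (hopen.mem_nhds hx)

theorem finite_fiber_of_isRegularValueOn {f : Cn n → Cn n} {U : Set (Cn n)} {q : Cn n}
    (hf : AnalyticOnNhd ℂ f U) (hK : IsCompact (U ∩ f ⁻¹' {q})) (hq : IsRegularValueOn f U q) :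
    {x ∈ U | f x = q}.Finite := by
  refine hK.finite (isDiscrete_iff_forall_mem_exists_isOpen.mpr fun x hx => ?_)
  obtain ⟨V, -, hV, hxV, hinj, -⟩ :=
    exists_isOpen_injOn_image_mem_nhds (hf x hx.1) (hq x hx.1 hx.2) univ_mem
  refine ⟨V, hV, Subset.antisymm ?_ (singleton_subset_iff.mpr ⟨hxV, hx⟩)⟩
  exact fun y hy => hinj hy.1 hxV (hy.2.2.trans hx.2.symm)

theorem integrableOn_comp_of_injOn {f : Cn n → Cn n} {V : Set (Cn n)} (hV : IsOpen V)
    (hf : DifferentiableOn ℂ f V) (hinj : InjOn f V) {φ : Cn n → ℝ}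
    (hφ : MeasureTheory.Integrable φ) :
    MeasureTheory.IntegrableOn (fun x => ‖(fderiv ℂ f x).det‖ ^ 2 * φ (f x)) V := by
  have hf' : ∀ x ∈ V, HasFDerivWithinAt f ((fderiv ℂ f x).restrictScalars ℝ) V x := fun x hx =>
    ((hf.differentiableAt (hV.mem_nhds hx)).hasFDerivAt.restrictScalars ℝ).hasFDerivWithinAt
  simpa only [abs_det_restrictScalars, smul_eq_mul] using
    (MeasureTheory.integrableOn_image_iff_integrableOn_abs_det_fderiv_smul _
      hV.measurableSet hf' hinj φ).mp hφ.integrableOn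

theorem setIntegral_comp_of_injOn {f : Cn n → Cn n} {V : Set (Cn n)} (hV : IsOpen V)
    (hf : DifferentiableOn ℂ f V) (hinj : InjOn f V) {φ : Cn n → ℝ}
    (hφ : Function.support φ ⊆ f '' V) :
    ∫ x in V, ‖(fderiv ℂ f x).det‖ ^ 2 * φ (f x) = ∫ y, φ y := by
  have hf' : ∀ x ∈ V, HasFDerivWithinAt f ((fderiv ℂ f x).restrictScalars ℝ) V x := fun x hx =>
    ((hf.differentiableAt (hV.mem_nhds hx)).hasFDerivAt.restrictScalars ℝ).hasFDerivWithinAt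
  rw [← MeasureTheory.setIntegral_eq_integral_of_forall_compl_eq_zero (s := f '' V)
      fun y hy => Function.notMem_support.mp fun h => hy (hφ h),
    MeasureTheory.integral_image_eq_integral_abs_det_fderiv_smul _ hV.measurableSet hf' hinj]
  simp only [abs_det_restrictScalars, smul_eq_mul]

theorem exists_pairwiseDisjoint_injOn {f : Cn n → Cn n} {U : Set (Cn n)} {q : Cn n}
    (hU : IsOpen U) (hf : AnalyticOnNhd ℂ f U) (hq : IsRegularValueOn f U q)
    (hfin : {x ∈ U | f x = q}.Finite) :
    ∃ V : Cn n → Set (Cn n), {x ∈ U | f x = q}.PairwiseDisjoint V ∧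
      ∀ x ∈ U, f x = q → V x ⊆ U ∧ IsOpen (V x) ∧ x ∈ V x ∧ InjOn f (V x) ∧ f '' V x ∈ 𝓝 q := by
  obtain ⟨W, hW, hdisj⟩ := hfin.t2_separation
  have hV : ∀ x, ∃ V ⊆ W x, x ∈ U → f x = q →
      V ⊆ U ∧ IsOpen V ∧ x ∈ V ∧ InjOn f V ∧ f '' V ∈ 𝓝 q := fun x => by
    by_cases hx : x ∈ U ∧ f x = q
    · obtain ⟨V, hVW, hV⟩ := exists_isOpen_injOn_image_mem_nhds (hf x hx.1) (hq x hx.1 hx.2)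
        (inter_mem ((hW x).2.mem_nhds (hW x).1) (hU.mem_nhds hx.1))
      exact ⟨V, hVW.trans inter_subset_left,
        fun _ _ => ⟨hVW.trans inter_subset_right, hx.2 ▸ hV⟩⟩
    · exact ⟨∅, empty_subset _, fun h h' => absurd ⟨h, h'⟩ hx⟩
  choose V hVW hV using hV
  exact ⟨V, hdisj.mono hVW, hV⟩

theorem exists_nhds_setIntegral_comp_eq_ncard_mul {f : Cn n → Cn n} {U C : Set (Cn n)}
    {q : Cn n} (hU : IsOpen U) (hf : AnalyticOnNhd ℂ f U) (hC : C ∈ 𝓝 q)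
    (hK : IsCompact (U ∩ f ⁻¹' C)) (hq : IsRegularValueOn f U q) :
    ∃ N ∈ 𝓝 q, ∀ φ : Cn n → ℝ, MeasureTheory.Integrable φ → Function.support φ ⊆ N →
      ∫ x in U, ‖(fderiv ℂ f x).det‖ ^ 2 * φ (f x) =
        {x ∈ U | f x = q}.ncard * ∫ y, φ y := by
  have hfin := finite_fiber_of_isRegularValueOn hf (isCompact_inter_preimage_of_subset
    hf.continuousOn hK isClosed_singleton (singleton_subset_iff.mpr (mem_of_mem_nhds hC))) hq
  obtain ⟨V, hdisj, hV⟩ := exists_pairwiseDisjoint_injOn hU hf hq hfin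
  choose! hVU hVo hmem hinj hnhds using hV
  set S := hfin.toFinset
  have hS : ∀ {x}, x ∈ S ↔ x ∈ U ∧ f x = q := hfin.mem_toFinset
  have hVS : IsOpen (⋃ x ∈ S, V x) := isOpen_biUnion fun x hx => hVo x (hS.mp hx).1 (hS.mp hx).2
  have hfar : (f '' ((U ∩ f ⁻¹' C) \ ⋃ x ∈ S, V x))ᶜ ∈ 𝓝 q := by
    refine (((hK.diff hVS).image_of_continuousOn (hf.continuousOn.mono
      (sdiff_subset.trans inter_subset_left))).isClosed.isOpen_compl).mem_nhds ?_
    rintro ⟨x, hx, hxq⟩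
    exact hx.2 (mem_biUnion (hS.mpr ⟨hx.1.1, hxq⟩) (hmem x hx.1.1 hxq))
  refine ⟨_, inter_mem (inter_mem hC hfar) ((Finset.iInter_mem_sets S).mpr fun x hx =>
    hnhds x (hS.mp hx).1 (hS.mp hx).2), fun φ hφ hsupp => ?_⟩
  have hout : ∀ x ∈ U \ ⋃ x ∈ S, V x, ‖(fderiv ℂ f x).det‖ ^ 2 * φ (f x) = 0 := fun x hx => by
    have hφx : φ (f x) = 0 := by
      by_contra h
      exact (hsupp h).1.2 ⟨x, ⟨⟨hx.1, (hsupp h).1.1⟩, hx.2⟩, rfl⟩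
    rw [hφx, mul_zero]
  have hd : ∀ x ∈ S, DifferentiableOn ℂ f (V x) := fun x hx =>
    hf.differentiableOn.mono (hVU x (hS.mp hx).1 (hS.mp hx).2)
  rw [MeasureTheory.setIntegral_eq_of_subset_of_forall_sdiff_eq_zero hU.measurableSet
    (iUnion₂_subset fun x hx => hVU x (hS.mp hx).1 (hS.mp hx).2) hout,
    MeasureTheory.integral_biUnion_finset S
      (fun x hx => (hVo x (hS.mp hx).1 (hS.mp hx).2).measurableSet)
      (by rwa [hfin.coe_toFinset])
      fun x hx => integrableOn_comp_of_injOn (hVo x (hS.mp hx).1 (hS.mp hx).2) (hd x hx)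
        (hinj x (hS.mp hx).1 (hS.mp hx).2) hφ,
    Finset.sum_congr rfl fun x hx => setIntegral_comp_of_injOn (hVo x (hS.mp hx).1 (hS.mp hx).2)
      (hd x hx) (hinj x (hS.mp hx).1 (hS.mp hx).2)
      ((hsupp.trans inter_subset_right).trans (biInter_subset_of_mem hx)),
    Finset.sum_const, nsmul_eq_mul, ← ncard_eq_toFinset_card _ hfin]

theorem ncard_fiber_eq_of_segment {f : Cn n → Cn n} {U C : Set (Cn n)} {q₀ q₁ : Cn n}
    (hU : IsOpen U) (hf : AnalyticOnNhd ℂ f U) (hK : IsCompact (U ∩ f ⁻¹' C))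
    (hC : ∀ q ∈ segment ℝ q₀ q₁, C ∈ 𝓝 q) (h₀ : IsRegularValueOn f U q₀)
    (h₁ : IsRegularValueOn f U q₁) :
    {x ∈ U | f x = q₀}.ncard = {x ∈ U | f x = q₁}.ncard := by
  obtain ⟨N₀, hN₀, hint₀⟩ := exists_nhds_setIntegral_comp_eq_ncard_mul hU hf
    (hC q₀ (left_mem_segment ℝ _ _)) hK h₀
  obtain ⟨N₁, hN₁, hint₁⟩ := exists_nhds_setIntegral_comp_eq_ncard_mul hU hf
    (hC q₁ (right_mem_segment ℝ _ _)) hK h₁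
  have hadd : ∀ q : Cn n, Tendsto (fun z : Cn n × Cn n => z.1 + z.2) (𝓝 (0, q)) (𝓝 q) :=
    fun q => (continuous_add.tendsto' _ _ (zero_add q))
  have hnear : ∀ {q : Cn n} {N : Set (Cn n)}, N ∈ 𝓝 q → ∀ᶠ y : Cn n in 𝓝 0, y + q ∈ N :=
    fun {q _} hN => (continuous_add_const q).tendsto' 0 q (zero_add q) hN
  have hcompact : IsCompact (segment ℝ q₀ q₁) := by
    rw [← convexHull_pair (𝕜 := ℝ)]
    exact (toFinite {q₀, q₁}).isCompact_convexHull ℝ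
  have hseg : ∀ᶠ y in 𝓝 (0 : Cn n), ∀ q ∈ segment ℝ q₀ q₁, y + q ∈ C :=
    hcompact.eventually_forall_of_forall_eventually fun q hq =>
      hadd q (hC q hq)
  obtain ⟨ε, hε, hball⟩ := Metric.nhds_basis_closedBall.eventually_iff.mp
    (hseg.and ((hnear hN₀).and (hnear hN₁)))
  let φ : ContDiffBump (0 : Cn n) := ⟨ε / 2, ε, half_pos hε, half_lt_self hε⟩
  have hsupp : ∀ {q : Cn n} {N : Set (Cn n)}, (∀ y ∈ closedBall (0 : Cn n) ε, y + q ∈ N) →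
      Function.support (fun y => φ (y - q)) ⊆ N := fun {q _} h y hy => by
    simpa using h (y - q) (φ.tsupport_eq ▸ subset_tsupport _ hy)
  have hinteg : ∀ q, MeasureTheory.Integrable fun y => φ (y - q) := fun q =>
    φ.integrable.comp_sub_right q
  have hmove := setIntegral_comp_sub_eq_of_segment hU hf hK φ.contDiff φ.hasCompactSupport
    fun q hq y hy => (hball (φ.tsupport_eq ▸ hy)).1 q hq
  rw [hint₀ _ (hinteg q₀) (hsupp fun y hy => (hball hy).2.1),
    hint₁ _ (hinteg q₁) (hsupp fun y hy => (hball hy).2.2),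
    MeasureTheory.integral_sub_right_eq_self, MeasureTheory.integral_sub_right_eq_self] at hmove
  exact_mod_cast mul_right_cancel₀ φ.integral_pos.ne' hmove

theorem exists_eventually_encard_fiber_eq {f : Cn n → Cn n} {U C : Set (Cn n)} {p : Cn n}
    (hU : IsOpen U) (hf : AnalyticOnNhd ℂ f U) (hC : C ∈ 𝓝 p) (hK : IsCompact (U ∩ f ⁻¹' C)) :
    ∃ N : ℕ, ∀ᶠ q in 𝓝 p, IsRegularValueOn f U q → {x ∈ U | f x = q}.encard = N := by
  obtain ⟨ε, hε, hball⟩ := Metric.mem_nhds_iff.mp hC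
  by_cases h : ∃ q₀ ∈ ball p ε, IsRegularValueOn f U q₀
  · obtain ⟨q₀, hq₀, h₀⟩ := h
    refine ⟨{x ∈ U | f x = q₀}.ncard, eventually_of_mem (ball_mem_nhds p hε) fun q hq hreg => ?_⟩
    have hfin := finite_fiber_of_isRegularValueOn hf (isCompact_inter_preimage_of_subset
      hf.continuousOn hK isClosed_singleton (singleton_subset_iff.mpr (hball hq))) hreg
    rw [← hfin.cast_ncard_eq, ncard_fiber_eq_of_segment hU hf hK (fun y hy => ?_) hreg h₀]
    exact mem_of_superset (isOpen_ball.mem_nhds ((convex_ball p ε).segment_subset hq hq₀ hy)) hball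
  · exact ⟨0, eventually_of_mem (ball_mem_nhds p hε) fun q hq hreg => absurd ⟨q, hq, hreg⟩ h⟩

theorem dense_isRegularValueOn_s12 {f : Cn n → Cn n} {U : Set (Cn n)}
    (hf : DifferentiableOn ℂ f U) (hU : IsOpen U) : Dense {q | IsRegularValueOn f U q} := by
  have hnull : MeasureTheory.volume (f '' {x ∈ U | ¬ Function.Bijective (fderiv ℂ f x)}) = 0 :=
    MeasureTheory.addHaar_image_eq_zero_of_det_fderivWithin_eq_zero _
      (fun x hx => ((hf.differentiableAt (hU.mem_nhds hx.1)).hasFDerivAt.restrictScalars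
        ℝ).hasFDerivWithinAt) fun x hx => by
          rw [← abs_eq_zero, abs_det_restrictScalars, not_ne_iff.mp (mt
            (bijective_iff_det_ne_zero _).mpr hx.2), norm_zero, zero_pow two_ne_zero]
  refine (MeasureTheory.Measure.dense_of_ae
    (MeasureTheory.measure_eq_zero_iff_ae_notMem.mp hnull)).mono fun q hq x hx hxq => ?_
  exact not_not.mp fun hbij => hq ⟨x, ⟨hx, hbij⟩, hxq⟩

end Degree

section Family

/-- The linear identification `ℂ × ℂⁿ ≃ ℂⁿ⁺¹`. -/
def consCLE : (ℂ × Cn n) ≃L[ℂ] Cn (n + 1) := Fin.consEquivL ℂ fun _ => ℂ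

/-- A family `h (s, ·)` of self-maps of `ℂⁿ` seen as the single self-map `(s, x) ↦ (s, h (s, x))`
of `ℂⁿ⁺¹`. Its fibre over `(s, q)` is the fibre of `h (s, ·)` over `q`, so that constancy of the
number of preimages in `ℂⁿ⁺¹` becomes homotopy invariance in `ℂⁿ`. -/
def suspension (h : ℂ × Cn n → Cn n) (z : Cn (n + 1)) : Cn (n + 1) :=
  consCLE ((consCLE.symm z).1, h (consCLE.symm z))

theorem suspension_consCLE (h : ℂ × Cn n → Cn n) (z : ℂ × Cn n) :
    suspension h (consCLE z) = consCLE (z.1, h z) := by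
  simp only [suspension, ContinuousLinearEquiv.symm_apply_apply]

theorem hasFDerivAt_suspension {h : ℂ × Cn n → Cn n} {z : ℂ × Cn n}
    (hh : DifferentiableAt ℂ h z) :
    HasFDerivAt (suspension h) ((consCLE (n := n) : (ℂ × Cn n) →L[ℂ] Cn (n + 1)) ∘L
      ((ContinuousLinearMap.fst ℂ ℂ (Cn n)).prod (fderiv ℂ h z)) ∘L
        ((consCLE (n := n)).symm : Cn (n + 1) →L[ℂ] ℂ × Cn n))
      (consCLE z) := by
  have hh' : HasFDerivAt h (fderiv ℂ h z) (consCLE.symm (consCLE z)) := by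
    simpa using hh.hasFDerivAt
  exact consCLE.hasFDerivAt.comp _
    ((hasFDerivAt_fst.prodMk hh').comp _ consCLE.symm.hasFDerivAt)

theorem analyticAt_suspension {h : ℂ × Cn n → Cn n} {z : ℂ × Cn n} (hh : AnalyticAt ℂ h z) :
    AnalyticAt ℂ (suspension h) (consCLE z) := by
  have hpair : AnalyticAt ℂ (fun z => (z.1, h z)) (consCLE.symm (consCLE z)) := by
    simpa using analyticAt_fst.prod hh
  exact (consCLE.analyticAt _).comp (hpair.comp (consCLE.symm.analyticAt _))

theorem bijective_fderiv_suspension {h : ℂ × Cn n → Cn n} {s : ℂ} {x : Cn n}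
    (hh : DifferentiableAt ℂ h (s, x))
    (hbij : Function.Bijective (fderiv ℂ (fun x => h (s, x)) x)) :
    Function.Bijective (fderiv ℂ (suspension h) (consCLE (s, x))) := by
  have hslice : fderiv ℂ (fun x => h (s, x)) x =
      fderiv ℂ h (s, x) ∘L ContinuousLinearMap.inr ℂ ℂ (Cn n) :=
    (hh.hasFDerivAt.comp x (hasFDerivAt_prodMk_right s x)).fderiv
  rw [hslice] at hbij
  have hbij' : Function.Bijective
      ((ContinuousLinearMap.fst ℂ ℂ (Cn n)).prod (fderiv ℂ h (s, x))) := by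
    refine bijective_of_forall_eq_zero fun ⟨σ, w⟩ hσw => ?_
    obtain ⟨rfl, hw⟩ : σ = 0 ∧ fderiv ℂ h (s, x) (σ, w) = 0 := by simpa using hσw
    exact Prod.ext rfl (hbij.1 (hw.trans (map_zero _).symm))
  rw [(hasFDerivAt_suspension hh).fderiv]
  exact consCLE.bijective.comp (hbij'.comp consCLE.symm.bijective)

theorem isRegularValueOn_suspension {h : ℂ × Cn n → Cn n} {D : Set ℂ} {U : Set (Cn n)}
    (hh : ∀ z ∈ D ×ˢ U, DifferentiableAt ℂ h z) {s : ℂ} {q : Cn n}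
    (hq : IsRegularValueOn (fun x => h (s, x)) U q) :
    IsRegularValueOn (suspension h) (consCLE.symm ⁻¹' (D ×ˢ U)) (consCLE (s, q)) := by
  intro y hy hyq
  obtain ⟨⟨t, x⟩, rfl⟩ := consCLE.surjective y
  rw [mem_preimage, ContinuousLinearEquiv.symm_apply_apply] at hy
  rw [suspension_consCLE, consCLE.injective.eq_iff, Prod.mk_inj] at hyq
  obtain ⟨rfl, hxq⟩ := hyq
  exact bijective_fderiv_suspension (hh _ hy) (hq x hy.2 hxq)

theorem encard_fiber_suspension (h : ℂ × Cn n → Cn n) {D : Set ℂ} (U : Set (Cn n)) {s : ℂ}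
    (hs : s ∈ D) (q : Cn n) :
    {z ∈ consCLE.symm ⁻¹' (D ×ˢ U) | suspension h z = consCLE (s, q)}.encard =
      {x ∈ U | h (s, x) = q}.encard := by
  rw [← (consCLE.injective.comp (Prod.mk_right_injective s)).encard_image
    {x ∈ U | h (s, x) = q}]
  refine congrArg encard (Set.ext fun y => ?_)
  obtain ⟨⟨t, x⟩, rfl⟩ := consCLE.surjective y
  simp only [mem_ofPred_eq, mem_preimage, ContinuousLinearEquiv.symm_apply_apply, mem_prod,
    suspension_consCLE, consCLE.injective.eq_iff, Prod.mk_inj, mem_image, Function.comp_apply]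
  constructor
  · rintro ⟨hx, rfl, hxq⟩
    exact ⟨x, ⟨hx.2, hxq⟩, rfl, rfl⟩
  · rintro ⟨x, hx, rfl, rfl⟩
    exact ⟨⟨hs, hx.1⟩, rfl, hx.2⟩

theorem isCompact_prod_inter_preimage_graph {X Y Z : Type*} [MetricSpace X] [ProperSpace X]
    [TopologicalSpace Y] [T2Space Y] [MetricSpace Z] {h : X × Y → Z} {U : Set Y} {s : X} {q : Z}
    {ε δ : ℝ} (hδε : δ < ε) (hU : IsCompact (closure U))
    (hh : ContinuousOn h (closedBall s δ ×ˢ closure U))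
    (hne : ∀ w ∈ closedBall (s, q) δ, ∀ y ∈ closure U \ U, h (w.1, y) ≠ w.2) :
    IsCompact ((ball s ε ×ˢ U) ∩ (fun z => (z.1, h z)) ⁻¹' closedBall (s, q) δ) := by
  have hL := (isCompact_closedBall s δ).prod hU
  have heq : (ball s ε ×ˢ U) ∩ (fun z => (z.1, h z)) ⁻¹' closedBall (s, q) δ =
      (closedBall s δ ×ˢ closure U) ∩ (fun z => (z.1, h z)) ⁻¹' closedBall (s, q) δ := by
    ext ⟨t, y⟩
    refine and_congr_left fun hw => ⟨fun hz => ⟨?_, subset_closure hz.2⟩, fun hz => ⟨?_, ?_⟩⟩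
    · exact (closedBall_prod_same s q δ ▸ hw).1
    · exact closedBall_subset_ball hδε hz.1
    · by_contra hy
      exact hne _ hw y ⟨hz.2, hy⟩ rfl
  rw [heq]
  exact hL.of_isClosed_subset ((continuousOn_fst.prodMk hh).preimage_isClosed_of_isClosed
    hL.isClosed isClosed_closedBall) inter_subset_left

theorem exists_eventually_encard_fiber_eq_of_family {h : ℂ × Cn n → Cn n} {U : Set (Cn n)}
    {s : ℂ} {q : Cn n} (hU : IsOpen U) (hUc : IsCompact (closure U))
    (hh : ∀ x ∈ closure U, AnalyticAt ℂ h (s, x)) (hq : ∀ x ∈ closure U \ U, h (s, x) ≠ q) :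
    ∃ N : ℕ, ∀ᶠ w in 𝓝 (s, q), IsRegularValueOn (fun x => h (w.1, x)) U w.2 →
      {x ∈ U | h (w.1, x) = w.2}.encard = N := by
  have hpath : ∀ x : Cn n, Tendsto (fun z : (ℂ × Cn n) × Cn n => (z.1.1, z.2)) (𝓝 ((s, q), x))
      (𝓝 (s, x)) := fun x => Continuous.tendsto' (by fun_prop) _ _ rfl
  have han : ∀ᶠ w in 𝓝 (s, q), ∀ x ∈ closure U, AnalyticAt ℂ h (w.1, x) :=
    hUc.eventually_forall_of_forall_eventually fun x hx =>
      (hpath x).eventually (hh x hx).eventually_analyticAt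
  have hne : ∀ᶠ w in 𝓝 (s, q), ∀ x ∈ closure U \ U, h (w.1, x) ≠ w.2 :=
    (hUc.diff hU).eventually_forall_of_forall_eventually fun x hx =>
      (ContinuousAt.ne_iff_eventually_ne (f := fun z : (ℂ × Cn n) × Cn n => h (z.1.1, z.2))
        (g := fun z => z.1.2) ((hh x hx.1).continuousAt.tendsto.comp (hpath x))
        (by fun_prop)).mp (hq x hx)
  obtain ⟨ε, hε, hball⟩ := Metric.nhds_basis_ball.eventually_iff.mp (han.and hne)
  have hδ : closedBall (s, q) (ε / 2) ⊆ ball (s, q) ε := closedBall_subset_ball (half_lt_self hε)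
  have hanal : ∀ z ∈ ball s ε ×ˢ closure U, AnalyticAt ℂ h z := fun z hz =>
    (hball (x := (z.1, q)) (by simpa [Prod.dist_eq, hε] using hz.1)).1 z.2 hz.2
  have hK := isCompact_prod_inter_preimage_graph (half_lt_self hε) hUc (h := h) (s := s) (q := q)
    (fun z hz => (hanal z ⟨closedBall_subset_ball (half_lt_self hε) hz.1,
      hz.2⟩).continuousAt.continuousWithinAt) fun w hw => (hball (hδ hw)).2
  have hanalU : ∀ z ∈ ball s ε ×ˢ U, AnalyticAt ℂ h z := fun z hz =>
    hanal z ⟨hz.1, subset_closure hz.2⟩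
  obtain ⟨N, hN⟩ := exists_eventually_encard_fiber_eq (f := suspension h) (p := consCLE (s, q))
    (U := consCLE.symm ⁻¹' (ball s ε ×ˢ U)) (C := consCLE.symm ⁻¹' closedBall (s, q) (ε / 2))
    ((isOpen_ball.prod hU).preimage consCLE.symm.continuous)
    (fun y hy => by simpa using analyticAt_suspension (hanalU _ hy))
    (consCLE.symm.continuous.continuousAt.preimage_mem_nhds
      (by simpa using closedBall_mem_nhds (s, q) (half_pos hε)))
    (by simpa [preimage_preimage, suspension] using
      consCLE.symm.toHomeomorph.isCompact_preimage.mpr hK)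
  refine ⟨N, ?_⟩
  filter_upwards [consCLE.continuous.continuousAt.eventually hN, ball_mem_nhds _ hε]
    with w hw hwε hreg
  rw [← encard_fiber_suspension h U (ball_prod_same s q ε ▸ hwε : w ∈ ball s ε ×ˢ ball q ε).1]
  exact hw (isRegularValueOn_suspension (fun z hz => (hanalU z hz).differentiableAt) hreg)

end Family

section ZeroOrder

theorem eventually_mem_ball_of_eq {f : Cn n → Cn n} {r ρ : ℝ}
    (hf : ContinuousOn f (closedBall 0 r)) (hz : ∀ x ∈ closedBall 0 r, f x = 0 → x = 0)
    (hρ : 0 < ρ) : ∀ᶠ q in 𝓝 0, ∀ x ∈ closedBall 0 r, f x = q → x ∈ ball 0 ρ := by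
  have hK : IsCompact (f '' (closedBall 0 r \ ball 0 ρ)) :=
    ((isCompact_closedBall 0 r).diff isOpen_ball).image_of_continuousOn (hf.mono sdiff_subset)
  have h0 : (0 : Cn n) ∉ f '' (closedBall 0 r \ ball 0 ρ) := by
    rintro ⟨x, hx, hfx⟩
    exact hx.2 (hz x hx.1 hfx ▸ mem_ball_self hρ)
  filter_upwards [hK.isClosed.isOpen_compl.mem_nhds h0] with q hq x hx hxq
  exact by_contra fun hxρ => hq ⟨x, ⟨hx, hxρ⟩, hxq⟩

theorem eventually_isolating_radius {g : Cn n → Cn n} (hg : AnalyticAt ℂ g 0)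
    (hi : IsolatedZeroAt0 g) : ∀ᶠ r in 𝓝[>] (0 : ℝ),
      AnalyticOnNhd ℂ g (closedBall 0 r) ∧ ∀ x ∈ closedBall 0 r, g x = 0 → x = 0 := by
  obtain ⟨ε, hε, hball⟩ := Metric.eventually_nhds_iff_ball.mp
    (hg.eventually_analyticAt.and (eventually_nhdsWithin_iff.mp hi.2))
  filter_upwards [Ioo_mem_nhdsGT hε] with r hr
  have hsub : closedBall (0 : Cn n) r ⊆ ball 0 ε := closedBall_subset_ball hr.2
  exact ⟨fun x hx => (hball x (hsub hx)).1,
    fun x hx => not_imp_not.mp fun hne => (hball x (hsub hx)).2 hne⟩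

theorem exists_eventually_encard_ball_eq {g p : Cn n → Cn n} {r : ℝ} (hr : 0 < r)
    (hg : AnalyticOnNhd ℂ g (closedBall 0 r)) (hz : ∀ x ∈ closedBall 0 r, g x = 0 → x = 0)
    (hp : AnalyticOnNhd ℂ p (closedBall 0 r)) :
    ∃ N : ℕ, ∀ᶠ w in 𝓝 ((0 : ℂ), (0 : Cn n)),
      IsRegularValueOn (fun x => g x + w.1 • p x) (ball 0 r) w.2 →
        {x ∈ ball 0 r | g x + w.1 • p x = w.2}.encard = N := by
  have hcl : closure (ball (0 : Cn n) r) = closedBall 0 r := closure_ball 0 hr.ne'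
  refine exists_eventually_encard_fiber_eq_of_family (h := fun z => g z.2 + z.1 • p z.2)
    isOpen_ball (hcl ▸ isCompact_closedBall 0 r) (fun x hx => ?_) fun x hx h0 => ?_
  · rw [hcl] at hx
    exact ((hg x hx).fun_comp analyticAt_snd).add
      (analyticAt_fst.smul ((hp x hx).fun_comp analyticAt_snd))
  · rw [hcl] at hx
    refine hx.2 (hz x hx.1 ?_ ▸ mem_ball_self hr)
    simpa using h0

theorem exists_hasZeroOrder {g : Cn n → Cn n} (hg : AnalyticAt ℂ g 0) (hi : IsolatedZeroAt0 g) :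
    ∃ N, HasZeroOrder g 0 N := by
  obtain ⟨r, ⟨hgr, hz⟩, hr⟩ := ((eventually_isolating_radius hg hi).and self_mem_nhdsWithin).exists
  obtain ⟨N, hN⟩ := exists_eventually_encard_ball_eq hr hgr hz (p := 0) fun _ _ => analyticAt_const
  obtain ⟨δ, hδ, hball⟩ := Metric.eventually_nhds_iff_ball.mp hN
  refine ⟨N, r, hr, hgr, hi.1, hz, fun ε hε => ?_, δ, hδ, fun q hq hreg => ?_⟩
  · obtain ⟨q, hreg, hq⟩ := (dense_isRegularValueOn_s12
      (hgr.mono ball_subset_closedBall).differentiableOn isOpen_ball).exists_mem_open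
      isOpen_ball ⟨0, mem_ball_self hε⟩
    exact ⟨q, by simpa using hq, hreg⟩
  · have hcount := hball (0, q) (by simpa [Prod.dist_eq, hδ] using hq)
    simp only [Pi.zero_apply, smul_zero, add_zero] at hcount
    rw [ncard, hcount hreg, ENat.toNat_natCast]

theorem HasZeroOrder.eq_of_frequently {g : Cn n → Cn n} {N m : ℕ} (hN : HasZeroOrder g 0 N)
    (hm : ∀ᶠ ρ in 𝓝[>] (0 : ℝ), ∃ᶠ q in 𝓝 0, IsRegularValueOn g (ball 0 ρ) q ∧
      {x ∈ ball 0 ρ | g x = q}.ncard = m) : N = m := by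
  obtain ⟨r, hr, hg, -, hz, -, δ, hδ, hcount⟩ := hN
  obtain ⟨ρ, hρm, hρ⟩ := (hm.and (Ioo_mem_nhdsGT hr)).exists
  obtain ⟨q, ⟨hreg, hqm⟩, hfib, hq⟩ := (hρm.and_eventually
    ((eventually_mem_ball_of_eq hg.continuousOn hz hρ.1).and (ball_mem_nhds 0 hδ))).exists
  have hin : ∀ x ∈ ball 0 r, g x = q → x ∈ ball 0 ρ := fun x hx =>
    hfib x (ball_subset_closedBall hx)
  rw [← hcount q (by simpa using hq) fun x hx hxq => hreg x (hin x hx hxq) hxq, ← hqm]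
  congr 1
  ext x
  exact ⟨fun hx => ⟨hin x hx.1 hx.2, hx.2⟩, fun hx => ⟨ball_subset_ball hρ.2.le hx.1, hx.2⟩⟩

/- Only an inequality holds, as zeros may leave the origin under perturbation. -/
theorem HasZeroOrder.eventually_le_of_add_smul {g p : Cn n → Cn n} {N : ℕ}
    (hN : HasZeroOrder g 0 N) (hp : AnalyticOnNhd ℂ p univ) :
    ∀ᶠ s in 𝓝 (0 : ℂ), ∀ M, HasZeroOrder (fun x => g x + s • p x) 0 M → M ≤ N := by
  obtain ⟨r, hr, hg, -, hz, hsard, δ, hδ, hcount⟩ := hN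
  obtain ⟨N', hN'⟩ := exists_eventually_encard_ball_eq hr hg hz (hp.mono (subset_univ _))
  obtain ⟨η, hη, hball⟩ := Metric.eventually_nhds_iff_ball.mp hN'
  have hcount' : ∀ s ∈ ball (0 : ℂ) η, ∀ q ∈ ball (0 : Cn n) η,
      IsRegularValueOn (fun x => g x + s • p x) (ball 0 r) q →
        {x ∈ ball 0 r | g x + s • p x = q}.encard = N' := fun s hs q hq =>
    hball (s, q) (ball_prod_same (0 : ℂ) (0 : Cn n) η ▸ ⟨hs, hq⟩)
  obtain rfl : N' = N := by
    obtain ⟨q, hq, hreg⟩ := hsard (min δ η) (lt_min hδ hη)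
    have h0 := hcount' 0 (mem_ball_self hη) q (by simpa using hq.trans_le (min_le_right _ _))
    simp only [zero_smul, add_zero] at h0
    rw [← hcount q (hq.trans_le (min_le_left _ _)) hreg, ncard, h0 hreg, ENat.toNat_natCast]
  filter_upwards [ball_mem_nhds 0 hη] with s hs M hM
  obtain ⟨ρ, -, hgρ, -, hzρ, -, δ', hδ', hcountρ⟩ := hM
  have han : AnalyticOnNhd ℂ (fun x => g x + s • p x) (ball 0 r ∪ ball 0 ρ) := by
    rintro x (hx | hx)
    · exact (hg x (ball_subset_closedBall hx)).fun_add (hp x (mem_univ x)).fun_const_smul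
    · exact hgρ x (ball_subset_closedBall hx)
  obtain ⟨q, hreg, hqη, hqδ, hfib⟩ := ((dense_isRegularValueOn_s12 han.differentiableOn
    (isOpen_ball.union isOpen_ball)).inter_nhds_nonempty (inter_mem (ball_mem_nhds 0 hη)
      (inter_mem (ball_mem_nhds 0 hδ') (eventually_mem_ball_of_eq hgρ.continuousOn hzρ hr))))
  rw [← hcountρ q (by simpa using hqδ) fun x hx => hreg x (Or.inr hx), ← Nat.cast_le (α := ℕ∞),
    ← hcount' s hs q hqη fun x hx => hreg x (Or.inl hx)]
  exact (ncard_le_encard _).trans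
    (encard_le_encard fun x hx => ⟨hfib x (ball_subset_closedBall hx.1) hx.2, hx.2⟩)

end ZeroOrder

section PowerMap

theorem ncard_setOf_pow_eq {m : ℕ} (hm : 0 < m) {t : ℂ} (ht : t ≠ 0) :
    {ω : ℂ | ω ^ m = t ^ m}.ncard = m := by
  have hroots : {ω : ℂ | ω ^ m = t ^ m} = (nthRoots m (t ^ m)).toFinset := by
    ext ω
    simp [mem_nthRoots hm]
  have hprim := Complex.isPrimitiveRoot_exp m hm.ne'
  rw [hroots, ncard_coe_finset, Multiset.toFinset_card_of_nodup
    (hprim.nthRoots_nodup (pow_ne_zero m ht)), hprim.card_nthRoots, if_pos ⟨t, rfl⟩]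

theorem exists_analyticAt_pow_eq {E : Type*} [NormedAddCommGroup E] [NormedSpace ℂ E]
    {w : E → ℂ} {x : E} {m : ℕ} (hm : 0 < m) (hw : AnalyticAt ℂ w x) (hx : w x ≠ 0) :
    ∃ η : E → ℂ, AnalyticAt ℂ η x ∧ η x ≠ 0 ∧ ∀ y, η y ^ m = w y := by
  obtain ⟨c, hc⟩ := IsAlgClosed.exists_pow_nat_eq (w x) hm
  have hpow : ∀ y, (c * (w y / w x) ^ (m⁻¹ : ℂ)) ^ m = w y := fun y => by
    rw [mul_pow, hc, Complex.cpow_nat_inv_pow _ hm.ne', mul_div_cancel₀ _ hx]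
  have hslit : w x / w x ∈ Complex.slitPlane := by
    rw [div_self hx]
    exact Complex.one_mem_slitPlane
  refine ⟨fun y => c * (w y / w x) ^ (m⁻¹ : ℂ), analyticAt_const.mul
    ((hw.div analyticAt_const hx).cpow analyticAt_const hslit), fun h => hx ?_, hpow⟩
  exact (hpow x).symm.trans ((congrArg (· ^ m) h).trans (zero_pow hm.ne'))

variable {ψ g : Cn 2 → Cn 2} {k : Cn 2 → ℂ} {m : ℕ}

theorem ncard_fiber_of_eq_pow_add_mul {W : Set (Cn 2)} (hm : 0 < m) (hinj : InjOn ψ W)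
    (hg : ∀ x ∈ W, g x = ![ψ x 0 ^ m + k x * ψ x 1, ψ x 1]) {t : ℂ} (ht : t ≠ 0)
    (hW : ∀ ω : ℂ, ω ^ m = t ^ m → ![ω, 0] ∈ ψ '' W) :
    {x ∈ W | g x = ![t ^ m, 0]}.ncard = m := by
  have hfib : {x ∈ W | g x = ![t ^ m, 0]} = {x ∈ W | ψ x 0 ^ m = t ^ m ∧ ψ x 1 = 0} := by
    ext x
    refine and_congr_right fun hx => ?_
    rw [hg x hx]
    constructor
    · intro h
      have h1 : ψ x 1 = 0 := congrFun h 1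
      have h0 : ψ x 0 ^ m + k x * ψ x 1 = t ^ m := congrFun h 0
      exact ⟨by simpa [h1] using h0, h1⟩
    · rintro ⟨h0, h1⟩
      rw [h0, h1, mul_zero, add_zero]
  have himage : (fun x => ψ x 0) '' {x ∈ W | ψ x 0 ^ m = t ^ m ∧ ψ x 1 = 0} =
      {ω | ω ^ m = t ^ m} := by
    ext ω
    constructor
    · rintro ⟨x, hx, rfl⟩
      exact hx.2.1
    · intro hω
      obtain ⟨x, hx, hxω⟩ := hW ω hω
      exact ⟨x, ⟨hx, by rw [hxω]; exact hω, by rw [hxω]; rfl⟩, by simp only [hxω]; rfl⟩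
  have hinj' : InjOn (fun x => ψ x 0) {x ∈ W | ψ x 0 ^ m = t ^ m ∧ ψ x 1 = 0} :=
    fun x hx y hy hxy => hinj hx.1 hy.1
      (funext (Fin.forall_fin_two.mpr ⟨hxy, hx.2.2.trans hy.2.2.symm⟩))
  rw [hfib, ← hinj'.ncard_image, himage]
  exact ncard_setOf_pow_eq hm ht

theorem isRegularValueOn_of_eq_pow_add_mul {W : Set (Cn 2)} (hW : IsOpen W) (hm : 0 < m)
    (hψ : DifferentiableOn ℂ ψ W) (hk : DifferentiableOn ℂ k W)
    (hbij : ∀ x ∈ W, Function.Bijective (fderiv ℂ ψ x))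
    (hg : ∀ x ∈ W, g x = ![ψ x 0 ^ m + k x * ψ x 1, ψ x 1]) {t : ℂ} (ht : t ≠ 0) :
    IsRegularValueOn g W ![t ^ m, 0] := by
  intro x hx hgx
  have hψx := hasFDerivAt_pi'.mp (hψ.differentiableAt (hW.mem_nhds hx)).hasFDerivAt
  have hkx := (hk.differentiableAt (hW.mem_nhds hx)).hasFDerivAt
  have hψ1 : ψ x 1 = 0 := by simpa [hg x hx] using congrFun hgx 1
  have hψ0 : ψ x 0 ≠ 0 := fun h => by
    have h0 : ψ x 0 ^ m + k x * ψ x 1 = t ^ m := by simpa [hg x hx] using congrFun hgx 0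
    rw [h, hψ1, zero_pow hm.ne', mul_zero, add_zero] at h0
    exact pow_ne_zero m ht h0.symm
  have hg' : HasFDerivAt g (ContinuousLinearMap.pi
      ![(m • ψ x 0 ^ (m - 1)) • ContinuousLinearMap.proj 0 ∘L fderiv ℂ ψ x +
          (k x • ContinuousLinearMap.proj 1 ∘L fderiv ℂ ψ x + ψ x 1 • fderiv ℂ k x),
        ContinuousLinearMap.proj 1 ∘L fderiv ℂ ψ x]) x := by
    refine HasFDerivAt.congr_of_eventuallyEq ?_ (eventually_of_mem (hW.mem_nhds hx) hg)
    refine hasFDerivAt_pi'.mpr (Fin.forall_fin_two.mpr ⟨?_, hψx 1⟩)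
    exact ((hψx 0).pow m).fun_add (hkx.fun_mul (hψx 1))
  rw [hg'.fderiv]
  refine bijective_of_forall_eq_zero fun w hw => ?_
  have hw1 : fderiv ℂ ψ x w 1 = 0 := congrFun hw 1
  have hw0 : fderiv ℂ ψ x w 0 = 0 := by
    simpa [hψ1, hw1, hm.ne', hψ0] using congrFun hw 0
  exact (map_eq_zero_iff _ (hbij x hx).1).mp (funext (Fin.forall_fin_two.mpr ⟨hw0, hw1⟩))

theorem eventually_frequently_ncard_of_eq_pow_add_mul (hm : 0 < m) (hψ : AnalyticAt ℂ ψ 0)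
    (hψ0 : ψ 0 = 0) (hbij : Function.Bijective (fderiv ℂ ψ 0)) (hk : AnalyticAt ℂ k 0)
    (hg : ∀ᶠ x in 𝓝 0, g x = ![ψ x 0 ^ m + k x * ψ x 1, ψ x 1]) :
    ∀ᶠ ρ in 𝓝[>] (0 : ℝ), ∃ᶠ q in 𝓝 0, IsRegularValueOn g (ball 0 ρ) q ∧
      {x ∈ ball 0 ρ | g x = q}.ncard = m := by
  have hdet : ∀ᶠ x in 𝓝 0, Function.Bijective (fderiv ℂ ψ x) := by
    simp only [bijective_iff_det_ne_zero] at hbij ⊢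
    exact (analyticAt_det_fderiv hψ).continuousAt.eventually_ne hbij
  obtain ⟨V, -, hV, h0V, hinj, -⟩ := exists_isOpen_injOn_image_mem_nhds hψ hbij univ_mem
  have hV0 : ∀ᶠ x in 𝓝 0, x ∈ V := hV.mem_nhds h0V
  obtain ⟨ε, hε, hball⟩ := Metric.eventually_nhds_iff_ball.mp
    (hV0.and (hψ.eventually_analyticAt.and (hk.eventually_analyticAt.and (hdet.and hg))))
  filter_upwards [Ioo_mem_nhdsGT hε] with ρ hρ
  have hsub : ball (0 : Cn 2) ρ ⊆ ball 0 ε := ball_subset_ball hρ.2.le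
  obtain ⟨V', hV'ρ, -, -, -, himage⟩ :=
    exists_isOpen_injOn_image_mem_nhds hψ hbij (ball_mem_nhds 0 hρ.1)
  obtain ⟨τ, hτ, hballτ⟩ := Metric.mem_nhds_iff.mp (hψ0 ▸ himage)
  have hlim : Tendsto (fun t : ℂ => ![t ^ m, 0]) (𝓝[≠] 0) (𝓝 0) :=
    (Continuous.tendsto' (by fun_prop) _ _ (by simp [hm.ne'])).mono_left nhdsWithin_le_nhds
  refine hlim.frequently (Eventually.frequently ?_)
  filter_upwards [nhdsWithin_le_nhds (ball_mem_nhds 0 hτ), self_mem_nhdsWithin] with t ht ht0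
  refine ⟨isRegularValueOn_of_eq_pow_add_mul (ψ := ψ) (k := k) isOpen_ball hm
    (fun x hx => (hball x (hsub hx)).2.1.differentiableAt.differentiableWithinAt)
    (fun x hx => (hball x (hsub hx)).2.2.1.differentiableAt.differentiableWithinAt)
    (fun x hx => (hball x (hsub hx)).2.2.2.1) (fun x hx => (hball x (hsub hx)).2.2.2.2) ht0,
    ncard_fiber_of_eq_pow_add_mul (ψ := ψ) (k := k) hm (hinj.mono fun x hx => (hball x (hsub hx)).1)
    (fun x hx => (hball x (hsub hx)).2.2.2.2) ht0 fun ω hω => image_mono hV'ρ (hballτ ?_)⟩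
  have hnorm : ‖ω‖ = ‖t‖ := (pow_left_inj₀ (norm_nonneg ω) (norm_nonneg t) hm.ne').mp (by
    rw [← norm_pow, ← norm_pow, hω])
  simpa [pi_norm_lt_iff hτ, Fin.forall_fin_two, hnorm, hτ] using ht

theorem isolatedZeroAt0_of_eq_pow_add_mul (hm : 0 < m) (hψ : AnalyticAt ℂ ψ 0)
    (hψ0 : ψ 0 = 0) (hbij : Function.Bijective (fderiv ℂ ψ 0))
    (hg : ∀ᶠ x in 𝓝 0, g x = ![ψ x 0 ^ m + k x * ψ x 1, ψ x 1]) : IsolatedZeroAt0 g := by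
  obtain ⟨V, -, hV, h0V, hinj, -⟩ := exists_isOpen_injOn_image_mem_nhds hψ hbij univ_mem
  refine ⟨by simp [hg.self_of_nhds, hψ0, hm.ne'], ?_⟩
  filter_upwards [nhdsWithin_le_nhds (hV.mem_nhds h0V), nhdsWithin_le_nhds hg,
    self_mem_nhdsWithin] with x hxV hgx hx0 hx
  rw [hgx] at hx
  have h1 : ψ x 1 = 0 := congrFun hx 1
  have h0 : ψ x 0 ^ m + k x * ψ x 1 = 0 := congrFun hx 0
  rw [h1, mul_zero, add_zero] at h0
  have hψx : ψ x = 0 := funext (Fin.forall_fin_two.mpr ⟨eq_zero_of_pow_eq_zero h0, h1⟩)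
  exact hx0 (hinj hxV h0V (hψx.trans hψ0.symm))

end PowerMap

section CroninForm

theorem analyticAt_apply {𝕜 ι : Type*} [NontriviallyNormedField 𝕜] [Fintype ι] (i : ι)
    (x : ι → 𝕜) : AnalyticAt 𝕜 (fun y : ι → 𝕜 => y i) x :=
  (ContinuousLinearMap.proj (R := 𝕜) (φ := fun _ : ι => 𝕜) i).analyticAt x

/-- Cronin's normal form `g₁ = x₁^m (a + o(1)) + x₂ O(1)`, `g₂ = x₂ (b + o(1)) + x₁^m o(1)` near
the origin, with `u₁`, `u₂`, `u₃` the germs written `o(1)` and `v` the one written `O(1)`. -/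
structure CroninForm (m : ℕ) (a b : ℂ) (g : Cn 2 → Cn 2) (u₁ u₂ u₃ v : Cn 2 → ℂ) : Prop where
  analyticAt_u₁ : AnalyticAt ℂ u₁ 0
  u₁_zero : u₁ 0 = 0
  analyticAt_u₂ : AnalyticAt ℂ u₂ 0
  u₂_zero : u₂ 0 = 0
  analyticAt_u₃ : AnalyticAt ℂ u₃ 0
  u₃_zero : u₃ 0 = 0
  analyticAt_v : AnalyticAt ℂ v 0
  eventually_eq : ∀ᶠ x in 𝓝 (0 : Cn 2),
    g x = ![x 0 ^ m * (a + u₁ x) + x 1 * v x, x 1 * (b + u₂ x) + x 0 ^ m * u₃ x]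

namespace CroninForm

variable {m : ℕ} {a b : ℂ} {g : Cn 2 → Cn 2} {u₁ u₂ u₃ v : Cn 2 → ℂ}

theorem analyticAt (h : CroninForm m a b g u₁ u₂ u₃ v) : AnalyticAt ℂ g 0 := by
  refine AnalyticAt.congr (analyticAt_pi_iff.mpr (Fin.forall_fin_two.mpr ⟨?_, ?_⟩))
    (EventuallyEq.symm h.eventually_eq)
  · exact (((analyticAt_apply 0 0).pow m).mul (analyticAt_const.add h.analyticAt_u₁)).add
      ((analyticAt_apply 1 0).mul h.analyticAt_v)
  · exact ((analyticAt_apply 1 0).mul (analyticAt_const.add h.analyticAt_u₂)).add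
      (((analyticAt_apply 0 0).pow m).mul h.analyticAt_u₃)

/- Eliminating `x₂ = (ψ₂ - x₁^m u₃) / (b + u₂)` from `g₁` leaves `x₁^m w + (v / (b + u₂)) ψ₂` with
`w 0 = a`, and the unit `w` has an analytic `m`-th root. -/
theorem exists_chart (h : CroninForm m a b g u₁ u₂ u₃ v) (hm : 0 < m) (ha : a ≠ 0) (hb : b ≠ 0) :
    ∃ (ψ : Cn 2 → Cn 2) (k : Cn 2 → ℂ), AnalyticAt ℂ ψ 0 ∧ ψ 0 = 0 ∧
      Function.Bijective (fderiv ℂ ψ 0) ∧ AnalyticAt ℂ k 0 ∧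
      ∀ᶠ x in 𝓝 0, g x = ![ψ x 0 ^ m + k x * ψ x 1, ψ x 1] := by
  have hβ : AnalyticAt ℂ (fun x => b + u₂ x) 0 := analyticAt_const.add h.analyticAt_u₂
  have hβ0 : b + u₂ 0 ≠ 0 := by rwa [h.u₂_zero, add_zero]
  have hk : AnalyticAt ℂ (fun x => v x / (b + u₂ x)) 0 := h.analyticAt_v.div hβ hβ0
  obtain ⟨η, hη, hη0, hηpow⟩ := exists_analyticAt_pow_eq (x := 0)
    (w := fun x => a + u₁ x - v x / (b + u₂ x) * u₃ x) hm
    ((analyticAt_const.add h.analyticAt_u₁).sub (hk.mul h.analyticAt_u₃))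
    (by simpa [h.u₁_zero, h.u₃_zero] using ha)
  have hpow : AnalyticAt ℂ (fun x : Cn 2 => x 0 ^ m) 0 := (analyticAt_apply 0 0).pow m
  have hψ : AnalyticAt ℂ (fun x => ![x 0 * η x, x 1 * (b + u₂ x) + x 0 ^ m * u₃ x]) 0 :=
    analyticAt_pi_iff.mpr (Fin.forall_fin_two.mpr ⟨(analyticAt_apply 0 0).mul hη,
      ((analyticAt_apply 1 0).mul hβ).add (hpow.mul h.analyticAt_u₃)⟩)
  refine ⟨_, _, hψ, ?_, ?_, hk, ?_⟩
  · simp [hm.ne']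
  · have hd := hasFDerivAt_pi'.mp hψ.differentiableAt.hasFDerivAt
    have hd0 := (hd 0).unique ((hasFDerivAt_apply 0 0).fun_mul hη.differentiableAt.hasFDerivAt)
    have hd1 := (hd 1).unique
      (((hasFDerivAt_apply 1 0).fun_mul hβ.differentiableAt.hasFDerivAt).fun_add
        (hpow.differentiableAt.hasFDerivAt.fun_mul
          h.analyticAt_u₃.differentiableAt.hasFDerivAt))
    refine bijective_of_forall_eq_zero fun w hw => funext (Fin.forall_fin_two.mpr ⟨?_, ?_⟩)
    · simpa [hη0, hw] using DFunLike.congr_fun hd0 w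
    · simpa [hw, h.u₂_zero, h.u₃_zero, hm.ne', hb] using DFunLike.congr_fun hd1 w
  · filter_upwards [h.eventually_eq, hβ.continuousAt.eventually_ne hβ0] with x hx hβx
    rw [hx]
    congr 1
    simp only [Matrix.cons_val_zero, Matrix.cons_val_one, mul_pow, hηpow]
    field_simp
    ring

theorem isolatedZeroAt0 (h : CroninForm m a b g u₁ u₂ u₃ v) (hm : 0 < m) (ha : a ≠ 0)
    (hb : b ≠ 0) : IsolatedZeroAt0 g := by
  obtain ⟨ψ, k, hψ, hψ0, hbij, -, hg⟩ := h.exists_chart hm ha hb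
  exact isolatedZeroAt0_of_eq_pow_add_mul hm hψ hψ0 hbij hg

theorem hasZeroOrder (h : CroninForm m a b g u₁ u₂ u₃ v) (hm : 0 < m) (ha : a ≠ 0)
    (hb : b ≠ 0) : HasZeroOrder g 0 m := by
  obtain ⟨ψ, k, hψ, hψ0, hbij, hk, hg⟩ := h.exists_chart hm ha hb
  obtain ⟨N, hN⟩ := exists_hasZeroOrder h.analyticAt (h.isolatedZeroAt0 hm ha hb)
  rwa [hN.eq_of_frequently
    (eventually_frequently_ncard_of_eq_pow_add_mul hm hψ hψ0 hbij hk hg)] at hN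

theorem add_smul (h : CroninForm m a b g u₁ u₂ u₃ v) (s : ℂ) :
    CroninForm m (a + s) (b + s) (fun x => g x + s • ![x 0 ^ m, x 1]) u₁ u₂ u₃ v where
  __ := h
  eventually_eq := by
    filter_upwards [h.eventually_eq] with x hx
    rw [hx]
    refine funext (Fin.forall_fin_two.mpr ⟨?_, ?_⟩) <;>
    · simp only [Pi.add_apply, Pi.smul_apply, smul_eq_mul, Matrix.cons_val_zero,
        Matrix.cons_val_one]
      ring

theorem le_of_hasZeroOrder (h : CroninForm m a b g u₁ u₂ u₃ v) (hm : 0 < m) {N : ℕ}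
    (hN : HasZeroOrder g 0 N) : m ≤ N := by
  have hp : AnalyticOnNhd ℂ (fun x : Cn 2 => ![x 0 ^ m, x 1]) univ := fun x _ =>
    analyticAt_pi_iff.mpr (Fin.forall_fin_two.mpr
      ⟨(analyticAt_apply 0 x).pow m, analyticAt_apply 1 x⟩)
  have hne : ∀ c : ℂ, ∀ᶠ s in 𝓝[≠] 0, c + s ≠ 0 := fun c => by
    filter_upwards [nhdsNE_le_cofinite 0 (finite_singleton (-c)).compl_mem_cofinite] with s hs hcs
    exact hs (eq_neg_of_add_eq_zero_right hcs)
  obtain ⟨s, hs, has, hbs⟩ := ((hN.eventually_le_of_add_smul hp).filter_mono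
    nhdsWithin_le_nhds |>.and ((hne a).and (hne b))).exists
  exact hs m ((h.add_smul s).hasZeroOrder hm has hbs)

end CroninForm

end CroninForm

/-- Cronin-type computation: for `g₁ = x₁^m(a + o(1)) + x₂·O(1)`,
`g₂ = x₂(b + o(1)) + x₁^m·o(1)`: if `0` is an isolated zero of `g` then
`π_g(0) ≥ m`, and if `a ≠ 0` and `b ≠ 0` then `0` is an isolated zero of `g` and
`π_g(0) = m`. -/
theorem zeroOrder_corollary_two (m : ℕ) (hm : 0 < m) (a b : ℂ) (g : Cn 2 → Cn 2)
    (u₁ u₂ u₃ v : Cn 2 → ℂ)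
    (hu₁ : AnalyticAt ℂ u₁ 0) (hu₁0 : u₁ 0 = 0)
    (hu₂ : AnalyticAt ℂ u₂ 0) (hu₂0 : u₂ 0 = 0)
    (hu₃ : AnalyticAt ℂ u₃ 0) (hu₃0 : u₃ 0 = 0)
    (hv : AnalyticAt ℂ v 0)
    (hform : ∀ᶠ x in 𝓝 (0 : Cn 2),
      g x = ![x 0 ^ m * (a + u₁ x) + x 1 * v x,
              x 1 * (b + u₂ x) + x 0 ^ m * u₃ x]) :
    (IsolatedZeroAt0 g → m ≤ zeroOrder g 0) ∧
    (a ≠ 0 → b ≠ 0 → IsolatedZeroAt0 g ∧ zeroOrder g 0 = m) := by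
  have h : CroninForm m a b g u₁ u₂ u₃ v :=
    ⟨hu₁, hu₁0, hu₂, hu₂0, hu₃, hu₃0, hv, hform⟩
  have hle : IsolatedZeroAt0 g → m ≤ zeroOrder g 0 := fun hi =>
    le_csInf (exists_hasZeroOrder h.analyticAt hi) fun _ hN => h.le_of_hasZeroOrder hm hN
  refine ⟨hle, fun ha hb => ?_⟩
  have hi : IsolatedZeroAt0 g := h.isolatedZeroAt0 hm ha hb
  exact ⟨hi, le_antisymm (Nat.sInf_le (h.hasZeroOrder hm ha hb)) (hle hi)⟩

end ZhangPaper
end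
end
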